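/- arXiv:2509.16047 — 2 statements merged into one kernel-verified Lean document; each statement's English description precedes it below -/
import Mathlib

section
/- Let n ≥ 1 and k ≥ 1 be integers, let ι(x) = x/|x|² denote the inversion on ℝⁿ \ {0}, let W ⊆ ℝⁿ \ {0} be open, and let u : W → ℝ be smooth. Then for every x ∈ ℝⁿ \ {0} with ι(x) ∈ W one has Δ^k( y ↦ |y|^{2k−n} u(y/|y|²) )(x) = |x|^{−2k−n} · (Δ^k u)(x/|x|²). In particular, if Δ^k u = 0 on W, then the Kelvin-type transform y ↦ |y|^{2k−n} u(y/|y|²) satisfies Δ^k( |y|^{2k−n} u(y/|y|²) ) = 0 on ι(W). -/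
/-- The Euclidean Laplacian `Δu = ∑ i, ∂²u/∂xᵢ²` of a function on `ℝⁿ`. -/
noncomputable def lap {n : ℕ} (f : EuclideanSpace ℝ (Fin n) → ℝ)
    (x : EuclideanSpace ℝ (Fin n)) : ℝ :=
  ∑ i, fderiv ℝ (fun y => fderiv ℝ f y (EuclideanSpace.single i 1)) x
    (EuclideanSpace.single i 1)

/-!
Let `n` be the dimension and `E f = ∑ xᵢ ∂f/∂xᵢ` the Euler operator. Since the derivative of the
inversion at `x` is `|x|⁻²` times a reflection, conjugating `Δ` by the Kelvin transforms
`K_s u = |y|^(2s-n) u(ι y)` of two consecutive orders gives a second-order operator,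
`Δ K_{s+1} = K_s Q_s` with `Q_s = |x|²Δ - 4sE + 2s(2s+2-n)`. The commutation relations
`[Δ, |x|²] = 4E + 2n` and `[Δ, E] = 2Δ` yield `Δ Q_{s+1} = Q_s Δ`, and as `Q_0 = |x|²Δ` this gives
`Δ^k Q_k = |x|² Δ^(k+1)`. Hence
`Δ^(k+1) K_{k+1} u = Δ^k K_k (Q_k u) = K_{-k} (|x|² Δ^(k+1) u) = K_{-(k+1)} (Δ^(k+1) u)`
by induction on `k`.
-/

open Filter Topology InnerProductSpace Laplacian Gradient
open Module (finrank)

section SecondDerivative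

variable {E F G H : Type*} [NormedAddCommGroup E] [NormedSpace ℝ E]
  [NormedAddCommGroup F] [NormedSpace ℝ F] [NormedAddCommGroup G] [NormedSpace ℝ G]
  [NormedAddCommGroup H] [NormedSpace ℝ H]

lemma differentiableAt_fderiv {f : E → F} {x : E} (hf : ContDiffAt ℝ 2 f x) :
    DifferentiableAt ℝ (fderiv ℝ f) x :=
  (hf.fderiv_right (m := 1) (by norm_num)).differentiableAt one_ne_zero

lemma fderiv_clm_apply_const {f : E → F →L[ℝ] G} {x : E} (hf : DifferentiableAt ℝ f x)
    (u : E) (v : F) : fderiv ℝ (fun y => f y v) x u = fderiv ℝ f x u v := by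
  simp [fderiv_clm_apply hf (differentiableAt_const v)]

lemma fderiv_fderiv_fderiv_swap_right {f : E → F} {x : E} (hf : ContDiffAt ℝ 3 f x) (u v w : E) :
    fderiv ℝ (fderiv ℝ (fderiv ℝ f)) x u v w = fderiv ℝ (fderiv ℝ (fderiv ℝ f)) x u w v := by
  have hf2 : DifferentiableAt ℝ (fderiv ℝ (fderiv ℝ f)) x :=
    differentiableAt_fderiv (hf.fderiv_right (by norm_num))
  have happly (v w : E) : fderiv ℝ (fun y => fderiv ℝ (fderiv ℝ f) y v w) x u =
      fderiv ℝ (fderiv ℝ (fderiv ℝ f)) x u v w := by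
    rw [fderiv_clm_apply_const (hf2.clm_apply (differentiableAt_const v)),
      fderiv_clm_apply_const hf2]
  have hsymm : (fun y => fderiv ℝ (fderiv ℝ f) y v w) =ᶠ[𝓝 x]
      fun y => fderiv ℝ (fderiv ℝ f) y w v := by
    filter_upwards [hf.eventually (by simp)] with y hy
    exact hy.isSymmSndFDerivAt (by norm_num) v w
  rw [← happly, hsymm.fderiv_eq, happly]

lemma fderiv_fderiv_fderiv_swap_left {f : E → F} {x : E} (hf : ContDiffAt ℝ 3 f x) (u v : E) :
    fderiv ℝ (fderiv ℝ (fderiv ℝ f)) x u v = fderiv ℝ (fderiv ℝ (fderiv ℝ f)) x v u :=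
  (hf.fderiv_right (m := 2) (by norm_num)).isSymmSndFDerivAt (by simp) u v

lemma fderiv_fderiv_of_bilinear (B : F →L[ℝ] G →L[ℝ] H) {f : E → F} {g : E → G} {x : E}
    (hf : ContDiffAt ℝ 2 f x) (hg : ContDiffAt ℝ 2 g x) (v : E) :
    fderiv ℝ (fderiv ℝ fun y => B (f y) (g y)) x v v =
      B (f x) (fderiv ℝ (fderiv ℝ g) x v v) + 2 • B (fderiv ℝ f x v) (fderiv ℝ g x v) +
        B (fderiv ℝ (fderiv ℝ f) x v v) (g x) := by
  have hdf := hf.differentiableAt two_ne_zero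
  have hdg := hg.differentiableAt two_ne_zero
  have hfirst : fderiv ℝ (fun y => B (f y) (g y)) =ᶠ[𝓝 x] fun y =>
      B.precompR E (f y) (fderiv ℝ g y) + B.precompL E (fderiv ℝ f y) (g y) := by
    filter_upwards [hf.eventually (by simp), hg.eventually (by simp)] with y hfy hgy
    exact B.fderiv_of_bilinear (hfy.differentiableAt two_ne_zero) (hgy.differentiableAt two_ne_zero)
  have hsecond :=
    ((B.precompR E).hasFDerivAt_of_bilinear hdf.hasFDerivAt
      (differentiableAt_fderiv hg).hasFDerivAt).fun_add
    ((B.precompL E).hasFDerivAt_of_bilinear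
      (differentiableAt_fderiv hf).hasFDerivAt hdg.hasFDerivAt)
  rw [hfirst.fderiv_eq, hsecond.fderiv]
  simp only [add_apply, ContinuousLinearMap.precompR_apply,
    ContinuousLinearMap.precompL_apply, ContinuousLinearMap.compL_apply,
    ContinuousLinearMap.comp_apply]
  module

lemma fderiv_fderiv_comp {f : F → G} {g : E → F} {x : E} (hf : ContDiffAt ℝ 2 f (g x))
    (hg : ContDiffAt ℝ 2 g x) (u v : E) :
    fderiv ℝ (fderiv ℝ (f ∘ g)) x u v =
      fderiv ℝ (fderiv ℝ f) (g x) (fderiv ℝ g x u) (fderiv ℝ g x v) +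
        fderiv ℝ f (g x) (fderiv ℝ (fderiv ℝ g) x u v) := by
  have hfirst : fderiv ℝ (f ∘ g) =ᶠ[𝓝 x] fun y => (fderiv ℝ f (g y)).comp (fderiv ℝ g y) := by
    filter_upwards [hg.continuousAt.eventually (hf.eventually (by simp)),
      hg.eventually (by simp)] with y hfy hgy
    exact fderiv_comp y (hfy.differentiableAt two_ne_zero) (hgy.differentiableAt two_ne_zero)
  have hsecond := ((differentiableAt_fderiv hf).hasFDerivAt.comp x
    (hg.differentiableAt two_ne_zero).hasFDerivAt).clm_comp (differentiableAt_fderiv hg).hasFDerivAt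
  simp only [Function.comp_apply] at hsecond
  rw [hfirst.fderiv_eq, hsecond.fderiv]
  simp [add_comm]

end SecondDerivative

section Laplacian

variable {E F G H : Type*}
  [NormedAddCommGroup E] [InnerProductSpace ℝ E] [FiniteDimensional ℝ E]
  [NormedAddCommGroup F] [NormedSpace ℝ F] [NormedAddCommGroup G] [NormedSpace ℝ G]
  [NormedAddCommGroup H] [NormedSpace ℝ H]

lemma laplacian_eq_sum_fderiv_fderiv {ι : Type*} [Fintype ι] (b : OrthonormalBasis ι ℝ E)
    (f : E → F) : Δ f = fun x => ∑ i, fderiv ℝ (fderiv ℝ f) x (b i) (b i) := by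
  simp [laplacian_eq_iteratedFDeriv_orthonormalBasis f b, iteratedFDeriv_two_apply]

lemma contDiffAt_laplacian {f : E → F} {x : E} {m n : WithTop ℕ∞} (hf : ContDiffAt ℝ n f x)
    (hmn : m + 2 ≤ n) : ContDiffAt ℝ m (Δ f) x := by
  rw [laplacian_eq_sum_fderiv_fderiv (stdOrthonormalBasis ℝ E)]
  have hmn' : m + 1 + 1 ≤ n := by rwa [add_assoc, one_add_one_eq_two]
  exact ContDiffAt.sum fun i _ =>
    (((hf.fderiv_right hmn').fderiv_right le_rfl).clm_apply contDiffAt_const).clm_apply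
      contDiffAt_const

lemma contDiffAt_iterate_laplacian {f : E → F} {x : E} {m k : ℕ}
    (hf : ContDiffAt ℝ (m + 2 * k : ℕ) f x) : ContDiffAt ℝ m (Δ^[k] f) x := by
  induction k generalizing f with
  | zero => exact hf
  | succ _ ih => exact ih (contDiffAt_laplacian hf (by norm_cast))

lemma iterate_laplacian_congr_nhds {f g : E → F} {x : E} (h : f =ᶠ[𝓝 x] g) (k : ℕ) :
    Δ^[k] f =ᶠ[𝓝 x] Δ^[k] g := by
  induction k generalizing f g with
  | zero => exact h
  | succ _ ih => exact ih (laplacian_congr_nhds h)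

lemma laplacian_id : Δ (fun y : E => y) = 0 := by
  ext x
  have h : fderiv ℝ (fun y : E => y) = fun _ => .id ℝ E := funext fun _ => fderiv_fun_id
  simp [laplacian_eq_sum_fderiv_fderiv (stdOrthonormalBasis ℝ E), h]

lemma laplacian_of_bilinear {ι : Type*} [Fintype ι] (b : OrthonormalBasis ι ℝ E)
    (B : F →L[ℝ] G →L[ℝ] H) {f : E → F} {g : E → G} {x : E}
    (hf : ContDiffAt ℝ 2 f x) (hg : ContDiffAt ℝ 2 g x) :
    Δ (fun y => B (f y) (g y)) x =
      B (f x) (Δ g x) + 2 • ∑ i, B (fderiv ℝ f x (b i)) (fderiv ℝ g x (b i)) +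
        B (Δ f x) (g x) := by
  simp [laplacian_eq_sum_fderiv_fderiv b, fderiv_fderiv_of_bilinear B hf hg,
    Finset.sum_add_distrib, Finset.smul_sum]

lemma laplacian_fun_smul {f : E → ℝ} {g : E → F} {x : E}
    (hf : ContDiffAt ℝ 2 f x) (hg : ContDiffAt ℝ 2 g x) :
    Δ (fun y => f y • g y) x =
      f x • Δ g x + 2 • fderiv ℝ g x (∇ f x) + Δ f x • g x := by
  have h := laplacian_of_bilinear (stdOrthonormalBasis ℝ E) (.lsmul ℝ ℝ) hf hg
  simp only [ContinuousLinearMap.lsmul_apply] at h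
  rw [h, ← (stdOrthonormalBasis ℝ E).sum_repr' (∇ f x), map_sum]
  simp [inner_gradient_right]

lemma laplacian_fderiv {f : E → F} {x : E} (hf : ContDiffAt ℝ 3 f x) :
    Δ (fderiv ℝ f) x = fderiv ℝ (Δ f) x := by
  have hf2 : DifferentiableAt ℝ (fderiv ℝ (fderiv ℝ f)) x :=
    differentiableAt_fderiv (hf.fderiv_right (by norm_num))
  ext v
  simp only [laplacian_eq_sum_fderiv_fderiv (stdOrthonormalBasis ℝ E)]
  rw [fderiv_fun_sum fun i _ => by fun_prop]
  simp only [sum_apply]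
  refine Finset.sum_congr rfl fun i _ => ?_
  rw [fderiv_clm_apply_const (hf2.clm_apply (differentiableAt_const _)),
    fderiv_clm_apply_const hf2, fderiv_fderiv_fderiv_swap_right hf,
    fderiv_fderiv_fderiv_swap_left hf]

lemma laplacian_comp_of_conformal {E' : Type*} [NormedAddCommGroup E'] [InnerProductSpace ℝ E']
    [FiniteDimensional ℝ E'] {f : E' → F} {g : E → E'} {x : E} {c : ℝ} {L : E ≃ₗᵢ[ℝ] E'}
    (hf : ContDiffAt ℝ 2 f (g x)) (hg : ContDiffAt ℝ 2 g x)
    (hconf : ∀ v, fderiv ℝ g x v = c • L v) :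
    Δ (f ∘ g) x = c ^ 2 • Δ f (g x) + fderiv ℝ f (g x) (Δ g x) := by
  set b := stdOrthonormalBasis ℝ E
  simp only [laplacian_eq_sum_fderiv_fderiv b, laplacian_eq_sum_fderiv_fderiv (b.map L),
    fderiv_fderiv_comp hf hg, Finset.sum_add_distrib, map_sum, hconf]
  simp [Finset.smul_sum, smul_smul, sq]

end Laplacian

section Coordinates

variable {n : ℕ} {f g : EuclideanSpace ℝ (Fin n) → ℝ} {x : EuclideanSpace ℝ (Fin n)}

lemma lap_congr_nhds (h : f =ᶠ[𝓝 x] g) : lap f x = lap g x := by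
  have hfd (v) : (fun y => fderiv ℝ f y v) =ᶠ[𝓝 x] fun y => fderiv ℝ g y v :=
    h.fderiv.fun_comp (· v)
  simp only [lap, (hfd _).fderiv_eq]

lemma lap_eq_laplacian (hf : ContDiffAt ℝ 2 f x) : lap f x = Δ f x := by
  simp [lap, laplacian_eq_sum_fderiv_fderiv (EuclideanSpace.basisFun (Fin n) ℝ),
    fderiv_clm_apply_const (differentiableAt_fderiv hf)]

lemma iterate_lap_eq_iterate_laplacian {k : ℕ} (hf : ContDiffAt ℝ (2 * k : ℕ) f x) :
    lap^[k] f x = Δ^[k] f x := by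
  induction k generalizing x with
  | zero => rfl
  | succ k ih =>
    have heq : lap^[k] f =ᶠ[𝓝 x] Δ^[k] f := by
      filter_upwards [hf.eventually (ENat.natCast_ne_coe_top _)] with y hy
      exact ih (hy.of_le (by norm_cast; omega))
    have hf' : ContDiffAt ℝ (2 + 2 * k : ℕ) f x := hf.of_le (by norm_cast; omega)
    rw [Function.iterate_succ_apply', Function.iterate_succ_apply', lap_congr_nhds heq,
      lap_eq_laplacian (contDiffAt_iterate_laplacian hf')]

end Coordinates

section Euler

variable {E F : Type*} [NormedAddCommGroup E] [NormedSpace ℝ E]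
  [NormedAddCommGroup F] [NormedSpace ℝ F]

/-- The Euler (radial) operator `f ↦ ∑ i, xᵢ ∂f/∂xᵢ`, in coordinate-free form. -/
noncomputable def eulerOp (f : E → F) (x : E) : F := fderiv ℝ f x x

lemma contDiffAt_eulerOp {f : E → F} {x : E} {m n : WithTop ℕ∞} (hf : ContDiffAt ℝ n f x)
    (hmn : m + 1 ≤ n) : ContDiffAt ℝ m (eulerOp f) x :=
  (hf.fderiv_right hmn).clm_apply contDiffAt_id

end Euler

section Norm

variable {E : Type*} [NormedAddCommGroup E] [InnerProductSpace ℝ E]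

lemma contDiffAt_norm_rpow {x : E} (hx : x ≠ 0) (a : ℝ) {n : WithTop ℕ∞} :
    ContDiffAt ℝ n (fun y : E => ‖y‖ ^ a) x :=
  (contDiffAt_norm ℝ hx).rpow_const_of_ne (norm_ne_zero_iff.2 hx)

lemma hasFDerivAt_norm_rpow_of_ne_zero {x : E} (hx : x ≠ 0) (a : ℝ) :
    HasFDerivAt (fun y : E => ‖y‖ ^ a) ((a * ‖x‖ ^ (a - 2)) • innerSL ℝ x) x := by
  have h0 : 0 < ‖x‖ := norm_pos_iff.2 hx
  have h := (hasStrictFDerivAt_norm_sq x).hasFDerivAt.rpow_const (p := a / 2)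
    (.inl (pow_ne_zero 2 h0.ne'))
  have hpow (y : E) (p : ℝ) : (‖y‖ ^ 2) ^ (p / 2) = ‖y‖ ^ p := by
    rw [← Real.rpow_natCast_mul (norm_nonneg y)]
    congr 1
    push_cast
    ring
  simp only [hpow, show a / 2 - 1 = (a - 2) / 2 by ring] at h
  convert! h using 1
  ext v
  simp only [smul_apply, coe_innerSL_apply, smul_eq_mul, nsmul_eq_mul, Nat.cast_ofNat]
  ring

variable [CompleteSpace E]

lemma gradient_norm_rpow {x : E} (hx : x ≠ 0) (a : ℝ) :
    ∇ (fun y : E => ‖y‖ ^ a) x = (a * ‖x‖ ^ (a - 2)) • x := by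
  refine HasGradientAt.gradient (hasGradientAt_iff_hasFDerivAt.2 ?_)
  convert! hasFDerivAt_norm_rpow_of_ne_zero hx a using 1
  ext v
  simp

lemma gradient_norm_sq (x : E) : ∇ (fun y : E => ‖y‖ ^ 2) x = (2 : ℝ) • x := by
  refine HasGradientAt.gradient (hasGradientAt_iff_hasFDerivAt.2 ?_)
  convert! (hasStrictFDerivAt_norm_sq x).hasFDerivAt using 1
  ext v
  simp

end Norm

section NormLaplacian

variable {E F : Type*} [NormedAddCommGroup E] [InnerProductSpace ℝ E] [FiniteDimensional ℝ E]
  [NormedAddCommGroup F] [NormedSpace ℝ F]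

lemma laplacian_norm_rpow {x : E} (hx : x ≠ 0) (a : ℝ) :
    Δ (fun y : E => ‖y‖ ^ a) x = a * (a + finrank ℝ E - 2) * ‖x‖ ^ (a - 2) := by
  set b := stdOrthonormalBasis ℝ E
  have hfirst : fderiv ℝ (fun y : E => ‖y‖ ^ a) =ᶠ[𝓝 x]
      fun y => (a * ‖y‖ ^ (a - 2)) • innerSL ℝ y := by
    filter_upwards [isOpen_ne.mem_nhds hx] with y hy
    exact (hasFDerivAt_norm_rpow_of_ne_zero hy a).fderiv
  have hsecond := ((hasFDerivAt_norm_rpow_of_ne_zero hx (a - 2)).const_mul a).fun_smul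
    (innerSL ℝ).hasFDerivAt
  have hterm (i : Fin (finrank ℝ E)) :
      fderiv ℝ (fderiv ℝ fun y : E => ‖y‖ ^ a) x (b i) (b i) =
        a * ‖x‖ ^ (a - 2) + a * (a - 2) * ‖x‖ ^ (a - 2 - 2) * inner ℝ x (b i) ^ 2 := by
    rw [hfirst.fderiv_eq, hsecond.fderiv]
    simp only [add_apply, smul_apply, ContinuousLinearMap.smulRight_apply, innerSL_apply_apply ℝ,
      smul_eq_mul, real_inner_self_eq_norm_sq, b.norm_eq_one]
    ring
  have hpow : ‖x‖ ^ (a - 2 - 2) * ‖x‖ ^ 2 = ‖x‖ ^ (a - 2) := by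
    rw [← Real.rpow_natCast, ← Real.rpow_add (norm_pos_iff.2 hx)]
    simp
  simp only [laplacian_eq_sum_fderiv_fderiv b, hterm, Finset.sum_add_distrib, ← Finset.mul_sum,
    b.sum_sq_inner_left, Finset.sum_const, Finset.card_univ, Fintype.card_fin, nsmul_eq_mul]
  linear_combination a * (a - 2) * hpow

lemma laplacian_norm_rpow_smul {f : E → F} {x : E} (hx : x ≠ 0) (hf : ContDiffAt ℝ 2 f x)
    (a : ℝ) :
    Δ (fun y => ‖y‖ ^ a • f y) x = ‖x‖ ^ a • Δ f x +
      ‖x‖ ^ (a - 2) • ((2 * a) • eulerOp f x + (a * (a + finrank ℝ E - 2)) • f x) := by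
  rw [laplacian_fun_smul (contDiffAt_norm_rpow hx a) hf, gradient_norm_rpow hx,
    laplacian_norm_rpow hx, map_smul, eulerOp]
  module

lemma laplacian_norm_sq (x : E) : Δ (fun y : E => ‖y‖ ^ 2) x = 2 * finrank ℝ E := by
  have h := laplacian_of_bilinear (stdOrthonormalBasis ℝ E) (innerSL ℝ)
    (contDiffAt_fun_id (x := x)) contDiffAt_fun_id
  rw [laplacian_id] at h
  simpa [innerSL_apply_apply ℝ] using h

lemma laplacian_norm_sq_smul {f : E → F} {x : E} (hf : ContDiffAt ℝ 2 f x) :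
    Δ (fun y => ‖y‖ ^ 2 • f y) x =
      ‖x‖ ^ 2 • Δ f x + (4 : ℝ) • eulerOp f x + (2 * finrank ℝ E : ℝ) • f x := by
  rw [laplacian_fun_smul (contDiff_norm_sq ℝ).contDiffAt hf, gradient_norm_sq, laplacian_norm_sq,
    map_smul, eulerOp]
  module

lemma laplacian_eulerOp {f : E → F} {x : E} (hf : ContDiffAt ℝ 3 f x) :
    Δ (eulerOp f) x = eulerOp (Δ f) x + (2 : ℝ) • Δ f x := by
  have h := laplacian_of_bilinear (stdOrthonormalBasis ℝ E) (.id ℝ (E →L[ℝ] F))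
    (hf.fderiv_right (m := 2) (by norm_num)) contDiffAt_fun_id
  simp only [ContinuousLinearMap.id_apply, fderiv_fun_id] at h
  rw [laplacian_id, laplacian_fderiv hf] at h
  simp only [Pi.zero_apply, map_zero, zero_add,
    ← congrFun (laplacian_eq_sum_fderiv_fderiv (stdOrthonormalBasis ℝ E) f)] at h
  rw [add_comm, ofNat_smul_eq_nsmul]
  exact h

end NormLaplacian

section Inversion

open EuclideanGeometry

variable {E F : Type*} [NormedAddCommGroup E] [InnerProductSpace ℝ E]
  [NormedAddCommGroup F] [NormedSpace ℝ F]

lemma inversion_zero_one (x : E) : inversion (0 : E) 1 x = (‖x‖ ^ 2)⁻¹ • x := by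
  simp [inversion]

lemma norm_inversion_zero_one_sq (x : E) : ‖inversion (0 : E) 1 x‖ ^ 2 = (‖x‖ ^ 2)⁻¹ := by
  rw [inversion_zero_one, norm_smul, norm_inv, norm_pow, norm_norm, mul_pow]
  rcases eq_or_ne ‖x‖ 0 with h | h
  · simp [h]
  · field_simp

lemma fderiv_inversion_zero_one {x : E} (hx : x ≠ 0) (v : E) :
    fderiv ℝ (inversion (0 : E) 1) x v = (‖x‖ ^ 2)⁻¹ • (ℝ ∙ x)ᗮ.reflection v := by
  rw [(hasFDerivAt_inversion hx).fderiv]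
  simp

lemma fderiv_inversion_zero_one_self {x : E} (hx : x ≠ 0) :
    fderiv ℝ (inversion (0 : E) 1) x x = -inversion 0 1 x := by
  rw [fderiv_inversion_zero_one hx, Submodule.reflection_orthogonalComplement_singleton_eq_neg,
    inversion_zero_one, smul_neg]

lemma contDiffAt_inversion_zero_one {x : E} (hx : x ≠ 0) {n : ℕ∞} :
    ContDiffAt ℝ n (inversion (0 : E) 1) x :=
  contDiffAt_const.inversion contDiffAt_const contDiffAt_id hx

lemma eulerOp_comp_inversion {u : E → F} {x : E} (hx : x ≠ 0)
    (hu : DifferentiableAt ℝ u (inversion 0 1 x)) :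
    eulerOp (u ∘ inversion 0 1) x = -eulerOp u (inversion 0 1 x) := by
  rw [eulerOp, fderiv_comp x hu (hasFDerivAt_inversion hx).differentiableAt,
    ContinuousLinearMap.comp_apply, fderiv_inversion_zero_one_self hx, map_neg, eulerOp]

variable [FiniteDimensional ℝ E]

lemma laplacian_inversion_zero_one {x : E} (hx : x ≠ 0) :
    Δ (inversion (0 : E) 1) x =
      ((4 - 2 * finrank ℝ E) * (‖x‖ ^ 2)⁻¹) • inversion 0 1 x := by
  have hinv : inversion (0 : E) 1 = fun y => ‖y‖ ^ (-2 : ℝ) • y := by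
    ext1 y
    rw [inversion_zero_one, Real.rpow_neg (norm_nonneg y), Real.rpow_two]
  have hpow : ‖x‖ ^ (-2 - 2 : ℝ) = (‖x‖ ^ 2)⁻¹ * (‖x‖ ^ 2)⁻¹ := by
    rw [Real.rpow_sub (norm_pos_iff.2 hx), Real.rpow_neg (norm_nonneg x), Real.rpow_two,
      div_eq_mul_inv]
  rw [hinv, laplacian_fun_smul (contDiffAt_norm_rpow hx _) contDiffAt_fun_id, laplacian_id,
    gradient_norm_rpow hx, laplacian_norm_rpow hx, fderiv_fun_id, hpow]
  simp only [Pi.zero_apply, ContinuousLinearMap.id_apply, Real.rpow_neg (norm_nonneg x),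
    Real.rpow_two]
  module

lemma laplacian_comp_inversion {u : E → F} {x : E} (hx : x ≠ 0)
    (hu : ContDiffAt ℝ 2 u (inversion 0 1 x)) :
    Δ (u ∘ inversion 0 1) x = (‖x‖ ^ 2)⁻¹ ^ 2 • Δ u (inversion 0 1 x) +
      ((4 - 2 * finrank ℝ E) * (‖x‖ ^ 2)⁻¹) • eulerOp u (inversion 0 1 x) := by
  rw [laplacian_comp_of_conformal hu (contDiffAt_inversion_zero_one hx)
    (fderiv_inversion_zero_one hx), laplacian_inversion_zero_one hx, map_smul, eulerOp]

end Inversion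

section Kelvin

open EuclideanGeometry

variable {E F : Type*} [NormedAddCommGroup E] [InnerProductSpace ℝ E]
  [NormedAddCommGroup F] [NormedSpace ℝ F]

/-- The Kelvin transform of order `s`, `u ↦ |y|^(2s-n) u(y/|y|²)` with `n` the dimension of `E`;
`s = 1` is the classical one. The order is real, so that the transform of order `-k` is the one
to which `Δ^k` intertwines that of order `k`. -/
noncomputable def kelvinTransform (s : ℝ) (u : E → F) (y : E) : F :=
  ‖y‖ ^ (2 * s - finrank ℝ E) • u (inversion 0 1 y)

lemma contDiffAt_kelvinTransform {u : E → F} {x : E} {n : ℕ∞} (hx : x ≠ 0)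
    (hu : ContDiffAt ℝ n u (inversion 0 1 x)) (s : ℝ) :
    ContDiffAt ℝ n (kelvinTransform s u) x :=
  (contDiffAt_norm_rpow hx _).smul (hu.comp x (contDiffAt_inversion_zero_one hx))

variable [FiniteDimensional ℝ E]

/-- The second-order operator `|x|²Δ - 4s ∑ i, xᵢ ∂/∂xᵢ + 2s(2s+2-n)`, with `n` the dimension of
`E`: the Laplacian conjugated by the Kelvin transforms of orders `s` and `s + 1`, see
`laplacian_kelvinTransform`. -/
noncomputable def kelvinLaplacian (s : ℝ) (f : E → F) : E → F :=
  (fun x => ‖x‖ ^ 2 • Δ f x) - (4 * s) • eulerOp f + (2 * s * (2 * s + 2 - finrank ℝ E)) • f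

lemma contDiffAt_kelvinLaplacian {f : E → F} {x : E} {m n : WithTop ℕ∞}
    (hf : ContDiffAt ℝ n f x) (hmn : m + 2 ≤ n) (s : ℝ) :
    ContDiffAt ℝ m (kelvinLaplacian s f) x :=
  have hmn1 : m + 1 ≤ n := le_trans (by gcongr; norm_num) hmn
  (((contDiff_norm_sq ℝ).contDiffAt.smul (contDiffAt_laplacian hf hmn)).sub
    ((contDiffAt_eulerOp hf hmn1).const_smul _)).add
    ((hf.of_le (le_self_add.trans hmn)).const_smul _)

lemma laplacian_kelvinTransform {u : E → F} {x : E} (hx : x ≠ 0)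
    (hu : ContDiffAt ℝ 2 u (inversion 0 1 x)) (s : ℝ) :
    Δ (kelvinTransform (s + 1) u) x = kelvinTransform s (kelvinLaplacian s u) x := by
  have hpos : 0 < ‖x‖ := norm_pos_iff.2 hx
  have hpow : ‖x‖ ^ (2 * (s + 1) - finrank ℝ E) = ‖x‖ ^ (2 * s - finrank ℝ E) * ‖x‖ ^ 2 := by
    rw [← Real.rpow_natCast, ← Real.rpow_add hpos]
    congr 1
    push_cast
    ring
  have h := laplacian_norm_rpow_smul hx (hu.comp x (contDiffAt_inversion_zero_one hx))
    (2 * (s + 1) - finrank ℝ E)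
  rw [laplacian_comp_inversion hx hu,
    eulerOp_comp_inversion hx (hu.differentiableAt two_ne_zero), hpow] at h
  refine h.trans ?_
  simp only [kelvinTransform, kelvinLaplacian, Pi.add_apply, Pi.sub_apply, Pi.smul_apply,
    norm_inversion_zero_one_sq, Function.comp_apply]
  rw [show 2 * (s + 1) - (finrank ℝ E : ℝ) - 2 = 2 * s - finrank ℝ E by ring]
  match_scalars <;> field_simp <;> ring

lemma laplacian_kelvinLaplacian {f : E → F} {x : E} (hf : ContDiffAt ℝ 4 f x) (s : ℝ) :
    Δ (kelvinLaplacian (s + 1) f) x = kelvinLaplacian s (Δ f) x := by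
  have hΔ : ContDiffAt ℝ 2 (Δ f) x := contDiffAt_laplacian hf (by norm_num)
  have hE : ContDiffAt ℝ 2 (eulerOp f) x := contDiffAt_eulerOp hf (by norm_num)
  have hf2 : ContDiffAt ℝ 2 f x := hf.of_le (by norm_num)
  have hf3 : ContDiffAt ℝ 3 f x := hf.of_le (by norm_num)
  have hsq : ContDiffAt ℝ 2 (fun y => ‖y‖ ^ 2 • Δ f y) x :=
    (contDiff_norm_sq ℝ).contDiffAt.fun_smul hΔ
  have hcE : ContDiffAt ℝ 2 ((4 * (s + 1)) • eulerOp f) x := hE.const_smul _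
  have hsub : ContDiffAt ℝ 2 ((fun y => ‖y‖ ^ 2 • Δ f y) - (4 * (s + 1)) • eulerOp f) x :=
    hsq.sub hcE
  have hcf : ContDiffAt ℝ 2 ((2 * (s + 1) * (2 * (s + 1) + 2 - finrank ℝ E : ℝ)) • f) x :=
    hf2.const_smul _
  rw [kelvinLaplacian, hsub.laplacian_add hcf, hsq.laplacian_sub hcE, laplacian_smul _ hE,
    laplacian_smul _ hf2, laplacian_norm_sq_smul hΔ, laplacian_eulerOp hf3]
  simp only [kelvinLaplacian, Pi.add_apply, Pi.sub_apply, Pi.smul_apply]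
  module

lemma iterate_laplacian_kelvinLaplacian {f : E → F} {x : E} {k : ℕ}
    (hf : ContDiffAt ℝ (2 * (k + 1) : ℕ) f x) :
    Δ^[k] (kelvinLaplacian k f) x = ‖x‖ ^ 2 • Δ^[k + 1] f x := by
  induction k generalizing f with
  | zero => simp [kelvinLaplacian]
  | succ k ih =>
    have hstep : Δ (kelvinLaplacian (k + 1 : ℕ) f) =ᶠ[𝓝 x] kelvinLaplacian k (Δ f) := by
      filter_upwards [hf.eventually (ENat.natCast_ne_coe_top _)] with y hy
      rw [Nat.cast_succ, laplacian_kelvinLaplacian (hy.of_le (by norm_cast; omega))]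
    rw [Function.iterate_succ_apply, (iterate_laplacian_congr_nhds hstep k).eq_of_nhds,
      ih (contDiffAt_laplacian hf (by norm_cast)), ← Function.iterate_succ_apply]

theorem kelvin_transform_laplacian_pow_general {u : E → F} {x : E} {k : ℕ} (hx : x ≠ 0)
    (hu : ContDiffAt ℝ (2 * k : ℕ) u (inversion 0 1 x)) :
    Δ^[k] (kelvinTransform k u) x = kelvinTransform (-k) (Δ^[k] u) x := by
  induction k generalizing u with
  | zero => simp [kelvinTransform]
  | succ k ih =>
    have hstep : Δ (kelvinTransform (k + 1 : ℕ) u) =ᶠ[𝓝 x]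
        kelvinTransform k (kelvinLaplacian k u) := by
      filter_upwards [isOpen_ne.mem_nhds hx,
        (hasFDerivAt_inversion hx).continuousAt.eventually
          (hu.eventually (ENat.natCast_ne_coe_top _))] with y hy huy
      rw [Nat.cast_succ, laplacian_kelvinTransform hy (huy.of_le (by norm_cast; omega))]
    rw [Function.iterate_succ_apply, (iterate_laplacian_congr_nhds hstep k).eq_of_nhds,
      ih (contDiffAt_kelvinLaplacian hu (by norm_cast) k)]
    simp only [kelvinTransform]
    rw [iterate_laplacian_kelvinLaplacian hu, norm_inversion_zero_one_sq, smul_smul]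
    congr 1
    rw [← Real.rpow_natCast, ← Real.rpow_neg (norm_nonneg x), ← Real.rpow_add (norm_pos_iff.2 hx)]
    congr 1
    push_cast
    ring

end Kelvin

lemma iterate_lap_norm_rpow_mul_comp_inversion {n k : ℕ} {u : EuclideanSpace ℝ (Fin n) → ℝ}
    {x : EuclideanSpace ℝ (Fin n)} (hx : x ≠ 0)
    (hu : ContDiffAt ℝ (2 * k : ℕ) u ((‖x‖ ^ 2)⁻¹ • x)) :
    lap^[k] (fun y => ‖y‖ ^ ((2 * k : ℝ) - n) * u ((‖y‖ ^ 2)⁻¹ • y)) x =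
      ‖x‖ ^ (-(2 * k : ℝ) - n) * lap^[k] u ((‖x‖ ^ 2)⁻¹ • x) := by
  have hkelvin : (fun y => ‖y‖ ^ ((2 * k : ℝ) - n) * u ((‖y‖ ^ 2)⁻¹ • y)) =
      kelvinTransform k u := by
    ext y
    simp [kelvinTransform, inversion_zero_one]
  rw [← inversion_zero_one] at hu ⊢
  rw [hkelvin, iterate_lap_eq_iterate_laplacian (contDiffAt_kelvinTransform hx hu k),
    kelvin_transform_laplacian_pow_general hx hu, iterate_lap_eq_iterate_laplacian hu]
  simp [kelvinTransform]

/-- Conformal covariance of `Δᵏ` under the inversion `ι(x) = x/|x|²`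
(Kelvin-type transform): `Δᵏ(|y|^{2k-n} u(y/|y|²))(x) = |x|^{-2k-n} (Δᵏu)(x/|x|²)`;
in particular the Kelvin-type transform of a `Δᵏ`-harmonic function is
`Δᵏ`-harmonic. -/
theorem kelvin_transform_laplacian_pow
    (n k : ℕ) (hn : 1 ≤ n) (hk : 1 ≤ k)
    (W : Set (EuclideanSpace ℝ (Fin n))) (hW : IsOpen W)
    (hW0 : (0 : EuclideanSpace ℝ (Fin n)) ∉ W)
    (u : EuclideanSpace ℝ (Fin n) → ℝ) (hu : ContDiffOn ℝ (⊤ : ℕ∞) u W) :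
    (∀ x : EuclideanSpace ℝ (Fin n), x ≠ 0 → (‖x‖ ^ 2)⁻¹ • x ∈ W →
      lap^[k] (fun y => ‖y‖ ^ ((2 * k : ℝ) - n) * u ((‖y‖ ^ 2)⁻¹ • y)) x
        = ‖x‖ ^ (-(2 * k : ℝ) - n) * lap^[k] u ((‖x‖ ^ 2)⁻¹ • x))
    ∧ ((∀ y ∈ W, lap^[k] u y = 0) →
      ∀ x : EuclideanSpace ℝ (Fin n), x ≠ 0 → (‖x‖ ^ 2)⁻¹ • x ∈ W →
        lap^[k] (fun y => ‖y‖ ^ ((2 * k : ℝ) - n) * u ((‖y‖ ^ 2)⁻¹ • y)) x = 0) := by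
  have hcov (x : EuclideanSpace ℝ (Fin n)) (hx : x ≠ 0) (hxW : (‖x‖ ^ 2)⁻¹ • x ∈ W) :=
    iterate_lap_norm_rpow_mul_comp_inversion (k := k) hx
      (contDiffAt_infty.1 (hu.contDiffAt (hW.mem_nhds hxW)) _)
  exact ⟨hcov, fun h x hx hxW => by rw [hcov x hx hxW, h _ hxW, mul_zero]⟩
end

section
/- Let k, n be integers with 1 ≤ k and n > 2k. Set S_{n,k} = [ ∏_{ℓ=1}^{k} ((n+2ℓ−2)(n−2ℓ)/4) ] · ( 2π^{(n+1)/2} / Γ((n+1)/2) )^{2k/n}. Then for every smooth compactly supported function u : ℝⁿ → ℝ, ∫_{ℝⁿ} u(x) · ((−Δ)^k u)(x) dx ≥ S_{n,k} · ( ∫_{ℝⁿ} |u(x)|^{2n/(n−2k)} dx )^{(n−2k)/n}. -/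
/-! Under stereographic projection `(-Δ)ᵏ` becomes the GJMS operator `P_{2k}` of the sphere, whose
lowest eigenvalue `Λ` is attained at the constants, and the claim says that constants minimize its
energy under a constraint on the `L^Q` norm, `Q = 2n / (n - 2k)`. Compactness fails at `Q`, but it
suffices to consider, for `q < Q`, the infimum `a` of the energy under a constraint on the `L^q`
norm, and minimizing sequences `V` for it.

Conformal maps preserve the energy but not the `L^q` norm, which forces the first moments
`∫ ξ |V|^q` of the linear coordinates `ξ` to tend to `0`. The functions `ξ V` are then admissible
directions for the second variation, and since `∑ ξ² = 1`, summing over `ξ` gives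
`⟨V, P_{2k-2} (-Δ) V⟩ ≤ a (Q - q) / (Q - 2)` in the limit. By a Poincaré inequality, `V` is nearly
constant when `q` is close to `Q`; comparing it with the function `1` by the first variation yields
`Λ vol(Sⁿ) ≤ a vol(Sⁿ)^(2 / q)` up to an error that vanishes as `q → Q`. -/

open scoped Real

namespace SharpSobolev

open MeasureTheory Filter Topology
open scoped ContDiff NNReal ENNReal

/-- The Euclidean space `ℝⁿ`. -/
abbrev Euc (n : ℕ) := EuclideanSpace ℝ (Fin n)

/-- The algebra `C^∞(ℝⁿ)`; differential operators become linear maps of it. -/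
def smoothSubalgebra (n : ℕ) : Subalgebra ℝ (Euc n → ℝ) where
  carrier := {f | ContDiff ℝ ∞ f}
  mul_mem' := fun {_ _} (hf : ContDiff ℝ ∞ _) (hg : ContDiff ℝ ∞ _) => hf.mul hg
  add_mem' := fun {_ _} (hf : ContDiff ℝ ∞ _) (hg : ContDiff ℝ ∞ _) => hf.add hg
  algebraMap_mem' := fun r => show ContDiff ℝ ∞ (fun _ : Euc n => r) from contDiff_const

/-- Smooth real functions on `ℝⁿ`. -/
abbrev SmoothFn (n : ℕ) : Type := smoothSubalgebra n

variable {n : ℕ}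

/-! ### Calculus in the algebra of smooth functions -/

namespace SmoothFn

noncomputable instance : CoeFun (SmoothFn n) (fun _ => Euc n → ℝ) := ⟨fun f => f.1⟩

lemma contDiff (f : SmoothFn n) : ContDiff ℝ ∞ f := f.2

lemma differentiable (f : SmoothFn n) : Differentiable ℝ f := f.contDiff.differentiable (by simp)

@[fun_prop]
lemma continuous (f : SmoothFn n) : Continuous f := f.contDiff.continuous

@[ext] lemma ext {f g : SmoothFn n} (h : ∀ x, f x = g x) : f = g := Subtype.ext (funext h)

@[simp] lemma add_apply (f g : SmoothFn n) (x : Euc n) : (f + g) x = f x + g x := rfl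
@[simp] lemma sub_apply (f g : SmoothFn n) (x : Euc n) : (f - g) x = f x - g x := rfl
@[simp] lemma neg_apply (f : SmoothFn n) (x : Euc n) : (-f) x = -f x := rfl
@[simp] lemma mul_apply (f g : SmoothFn n) (x : Euc n) : (f * g) x = f x * g x := rfl
@[simp] lemma one_apply (x : Euc n) : (1 : SmoothFn n) x = 1 := rfl
@[simp] lemma smul_apply (c : ℝ) (f : SmoothFn n) (x : Euc n) : (c • f) x = c * f x := rfl
@[simp] lemma pow_apply (f : SmoothFn n) (k : ℕ) (x : Euc n) : (f ^ k) x = f x ^ k := rfl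
@[simp] lemma sum_apply {ι : Type*} (s : Finset ι) (f : ι → SmoothFn n) (x : Euc n) :
    (∑ i ∈ s, f i) x = ∑ i ∈ s, f i x := by
  rw [AddSubmonoidClass.coe_finsetSum, Finset.sum_apply]

end SmoothFn

/-- The partial derivative `∂ᵢ`. -/
noncomputable def partialDeriv (i : Fin n) : Derivation ℝ (SmoothFn n) (SmoothFn n) where
  toFun f := ⟨fun x => fderiv ℝ f x (EuclideanSpace.single i 1),
    (f.contDiff.fderiv_right (m := ∞) (by simp)).clm_apply contDiff_const⟩
  map_add' f g := by
    ext x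
    change fderiv ℝ (fun y => f y + g y) x _ = _
    rw [fderiv_fun_add (f.differentiable x) (g.differentiable x)]
    rfl
  map_smul' c f := by
    ext x
    change fderiv ℝ (fun y => c • f y) x _ = _
    rw [fderiv_fun_const_smul (f.differentiable x)]
    rfl
  map_one_eq_zero' := by
    ext x
    change fderiv ℝ (fun _ => (1 : ℝ)) x _ = (0 : ℝ)
    simp
  leibniz' f g := by
    ext x
    change fderiv ℝ (fun y => f y * g y) x _ = _
    rw [fderiv_fun_mul (f.differentiable x) (g.differentiable x)]
    rfl

lemma partialDeriv_apply (i : Fin n) (f : SmoothFn n) (x : Euc n) :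
    partialDeriv i f x = fderiv ℝ f x (EuclideanSpace.single i 1) := rfl

lemma partialDeriv_mul (i : Fin n) (f g : SmoothFn n) :
    partialDeriv i (f * g) = f * partialDeriv i g + g * partialDeriv i f := by
  simp [Derivation.leibniz]

lemma partialDeriv_partialDeriv_apply (i j : Fin n) (f : SmoothFn n) (x : Euc n) :
    partialDeriv i (partialDeriv j f) x =
      fderiv ℝ (fderiv ℝ f) x (EuclideanSpace.single i 1) (EuclideanSpace.single j 1) := by
  have hd : DifferentiableAt ℝ (fderiv ℝ f) x :=
    (f.contDiff.fderiv_right (m := ∞) (by simp)).differentiable (by simp) x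
  change fderiv ℝ (fun y => fderiv ℝ f y (EuclideanSpace.single j 1)) x _ = _
  rw [fderiv_clm_apply hd (by fun_prop)]
  simp

lemma partialDeriv_comm (i j : Fin n) (f : SmoothFn n) :
    partialDeriv i (partialDeriv j f) = partialDeriv j (partialDeriv i f) := by
  ext x
  rw [partialDeriv_partialDeriv_apply, partialDeriv_partialDeriv_apply]
  exact f.contDiff.contDiffAt.isSymmSndFDerivAt
    (by rw [minSmoothness_of_isRCLikeNormedField]; exact ENat.LEInfty.out) _ _

/-- The coordinate function `x ↦ xᵢ`. -/
noncomputable def coord (i : Fin n) : SmoothFn n :=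
  ⟨fun x => x i, show ContDiff ℝ ∞ (fun x : Euc n => x i) by fun_prop⟩

@[simp] lemma coord_apply (i : Fin n) (x : Euc n) : coord i x = x i := rfl

lemma partialDeriv_coord (i j : Fin n) :
    partialDeriv i (coord j) = if i = j then (1 : SmoothFn n) else 0 := by
  ext x
  rw [partialDeriv_apply]
  change fderiv ℝ (EuclideanSpace.proj (𝕜 := ℝ) j) x _ = _
  rw [ContinuousLinearMap.fderiv]
  by_cases h : i = j
  · subst h
    simp
  · simp only [PiLp.proj_apply, PiLp.single_apply, Ne.symm h, h, if_false]
    rfl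

/-- The operator `-Δ`. -/
noncomputable def negLaplacian : SmoothFn n →ₗ[ℝ] SmoothFn n :=
  -∑ i, (partialDeriv i).toLinearMap ∘ₗ (partialDeriv i).toLinearMap

lemma negLaplacian_eq (f : SmoothFn n) :
    negLaplacian f = -∑ i, partialDeriv i (partialDeriv i f) := by
  simp [negLaplacian]

lemma lap_apply (f : SmoothFn n) (x : Euc n) : lap f x = -negLaplacian f x := by
  rw [negLaplacian_eq, SmoothFn.neg_apply, SmoothFn.sum_apply, neg_neg]
  rfl

lemma negLaplacian_pow_succ (k : ℕ) (f : SmoothFn n) :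
    (negLaplacian ^ (k + 1)) f = negLaplacian ((negLaplacian ^ k) f) := by
  rw [pow_succ', Module.End.mul_apply]

lemma negLaplacian_pow_succ' (k : ℕ) (f : SmoothFn n) :
    (negLaplacian ^ (k + 1)) f = (negLaplacian ^ k) (negLaplacian f) := by
  rw [pow_succ, Module.End.mul_apply]

lemma neg_one_pow_mul_iterate_lap (f : SmoothFn n) (k : ℕ) (x : Euc n) :
    (-1 : ℝ) ^ k * lap^[k] f x = (negLaplacian ^ k) f x := by
  have iterate_lap : ∀ k, lap^[k] f = ((-1 : ℝ) ^ k • (negLaplacian ^ k) f : SmoothFn n) := by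
    intro k
    induction k with
    | zero => ext x; simp
    | succ k ih =>
      ext x
      rw [Function.iterate_succ_apply', ih, lap_apply, map_smul, negLaplacian_pow_succ]
      simp [pow_succ]
  rw [iterate_lap, SmoothFn.smul_apply, ← mul_assoc, ← mul_pow]
  simp

/-- The Euler operator `∑ᵢ xᵢ ∂ᵢ`. -/
noncomputable def euler : SmoothFn n →ₗ[ℝ] SmoothFn n :=
  ∑ i, LinearMap.mulLeft ℝ (coord i) ∘ₗ (partialDeriv i).toLinearMap

lemma euler_eq (f : SmoothFn n) : euler f = ∑ i, coord i * partialDeriv i f := by simp [euler]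

lemma euler_mul (f g : SmoothFn n) : euler (f * g) = f * euler g + g * euler f := by
  simp only [euler_eq, partialDeriv_mul, Finset.mul_sum, ← Finset.sum_add_distrib]
  exact Finset.sum_congr rfl fun i _ => by ring

lemma negLaplacian_mul (f g : SmoothFn n) :
    negLaplacian (f * g) = f * negLaplacian g + g * negLaplacian f
      - 2 * ∑ i, partialDeriv i f * partialDeriv i g := by
  simp only [negLaplacian_eq, partialDeriv_mul, map_add, Finset.mul_sum,
    ← Finset.sum_neg_distrib, ← Finset.sum_add_distrib, ← Finset.sum_sub_distrib]
  exact Finset.sum_congr rfl fun i _ => by ring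

lemma negLaplacian_partialDeriv (i : Fin n) (f : SmoothFn n) :
    negLaplacian (partialDeriv i f) = partialDeriv i (negLaplacian f) := by
  simp only [negLaplacian_eq, map_neg, map_sum]
  congr 1
  exact Finset.sum_congr rfl fun j _ => by rw [partialDeriv_comm j i, partialDeriv_comm j i]

lemma negLaplacian_pow_partialDeriv (k : ℕ) (i : Fin n) (f : SmoothFn n) :
    (negLaplacian ^ k) (partialDeriv i f) = partialDeriv i ((negLaplacian ^ k) f) := by
  induction k with
  | zero => rfl
  | succ k ih => rw [negLaplacian_pow_succ, ih, negLaplacian_partialDeriv, negLaplacian_pow_succ]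

lemma negLaplacian_coord_mul (i : Fin n) (f : SmoothFn n) :
    negLaplacian (coord i * f) = coord i * negLaplacian f - (2 : ℝ) • partialDeriv i f := by
  have hX : negLaplacian (coord i : SmoothFn n) = 0 := by
    rw [negLaplacian_eq, neg_eq_zero]
    refine Finset.sum_eq_zero fun j _ => ?_
    rw [partialDeriv_coord]
    split_ifs <;> simp
  rw [negLaplacian_mul, hX, ofNat_smul_eq_nsmul, nsmul_eq_mul]
  simp [partialDeriv_coord]

lemma negLaplacian_pow_coord_mul (k : ℕ) (i : Fin n) (f : SmoothFn n) :
    (negLaplacian ^ (k + 1)) (coord i * f) = coord i * (negLaplacian ^ (k + 1)) f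
      - (2 * (k + 1) : ℝ) • partialDeriv i ((negLaplacian ^ k) f) := by
  induction k with
  | zero => simp [negLaplacian_coord_mul]
  | succ k ih =>
    rw [negLaplacian_pow_succ, ih, map_sub, map_smul, negLaplacian_coord_mul,
      negLaplacian_partialDeriv, ← negLaplacian_pow_succ, ← negLaplacian_pow_succ]
    push_cast
    module

lemma negLaplacian_euler (f : SmoothFn n) :
    negLaplacian (euler f) = euler (negLaplacian f) + (2 : ℝ) • negLaplacian f := by
  simp only [euler_eq, map_sum, negLaplacian_coord_mul, negLaplacian_partialDeriv]
  rw [Finset.sum_sub_distrib, ← Finset.smul_sum, negLaplacian_eq f]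
  module

/-- The inverse `ρ(x) = (1 + |x|²) / 2` of the conformal factor of the stereographic projection. -/
noncomputable def rho : SmoothFn n := (1 / 2 : ℝ) • (1 + ∑ i, coord i * coord i)

lemma rho_apply (x : Euc n) : rho x = (1 + ‖x‖ ^ 2) / 2 := by
  rw [EuclideanSpace.norm_sq_eq]
  simp [rho, ← pow_two]
  ring

lemma sum_coord_mul_coord : ∑ i, coord i * coord i = ((2 : ℝ) • rho - 1 : SmoothFn n) := by
  rw [rho]
  module

lemma partialDeriv_rho (i : Fin n) : partialDeriv i rho = coord i := by
  have h : partialDeriv i (∑ j, coord j * coord j : SmoothFn n) = (2 : ℝ) • coord i := by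
    simp [map_sum, partialDeriv_coord, Finset.sum_add_distrib, two_smul]
  rw [rho, Derivation.map_smul, map_add, h, Derivation.map_one_eq_zero]
  module

lemma negLaplacian_rho_mul (f : SmoothFn n) :
    negLaplacian (rho * f) = rho * negLaplacian f - (2 : ℝ) • euler f - (n : ℝ) • f := by
  have h : negLaplacian (rho : SmoothFn n) = -(n : SmoothFn n) := by
    simp [negLaplacian_eq, partialDeriv_rho, partialDeriv_coord]
  simp only [negLaplacian_mul, h, partialDeriv_rho, ← euler_eq]
  simp only [ofNat_smul_eq_nsmul, Nat.cast_smul_eq_nsmul, nsmul_eq_mul, Nat.cast_ofNat]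
  ring

lemma negLaplacian_pow_rho_mul (k : ℕ) (f : SmoothFn n) :
    (negLaplacian ^ (k + 1)) (rho * f) = rho * (negLaplacian ^ (k + 1)) f
      - (k + 1 : ℝ) • ((2 : ℝ) • euler ((negLaplacian ^ k) f)
        + (n + 2 * k : ℝ) • (negLaplacian ^ k) f) := by
  induction k with
  | zero => simp [negLaplacian_rho_mul, sub_sub]
  | succ k ih =>
    rw [negLaplacian_pow_succ, ih]
    simp only [map_sub, map_smul, map_add, negLaplacian_rho_mul, negLaplacian_euler,
      ← negLaplacian_pow_succ]
    push_cast
    module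

/-- The second-order operator `ρ(-Δ) + k(2x·∇ + n - 2k - 2)`, which raises the order of `(-Δ)ᵏ` by
one: `ρ(-Δ)ᵏ⁺¹ = (-Δ)ᵏ ∘ raisingOp k`. -/
noncomputable def raisingOp (k : ℕ) (f : SmoothFn n) : SmoothFn n :=
  rho * negLaplacian f + (k : ℝ) • ((2 : ℝ) • euler f + (n - 2 * k - 2 : ℝ) • f)

lemma rho_mul_negLaplacian_pow_succ (k : ℕ) (f : SmoothFn n) :
    rho * (negLaplacian ^ (k + 1)) f = (negLaplacian ^ k) (raisingOp k f) := by
  induction k generalizing f with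
  | zero => simp [raisingOp]
  | succ k ih =>
    rw [negLaplacian_pow_succ' (k + 1), ih, negLaplacian_pow_succ' k (raisingOp _ _)]
    congr 1
    simp only [raisingOp, map_add, map_smul, negLaplacian_rho_mul, negLaplacian_euler]
    push_cast
    module

/-! ### The stereographic weight and the conjugated operators -/

/-- The power `w^α` of the conformal factor `w(x) = 2 / (1 + |x|²)` of the stereographic projection:
the round metric of the sphere is `w²|dx|²`, and `w^n dx` is its volume form. -/
noncomputable def weight (α : ℝ) : SmoothFn n :=
  ⟨fun x => (2 / (1 + ‖x‖ ^ 2)) ^ α, by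
    have hne : ∀ x : Euc n, 1 + ‖x‖ ^ 2 ≠ 0 := fun x => by positivity
    have hpos : ∀ x : Euc n, 0 < 2 / (1 + ‖x‖ ^ 2) := fun x => by positivity
    have hbase : ContDiff ℝ ∞ fun x : Euc n => 2 / (1 + ‖x‖ ^ 2) :=
      contDiff_const.div (contDiff_const.add (contDiff_norm_sq ℝ)) hne
    exact hbase.rpow_const_of_ne fun x => (hpos x).ne'⟩

lemma weight_apply (α : ℝ) (x : Euc n) : weight α x = (2 / (1 + ‖x‖ ^ 2)) ^ α := rfl

lemma weight_one_apply (x : Euc n) : weight 1 x = 2 / (1 + ‖x‖ ^ 2) := Real.rpow_one _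

lemma weight_pos (α : ℝ) (x : Euc n) : 0 < weight α x := by rw [weight_apply]; positivity

lemma weight_mul_weight (α β : ℝ) : (weight α * weight β : SmoothFn n) = weight (α + β) := by
  ext x
  exact (Real.rpow_add (by positivity) _ _).symm

lemma weight_rpow (α β : ℝ) (x : Euc n) : weight α x ^ β = weight (α * β) x :=
  (Real.rpow_mul (by positivity) _ _).symm

lemma weight_zero : (weight 0 : SmoothFn n) = 1 := by
  ext x
  exact Real.rpow_zero _

lemma weight_mul_weight_neg_mul (α : ℝ) (f : SmoothFn n) : weight α * (weight (-α) * f) = f := by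
  rw [← mul_assoc, weight_mul_weight, add_neg_cancel, weight_zero, one_mul]

lemma rho_eq_weight : (rho : SmoothFn n) = weight (-1) := by
  ext x
  rw [rho_apply, weight_apply, Real.rpow_neg_one, inv_div]

lemma weight_mul_rho (α : ℝ) : (weight α * rho : SmoothFn n) = weight (α - 1) := by
  rw [rho_eq_weight, weight_mul_weight, sub_eq_add_neg]

lemma weight_one_mul_rho : (weight 1 * rho : SmoothFn n) = 1 := by
  rw [weight_mul_rho, sub_self, weight_zero]

lemma partialDeriv_weight (i : Fin n) (α : ℝ) :
    partialDeriv i (weight α : SmoothFn n) = (-α) • (weight (α + 1) * coord i) := by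
  ext x
  have hrho : HasFDerivAt rho (fderiv ℝ rho x) x := (rho.differentiable x).hasFDerivAt
  have hrho_ne : rho x ≠ 0 := by rw [rho_apply]; positivity
  have hw : ∀ β, (weight β : Euc n → ℝ) = fun y => rho y ^ (-β) := by
    intro β
    ext y
    rw [rho_eq_weight, weight_rpow, neg_mul_neg, one_mul]
  have hcoord : fderiv ℝ rho x (EuclideanSpace.single i 1) = x i := by
    rw [← partialDeriv_apply, partialDeriv_rho, coord_apply]
  rw [partialDeriv_apply, hw, (hrho.rpow_const (p := -α) (Or.inl hrho_ne)).fderiv]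
  simp only [smul_apply, smul_eq_mul, SmoothFn.smul_apply, SmoothFn.mul_apply,
    coord_apply, hw, hcoord, neg_add']
  ring

lemma sum_partialDeriv_weight_mul (b : ℝ) (f : SmoothFn n) :
    ∑ i, partialDeriv i (weight b) * partialDeriv i f = (-b) • (weight (b + 1) * euler f) := by
  simp only [partialDeriv_weight, euler_eq, Finset.mul_sum, Finset.smul_sum]
  exact Finset.sum_congr rfl fun i _ => by rw [smul_mul_assoc, mul_assoc]

lemma euler_weight (b : ℝ) :
    euler (weight b : SmoothFn n) = (-b) • (weight (b + 1) * ((2 : ℝ) • rho - 1)) := by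
  rw [← sum_coord_mul_coord]
  simp only [euler_eq, partialDeriv_weight, Finset.mul_sum, Finset.smul_sum]
  exact Finset.sum_congr rfl fun i _ => by rw [mul_smul_comm, mul_left_comm]

lemma negLaplacian_weight (b : ℝ) : negLaplacian (weight b : SmoothFn n) =
    b • ((n : ℝ) • weight (b + 1) - (b + 1) • (weight (b + 2) * ((2 : ℝ) • rho - 1))) := by
  have hterm : ∀ i : Fin n, partialDeriv i (partialDeriv i (weight b)) =
      (-b) • weight (b + 1) + (b * (b + 1)) • (weight (b + 2) * (coord i * coord i)) := by
    intro i
    simp only [partialDeriv_weight, Derivation.map_smul, partialDeriv_mul, partialDeriv_coord,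
      if_true, mul_one, mul_smul_comm, show b + 1 + 1 = b + 2 by ring]
    rw [mul_left_comm (coord i)]
    module
  rw [negLaplacian_eq, ← sum_coord_mul_coord, Finset.sum_congr rfl fun i _ => hterm i,
    Finset.sum_add_distrib, Finset.sum_const, Finset.card_univ, Fintype.card_fin,
    ← Finset.smul_sum, ← Finset.mul_sum, ← Nat.cast_smul_eq_nsmul ℝ]
  module

/-- The Laplacian `-Δ` of the round metric `w²|dx|²` of the sphere in stereographic coordinates. -/
noncomputable def sphereLaplacian : SmoothFn n →ₗ[ℝ] SmoothFn n where
  toFun f := rho ^ 2 * negLaplacian f + (n - 2 : ℝ) • (rho * euler f)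
  map_add' f g := by
    simp only [map_add, mul_add]
    module
  map_smul' c f := by
    simp only [map_smul, mul_smul_comm, RingHom.id_apply]
    module

lemma sphereLaplacian_eq (f : SmoothFn n) :
    sphereLaplacian f = rho ^ 2 * negLaplacian f + (n - 2 : ℝ) • (rho * euler f) := rfl

/-- The zeroth-order term `(n + 2ℓ - 2)(n - 2ℓ) / 4` of the `ℓ`-th factor of the GJMS operator
`P_{2k} = ∏ ℓ, (-Δ + (n + 2ℓ - 2)(n - 2ℓ) / 4)` of the round sphere. -/
noncomputable def gjmsFactor (n ℓ : ℕ) : ℝ := ((n : ℝ) + 2 * ℓ - 2) * ((n : ℝ) - 2 * ℓ) / 4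

/-- The conformal weight `(n - 2k) / 2` of `(-Δ)ᵏ`. -/
noncomputable def confExp (n k : ℕ) : ℝ := ((n : ℝ) - 2 * k) / 2

lemma confExp_eq_succ_add_one (n k : ℕ) : confExp n k = confExp n (k + 1) + 1 := by
  simp only [confExp, Nat.cast_succ]
  ring

/-- The conformal covariance that produces the factors of the GJMS operator. -/
lemma raisingOp_weight_mul (k : ℕ) (f : SmoothFn n) :
    raisingOp k (weight (confExp n (k + 1)) * f) =
      weight (confExp n k) * (sphereLaplacian f + gjmsFactor n (k + 1) • f) := by
  rw [raisingOp, negLaplacian_mul, negLaplacian_weight, euler_mul, euler_weight,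
    sum_partialDeriv_weight_mul, sphereLaplacian_eq, confExp_eq_succ_add_one n k]
  have hn : (n : ℝ) = 2 * confExp n (k + 1) + 2 * k + 2 := by simp [confExp]; ring
  have hc : gjmsFactor n (k + 1) = confExp n (k + 1) * (n + 2 * k) / 2 := by
    simp [confExp, gjmsFactor]
    ring
  rw [hc]
  set b := confExp n (k + 1)
  ext x
  have h1 : weight (b + 1) x = weight (b + 2) x * rho x := by
    rw [← SmoothFn.mul_apply, weight_mul_rho]
    ring_nf
  have h0 : weight b x = weight (b + 2) x * rho x * rho x := by
    rw [← h1, ← SmoothFn.mul_apply, weight_mul_rho]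
    ring_nf
  simp only [SmoothFn.add_apply, SmoothFn.mul_apply, SmoothFn.smul_apply, SmoothFn.sub_apply,
    SmoothFn.pow_apply, SmoothFn.one_apply, show (2 : SmoothFn n) x = 2 from rfl, h0, h1, hn]
  ring

/-- The restrictions to the sphere of the linear coordinates of `ℝⁿ⁺¹`, in stereographic
coordinates; `none` stands for the coordinate along the axis of projection. -/
noncomputable def sphereCoord : Option (Fin n) → SmoothFn n
  | none => weight 1 - 1
  | some i => weight 1 * coord i

/-- With `P = (-Δ)ᵏ⁺¹` this computes `∑ ξ P(ξ f)` over the coordinates `ξ` of the sphere; as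
`∑ ξ² = 1`, it bounds the sum of the energies in the second variations along `ξ f`. -/
lemma sum_sphereCoord_mul_negLaplacian_pow (k : ℕ) (f : SmoothFn n) :
    ∑ i, sphereCoord i * (negLaplacian ^ (k + 1)) (sphereCoord i * f)
      = (negLaplacian ^ (k + 1)) f
        + ((k + 1) * (n + 2 * k) : ℝ) • (weight 1 * (negLaplacian ^ k) (weight 1 * f)) := by
  set φ := weight 1 * f with hφ
  have hf : f = rho * φ := by linear_combination (-f) * weight_one_mul_rho (n := n)
  have hrho := negLaplacian_pow_rho_mul k φ
  rw [← hf] at hrho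
  have hlast : (negLaplacian ^ (k + 1)) ((weight 1 - 1) * f)
      = (negLaplacian ^ (k + 1)) φ - (negLaplacian ^ (k + 1)) f := by
    rw [← map_sub, hφ, sub_mul, one_mul]
  have hcoord : ∀ i, weight 1 * coord i * (negLaplacian ^ (k + 1)) (weight 1 * coord i * f) =
      weight 1 * (negLaplacian ^ (k + 1)) φ * (coord i * coord i)
        - (2 * (k + 1) : ℝ) • (weight 1 * (coord i * partialDeriv i ((negLaplacian ^ k) φ))) := by
    intro i
    rw [show weight 1 * coord i * f = coord i * φ by rw [hφ]; ring, negLaplacian_pow_coord_mul,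
      mul_sub, mul_smul_comm]
    ring_nf
  simp only [Fintype.sum_option, sphereCoord]
  rw [hlast, Finset.sum_congr rfl fun i _ => hcoord i, Finset.sum_sub_distrib, ← Finset.mul_sum,
    ← Finset.smul_sum, ← Finset.mul_sum, sum_coord_mul_coord, ← euler_eq]
  ext x
  have hrho_x := congrArg (fun g : SmoothFn n => g x) hrho
  have hweight_x := congrArg (fun g : SmoothFn n => g x) (weight_one_mul_rho (n := n))
  simp only [SmoothFn.add_apply, SmoothFn.mul_apply, SmoothFn.smul_apply, SmoothFn.sub_apply,
    SmoothFn.one_apply] at hrho_x hweight_x ⊢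
  linear_combination (-weight 1 x) * hrho_x + (negLaplacian ^ (k + 1)) φ x * hweight_x

/-! ### Test functions and integration by parts -/

/-- The test functions, as an ideal of the algebra of smooth functions. -/
def testIdeal (n : ℕ) : Ideal (SmoothFn n) where
  carrier := {f | HasCompactSupport f}
  add_mem' hf hg := HasCompactSupport.add hf hg
  zero_mem' := HasCompactSupport.zero
  smul_mem' g _ hf := HasCompactSupport.mul_left (f := g) hf

lemma smul_mem_testIdeal (c : ℝ) {f : SmoothFn n} (hf : f ∈ testIdeal n) :
    c • f ∈ testIdeal n :=
  Submodule.smul_of_tower_mem _ c hf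

lemma partialDeriv_mem_testIdeal (i : Fin n) {f : SmoothFn n} (hf : f ∈ testIdeal n) :
    partialDeriv i f ∈ testIdeal n :=
  HasCompactSupport.fderiv_apply (𝕜 := ℝ) hf _

lemma negLaplacian_mem_testIdeal {f : SmoothFn n} (hf : f ∈ testIdeal n) :
    negLaplacian f ∈ testIdeal n := by
  rw [negLaplacian_eq]
  exact neg_mem (sum_mem fun i _ =>
    partialDeriv_mem_testIdeal i (partialDeriv_mem_testIdeal i hf))

lemma euler_mem_testIdeal {f : SmoothFn n} (hf : f ∈ testIdeal n) : euler f ∈ testIdeal n := by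
  rw [euler_eq]
  exact sum_mem fun i _ => Ideal.mul_mem_left _ _ (partialDeriv_mem_testIdeal i hf)

lemma sphereLaplacian_mem_testIdeal {f : SmoothFn n} (hf : f ∈ testIdeal n) :
    sphereLaplacian f ∈ testIdeal n := by
  rw [sphereLaplacian_eq]
  exact add_mem (Ideal.mul_mem_left _ _ (negLaplacian_mem_testIdeal hf))
    (smul_mem_testIdeal _ (Ideal.mul_mem_left _ _ (euler_mem_testIdeal hf)))

lemma sphereLaplacian_pow_mem_testIdeal (j : ℕ) {f : SmoothFn n} (hf : f ∈ testIdeal n) :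
    (sphereLaplacian ^ j) f ∈ testIdeal n := by
  induction j with
  | zero => exact hf
  | succ j ih =>
    rw [pow_succ', Module.End.mul_apply]
    exact sphereLaplacian_mem_testIdeal ih

lemma integrable_of_mem_testIdeal {f : SmoothFn n} (hf : f ∈ testIdeal n) :
    Integrable (f : Euc n → ℝ) :=
  f.continuous.integrable_of_hasCompactSupport hf

/-- The Lebesgue integral of a smooth function. -/
noncomputable def totalIntegral (f : SmoothFn n) : ℝ := ∫ x, f x

lemma totalIntegral_add {f g : SmoothFn n} (hf : f ∈ testIdeal n) (hg : g ∈ testIdeal n) :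
    totalIntegral (f + g) = totalIntegral f + totalIntegral g :=
  integral_add (integrable_of_mem_testIdeal hf) (integrable_of_mem_testIdeal hg)

lemma totalIntegral_sub {f g : SmoothFn n} (hf : f ∈ testIdeal n) (hg : g ∈ testIdeal n) :
    totalIntegral (f - g) = totalIntegral f - totalIntegral g :=
  integral_sub (integrable_of_mem_testIdeal hf) (integrable_of_mem_testIdeal hg)

lemma totalIntegral_smul (c : ℝ) (f : SmoothFn n) :
    totalIntegral (c • f) = c * totalIntegral f :=
  integral_const_mul c _

lemma totalIntegral_sum {ι : Type*} (s : Finset ι) (f : ι → SmoothFn n)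
    (hf : ∀ i ∈ s, f i ∈ testIdeal n) :
    totalIntegral (∑ i ∈ s, f i) = ∑ i ∈ s, totalIntegral (f i) := by
  simp only [totalIntegral, SmoothFn.sum_apply]
  exact integral_finsetSum s fun i hi => integrable_of_mem_testIdeal (hf i hi)

lemma totalIntegral_nonneg {f : SmoothFn n} (hf : ∀ x, 0 ≤ f x) : 0 ≤ totalIntegral f :=
  integral_nonneg hf

lemma totalIntegral_partialDeriv (i : Fin n) {f : SmoothFn n} (hf : f ∈ testIdeal n) :
    totalIntegral (partialDeriv i f) = 0 := by
  have h := integral_mul_fderiv_eq_neg_fderiv_mul_of_integrable (𝕜 := ℝ) (μ := volume)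
    (f := fun _ : Euc n => (1 : ℝ)) (g := f) (v := EuclideanSpace.single i 1) (by simp)
    (by simp only [one_mul]
        exact integrable_of_mem_testIdeal (partialDeriv_mem_testIdeal i hf))
    (by simpa only [one_mul] using integrable_of_mem_testIdeal hf)
    (by fun_prop) (fun x _ => f.differentiable x)
  simp only [one_mul, fderiv_fun_const, Pi.zero_apply, zero_apply, zero_mul,
    integral_zero, neg_zero] at h
  exact h

lemma totalIntegral_sub_sum_partialDeriv {f : SmoothFn n} (hf : f ∈ testIdeal n)
    {F : Fin n → SmoothFn n} (hF : ∀ i, F i ∈ testIdeal n) :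
    totalIntegral (f - ∑ i, partialDeriv i (F i)) = totalIntegral f := by
  have hdF : ∀ i ∈ Finset.univ, partialDeriv i (F i) ∈ testIdeal n := fun i _ =>
    partialDeriv_mem_testIdeal i (hF i)
  rw [totalIntegral_sub hf (sum_mem hdF), totalIntegral_sum _ _ hdF,
    Finset.sum_eq_zero fun i _ => totalIntegral_partialDeriv i (hF i), sub_zero]

lemma totalIntegral_mul_negLaplacian {f : SmoothFn n} (hf : f ∈ testIdeal n) (g : SmoothFn n) :
    totalIntegral (f * negLaplacian g) =
      totalIntegral (∑ i, partialDeriv i f * partialDeriv i g) := by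
  rw [← totalIntegral_sub_sum_partialDeriv (F := fun i => f * partialDeriv i g)
    (sum_mem fun i _ => Ideal.mul_mem_right _ _ (partialDeriv_mem_testIdeal i hf))
    fun i => Ideal.mul_mem_right _ _ hf]
  congr 1
  simp only [negLaplacian_eq, ← Finset.sum_neg_distrib, Finset.mul_sum,
    ← Finset.sum_sub_distrib]
  exact Finset.sum_congr rfl fun i _ => by rw [partialDeriv_mul]; ring

lemma totalIntegral_mul_negLaplacian_comm {f : SmoothFn n} (hf : f ∈ testIdeal n)
    (g : SmoothFn n) : totalIntegral (f * negLaplacian g) = totalIntegral (negLaplacian f * g) := by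
  rw [← totalIntegral_sub_sum_partialDeriv
    (F := fun i => g * partialDeriv i f - f * partialDeriv i g)
    (Ideal.mul_mem_right _ _ hf) fun i => sub_mem
      (Ideal.mul_mem_left _ _ (partialDeriv_mem_testIdeal i hf)) (Ideal.mul_mem_right _ _ hf)]
  congr 1
  simp only [negLaplacian_eq, map_sub, partialDeriv_mul, Finset.mul_sum,
    Finset.sum_mul, ← Finset.sum_neg_distrib, ← Finset.sum_sub_distrib]
  exact Finset.sum_congr rfl fun i _ => by ring

/-- The bilinear form `∫ u (-Δ)ᵏv` of the operator `(-Δ)ᵏ`. -/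
noncomputable def energy (k : ℕ) (u v : SmoothFn n) : ℝ := totalIntegral (u * (negLaplacian ^ k) v)

lemma energy_comm (k : ℕ) {u : SmoothFn n} (hu : u ∈ testIdeal n) (v : SmoothFn n) :
    energy k u v = energy k v u := by
  induction k generalizing u with
  | zero => simp [energy, mul_comm]
  | succ k ih =>
    rw [energy, negLaplacian_pow_succ, totalIntegral_mul_negLaplacian_comm hu, ← energy,
      ih (negLaplacian_mem_testIdeal hu), energy, energy, negLaplacian_pow_succ']

lemma energy_add_right (k : ℕ) {u : SmoothFn n} (hu : u ∈ testIdeal n) (v w : SmoothFn n) :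
    energy k u (v + w) = energy k u v + energy k u w := by
  rw [energy, map_add, mul_add, totalIntegral_add (Ideal.mul_mem_right _ _ hu)
    (Ideal.mul_mem_right _ _ hu), energy, energy]

lemma energy_smul_right (k : ℕ) (c : ℝ) (u v : SmoothFn n) :
    energy k u (c • v) = c * energy k u v := by
  rw [energy, map_smul, mul_smul_comm, totalIntegral_smul, energy]

lemma energy_smul_left (k : ℕ) (c : ℝ) (u v : SmoothFn n) :
    energy k (c • u) v = c * energy k u v := by
  rw [energy, smul_mul_assoc, totalIntegral_smul, energy]

lemma energy_add_smul_self (k : ℕ) {u v : SmoothFn n} (hu : u ∈ testIdeal n)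
    (hv : v ∈ testIdeal n) (t : ℝ) :
    energy k (u + t • v) (u + t • v) =
      energy k u u + 2 * t * energy k u v + t ^ 2 * energy k v v := by
  have huv : u + t • v ∈ testIdeal n := add_mem hu (smul_mem_testIdeal t hv)
  rw [energy_add_right k huv, energy_smul_right, energy_comm k huv, energy_comm k huv,
    energy_add_right k hu, energy_add_right k hv, energy_smul_right, energy_smul_right,
    energy_comm k hv]
  ring

/-! ### The spectral gap of the conjugated form on the sphere -/

/-- The form of `(-Δ)ᵏ` transported to the sphere by `u = w^((n - 2k) / 2) U`, that is, the form of
the GJMS operator `P_{2k}` in stereographic coordinates. -/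
noncomputable def sphereForm (k : ℕ) (U V : SmoothFn n) : ℝ :=
  energy k (weight (confExp n k) * U) (weight (confExp n k) * V)

lemma sphereForm_comm (k : ℕ) {U : SmoothFn n} (hU : U ∈ testIdeal n) (V : SmoothFn n) :
    sphereForm k U V = sphereForm k V U :=
  energy_comm k (Ideal.mul_mem_left _ _ hU) _

lemma sphereForm_add_right (k : ℕ) {U : SmoothFn n} (hU : U ∈ testIdeal n) (V W : SmoothFn n) :
    sphereForm k U (V + W) = sphereForm k U V + sphereForm k U W := by
  rw [sphereForm, mul_add, energy_add_right k (Ideal.mul_mem_left _ _ hU), sphereForm, sphereForm]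

lemma sphereForm_smul_right (k : ℕ) (c : ℝ) (U V : SmoothFn n) :
    sphereForm k U (c • V) = c * sphereForm k U V := by
  rw [sphereForm, mul_smul_comm, energy_smul_right, sphereForm]

lemma sphereForm_succ (k : ℕ) (U V : SmoothFn n) :
    sphereForm (k + 1) U V = sphereForm k U (sphereLaplacian V + gjmsFactor n (k + 1) • V) := by
  have hweight : weight (confExp n k) * rho = (weight (confExp n (k + 1)) : SmoothFn n) := by
    rw [weight_mul_rho, confExp_eq_succ_add_one, add_sub_cancel_right]
  unfold sphereForm energy
  rw [← raisingOp_weight_mul, ← rho_mul_negLaplacian_pow_succ, ← hweight]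
  ring_nf

lemma sphereForm_zero (U V : SmoothFn n) :
    sphereForm 0 U V = totalIntegral (weight n * (U * V)) := by
  have hweight : (weight (n : ℝ) : SmoothFn n) = weight (confExp n 0) * weight (confExp n 0) := by
    rw [weight_mul_weight]
    simp [confExp]
  unfold sphereForm energy
  rw [hweight, pow_zero, Module.End.one_apply]
  ring_nf

lemma sphereForm_zero_sphereLaplacian {U : SmoothFn n} (hU : U ∈ testIdeal n) (V : SmoothFn n) :
    sphereForm 0 U (sphereLaplacian V) =
      totalIntegral (weight (n - 2) * ∑ i, partialDeriv i U * partialDeriv i V) := by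
  have hrho_sq : (weight (n : ℝ) * rho ^ 2 : SmoothFn n) = weight (n - 2) := by
    rw [pow_two, ← mul_assoc, weight_mul_rho, weight_mul_rho]
    ring_nf
  have hrho : (weight (n : ℝ) * rho : SmoothFn n) = weight (n - 2 + 1) := by
    rw [weight_mul_rho]
    ring_nf
  have hexpand : weight (n : ℝ) * (U * sphereLaplacian V) =
      U * (weight (n - 2 : ℝ) * negLaplacian V)
        + (n - 2 : ℝ) • (U * (weight (n - 2 + 1 : ℝ) * euler V)) := by
    rw [sphereLaplacian_eq, ← hrho_sq, ← hrho, mul_add, mul_add, mul_smul_comm, mul_smul_comm]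
    ring_nf
  rw [sphereForm_zero, ← totalIntegral_sub_sum_partialDeriv
    (F := fun i => weight (n - 2) * (U * partialDeriv i V))
    (Ideal.mul_mem_left _ _ (sum_mem fun i _ =>
      Ideal.mul_mem_right _ _ (partialDeriv_mem_testIdeal i hU)))
    fun i => Ideal.mul_mem_left _ _ (Ideal.mul_mem_right _ _ hU)]
  congr 1
  rw [hexpand, negLaplacian_eq, euler_eq]
  simp only [Finset.mul_sum, Finset.smul_sum, ← Finset.sum_neg_distrib,
    ← Finset.sum_add_distrib, ← Finset.sum_sub_distrib]
  refine Finset.sum_congr rfl fun i _ => ?_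
  rw [partialDeriv_mul, partialDeriv_mul, partialDeriv_weight]
  ext x
  simp only [SmoothFn.add_apply, SmoothFn.sub_apply, SmoothFn.neg_apply, SmoothFn.smul_apply,
    SmoothFn.mul_apply]
  ring

lemma sphereForm_zero_sphereLaplacian_comm {U V : SmoothFn n} (hU : U ∈ testIdeal n)
    (hV : V ∈ testIdeal n) :
    sphereForm 0 U (sphereLaplacian V) = sphereForm 0 (sphereLaplacian U) V := by
  rw [← sphereForm_comm 0 hV, sphereForm_zero_sphereLaplacian hU,
    sphereForm_zero_sphereLaplacian hV]
  simp only [mul_comm (partialDeriv _ U)]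

lemma sphereForm_zero_sphereLaplacian_pow (j : ℕ) {U V : SmoothFn n} (hU : U ∈ testIdeal n)
    (hV : V ∈ testIdeal n) :
    sphereForm 0 U ((sphereLaplacian ^ j) V) = sphereForm 0 ((sphereLaplacian ^ j) U) V := by
  induction j generalizing V with
  | zero => rfl
  | succ j ih =>
    rw [pow_succ, Module.End.mul_apply, ih (sphereLaplacian_mem_testIdeal hV),
      sphereForm_zero_sphereLaplacian_comm (sphereLaplacian_pow_mem_testIdeal j hU) hV,
      ← Module.End.mul_apply, ← pow_succ', ← pow_succ]

lemma sphereForm_zero_self_nonneg (U : SmoothFn n) : 0 ≤ sphereForm 0 U U := by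
  rw [sphereForm_zero]
  exact totalIntegral_nonneg fun x => mul_nonneg (weight_pos _ x).le (mul_self_nonneg (U x))

lemma sphereForm_zero_sphereLaplacian_self_nonneg {U : SmoothFn n} (hU : U ∈ testIdeal n) :
    0 ≤ sphereForm 0 U (sphereLaplacian U) := by
  rw [sphereForm_zero_sphereLaplacian hU]
  refine totalIntegral_nonneg fun x => mul_nonneg (weight_pos _ x).le ?_
  rw [SmoothFn.sum_apply]
  exact Finset.sum_nonneg fun i _ => mul_self_nonneg (partialDeriv i U x)

/-- The energies `⟨U, P_{2k} (-Δ)ʲ U⟩`, on which the gap estimates are proved by induction. -/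
noncomputable def sphereEnergy (k j : ℕ) (U : SmoothFn n) : ℝ :=
  sphereForm k U ((sphereLaplacian ^ j) U)

lemma sphereEnergy_zero_right (k : ℕ) (U : SmoothFn n) :
    sphereEnergy k 0 U = sphereForm k U U := rfl

lemma sphereEnergy_succ (k j : ℕ) {U : SmoothFn n} (hU : U ∈ testIdeal n) :
    sphereEnergy (k + 1) j U =
      sphereEnergy k (j + 1) U + gjmsFactor n (k + 1) * sphereEnergy k j U := by
  rw [sphereEnergy, sphereForm_succ, sphereForm_add_right k hU, sphereForm_smul_right,
    ← Module.End.mul_apply, ← pow_succ', sphereEnergy, sphereEnergy]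

lemma sphereEnergy_zero_nonneg (j : ℕ) {U : SmoothFn n} (hU : U ∈ testIdeal n) :
    0 ≤ sphereEnergy 0 j U := by
  have hpow := fun m => sphereLaplacian_pow_mem_testIdeal m hU
  unfold sphereEnergy
  rcases Nat.even_or_odd' j with ⟨m, rfl | rfl⟩
  · rw [two_mul, pow_add, Module.End.mul_apply, sphereForm_zero_sphereLaplacian_pow m hU (hpow m)]
    exact sphereForm_zero_self_nonneg _
  · rw [two_mul, add_assoc, pow_add, pow_succ', Module.End.mul_apply, Module.End.mul_apply,
      sphereForm_zero_sphereLaplacian_pow m hU (sphereLaplacian_mem_testIdeal (hpow m))]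
    exact sphereForm_zero_sphereLaplacian_self_nonneg (hpow m)

/-- The value `∏ ℓ ≤ k, (n + 2ℓ - 2)(n - 2ℓ) / 4` of the GJMS operator `P_{2k}` at the constant
function `1`. -/
noncomputable def gjmsConst (n k : ℕ) : ℝ := ∏ ℓ ∈ Finset.Icc 1 k, gjmsFactor n ℓ

lemma gjmsConst_zero (n : ℕ) : gjmsConst n 0 = 1 := rfl

lemma gjmsConst_succ (n k : ℕ) : gjmsConst n (k + 1) = gjmsConst n k * gjmsFactor n (k + 1) :=
  Finset.prod_Icc_succ_top (Nat.le_add_left 1 k) _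

lemma gjmsFactor_pos {ℓ : ℕ} (hℓ : 1 ≤ ℓ) (hn : 2 * ℓ < n) : 0 < gjmsFactor n ℓ := by
  have hℓ' : (1 : ℝ) ≤ ℓ := by exact_mod_cast hℓ
  have hn' : 2 * (ℓ : ℝ) < n := by exact_mod_cast hn
  exact div_pos (mul_pos (by linarith) (by linarith)) (by norm_num)

lemma gjmsConst_pos {k : ℕ} (hn : 2 * k < n) : 0 < gjmsConst n k :=
  Finset.prod_pos fun ℓ hℓ => by
    rw [Finset.mem_Icc] at hℓ
    exact gjmsFactor_pos hℓ.1 (by omega)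

lemma gjmsConst_mul_sphereEnergy_le {k : ℕ} (hn : 2 * k < n) (j : ℕ) {U : SmoothFn n}
    (hU : U ∈ testIdeal n) : gjmsConst n k * sphereEnergy 0 j U ≤ sphereEnergy k j U := by
  induction k generalizing j with
  | zero => rw [gjmsConst_zero, one_mul]
  | succ k ih =>
    rw [sphereEnergy_succ _ _ hU, gjmsConst_succ]
    have hsucc_nonneg : 0 ≤ sphereEnergy k (j + 1) U :=
      (mul_nonneg (gjmsConst_pos (by omega)).le (sphereEnergy_zero_nonneg _ hU)).trans
        (ih (by omega) (j + 1))
    have hmul := mul_le_mul_of_nonneg_left (ih (by omega) j)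
      (gjmsFactor_pos (n := n) (ℓ := k + 1) (by omega) hn).le
    linarith

lemma sphereEnergy_nonneg {k : ℕ} (hn : 2 * k < n) (j : ℕ) {U : SmoothFn n}
    (hU : U ∈ testIdeal n) : 0 ≤ sphereEnergy k j U :=
  (mul_nonneg (gjmsConst_pos hn).le (sphereEnergy_zero_nonneg j hU)).trans
    (gjmsConst_mul_sphereEnergy_le hn j hU)

lemma energy_self_nonneg {k : ℕ} (hn : 2 * k < n) {v : SmoothFn n} (hv : v ∈ testIdeal n) :
    0 ≤ energy k v v := by
  have h := sphereEnergy_nonneg hn 0 (Ideal.mul_mem_left _ (weight (-confExp n k)) hv)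
  rwa [sphereEnergy_zero_right, sphereForm, weight_mul_weight_neg_mul] at h

/-- The form `⟨U, P_{2k} V⟩ - Λ ⟨U, V⟩`, with `Λ` the lowest eigenvalue of `P_{2k}`. -/
noncomputable def gapForm (n k : ℕ) : LinearMap.BilinForm ℝ (testIdeal n) :=
  LinearMap.mk₂ ℝ (fun U V => sphereForm k (U : SmoothFn n) V
      - gjmsConst n k * sphereForm 0 (U : SmoothFn n) V)
    (fun U U' V => by
      rw [sphereForm_comm k (U + U').2, sphereForm_comm 0 (U + U').2, Submodule.coe_add,
        sphereForm_add_right k V.2, sphereForm_add_right 0 V.2, sphereForm_comm k V.2,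
        sphereForm_comm k V.2, sphereForm_comm 0 V.2, sphereForm_comm 0 V.2]
      ring)
    (fun c U V => by
      rw [sphereForm_comm k (c • U).2, sphereForm_comm 0 (c • U).2, Submodule.coe_smul_of_tower,
        sphereForm_smul_right, sphereForm_smul_right, sphereForm_comm k V.2,
        sphereForm_comm 0 V.2, smul_eq_mul]
      ring)
    (fun U V V' => by
      rw [Submodule.coe_add, sphereForm_add_right k U.2, sphereForm_add_right 0 U.2]
      ring)
    (fun c U V => by
      rw [Submodule.coe_smul_of_tower, sphereForm_smul_right, sphereForm_smul_right, smul_eq_mul]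
      ring)

lemma gapForm_apply (k : ℕ) (U V : testIdeal n) :
    gapForm n k U V = sphereForm k (U : SmoothFn n) V
      - gjmsConst n k * sphereForm 0 (U : SmoothFn n) V := rfl

lemma gapForm_self_nonneg {k : ℕ} (hn : 2 * k < n) (U : testIdeal n) : 0 ≤ gapForm n k U U :=
  sub_nonneg.2 (gjmsConst_mul_sphereEnergy_le hn 0 U.2)

lemma gapForm_sq_le {k : ℕ} (hn : 2 * k < n) (U V : testIdeal n) :
    gapForm n k U V ^ 2 ≤ gapForm n k U U * gapForm n k V V := by
  have hsymm : LinearMap.IsSymm (gapForm n k) := ⟨fun U V => by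
    rw [RingHom.id_apply, gapForm_apply, sphereForm_comm k U.2, sphereForm_comm 0 U.2,
      gapForm_apply]⟩
  have hnonneg : ∀ W : testIdeal n, 0 ≤ gapForm n k W W := gapForm_self_nonneg hn
  exact LinearMap.BilinForm.apply_sq_le_of_symm (gapForm n k) hnonneg hsymm U V

lemma exists_gapForm_self_le {k : ℕ} (hn : 2 * (k + 1) < n) :
    ∃ C : ℝ, 0 ≤ C ∧ ∀ U : testIdeal n, gapForm n (k + 1) U U ≤ C * sphereEnergy k 1 U.1 := by
  simp only [gapForm_apply, ← sphereEnergy_zero_right]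
  induction k with
  | zero =>
    refine ⟨1, zero_le_one, fun U => le_of_eq ?_⟩
    rw [sphereEnergy_succ _ _ U.2, gjmsConst_succ, gjmsConst_zero]
    ring
  | succ k ih =>
    obtain ⟨C, hC, hgap⟩ := ih (by omega)
    have hc : 0 < gjmsFactor n (k + 1) := gjmsFactor_pos (by omega) (by omega)
    have hc' : 0 < gjmsFactor n (k + 1 + 1) := gjmsFactor_pos (by omega) (by omega)
    refine ⟨1 + gjmsFactor n (k + 1 + 1) * (C / gjmsFactor n (k + 1)), by positivity, fun U => ?_⟩
    have hsucc : gjmsFactor n (k + 1) * sphereEnergy k 1 U.1 ≤ sphereEnergy (k + 1) 1 U.1 := by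
      rw [sphereEnergy_succ k 1 U.2]
      exact le_add_of_nonneg_left (sphereEnergy_nonneg (by omega) 2 U.2)
    have hchain : C * sphereEnergy k 1 U.1 ≤
        C / gjmsFactor n (k + 1) * sphereEnergy (k + 1) 1 U.1 := by
      calc C * sphereEnergy k 1 U.1
          = C / gjmsFactor n (k + 1) * (gjmsFactor n (k + 1) * sphereEnergy k 1 U.1) := by
            field_simp
        _ ≤ _ := by gcongr
    have hmul := mul_le_mul_of_nonneg_left ((hgap U).trans hchain) hc'.le
    rw [sphereEnergy_succ _ _ U.2, gjmsConst_succ]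
    linarith

lemma sum_energy_sphereCoord_mul (k : ℕ) {v : SmoothFn n} (hv : v ∈ testIdeal n) :
    ∑ i, energy (k + 1) (sphereCoord i * v) (sphereCoord i * v)
      = energy (k + 1) v v
        + ((k + 1) * (n + 2 * k) : ℝ) * energy k (weight 1 * v) (weight 1 * v) := by
  have hmem : ∀ f : SmoothFn n, v * f ∈ testIdeal n := fun f => Ideal.mul_mem_right _ _ hv
  have h := congrArg (fun f => totalIntegral (v * f)) (sum_sphereCoord_mul_negLaplacian_pow k v)
  rw [mul_add, Finset.mul_sum, mul_smul_comm, totalIntegral_sum _ _ fun i _ => hmem _,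
    totalIntegral_add (hmem _) (smul_mem_testIdeal _ (hmem _)), totalIntegral_smul] at h
  simpa only [energy, mul_comm _ v, mul_assoc, mul_left_comm v] using h

/-! ### The Sobolev inequality without sharp constant -/

/-- The critical Sobolev exponent `2n / (n - 2k)`. -/
noncomputable def critExp (n k : ℕ) : ℝ := 2 * n / (n - 2 * k)

lemma confExp_pos {k : ℕ} (hn : 2 * k < n) : 0 < confExp n k := by
  have hn' : 2 * (k : ℝ) < n := by exact_mod_cast hn
  exact div_pos (by linarith) two_pos

lemma critExp_mul_confExp {k : ℕ} (hn : 2 * k < n) : critExp n k * confExp n k = n := by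
  have hn' : 2 * (k : ℝ) < n := by exact_mod_cast hn
  have hne : (n : ℝ) - 2 * k ≠ 0 := by linarith
  unfold critExp confExp
  field_simp

lemma critExp_pos {k : ℕ} (hn : 2 * k < n) : 0 < critExp n k := by
  have hn' : 2 * (k : ℝ) < n := by exact_mod_cast hn
  have : (0 : ℝ) ≤ k := k.cast_nonneg
  exact div_pos (by linarith) (by linarith)

lemma two_le_critExp {k : ℕ} (hn : 2 * k < n) : 2 ≤ critExp n k := by
  have hn' : 2 * (k : ℝ) < n := by exact_mod_cast hn
  have : (0 : ℝ) ≤ k := k.cast_nonneg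
  rw [critExp, le_div_iff₀ (by linarith)]
  linarith

lemma two_lt_critExp {k : ℕ} (hk : 1 ≤ k) (hn : 2 * k < n) : 2 < critExp n k := by
  have hn' : 2 * (k : ℝ) < n := by exact_mod_cast hn
  have hk' : (1 : ℝ) ≤ k := by exact_mod_cast hk
  rw [critExp, lt_div_iff₀ (by linarith)]
  linarith

lemma inv_critExp_succ {k : ℕ} (hn : 2 * (k + 1) < n) :
    (critExp n (k + 1))⁻¹ = (critExp n k)⁻¹ - (n : ℝ)⁻¹ := by
  have hn' : (n : ℝ) ≠ 0 := by
    rw [Nat.cast_ne_zero]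
    omega
  rw [critExp, critExp, inv_div, inv_div, Nat.cast_succ]
  field_simp
  ring

lemma fderiv_apply_eq_sum (f : SmoothFn n) (x y : Euc n) :
    fderiv ℝ f x y = ∑ i, y i * partialDeriv i f x := by
  have hy : y = ∑ i, y i • EuclideanSpace.single i (1 : ℝ) := by
    simpa using ((EuclideanSpace.basisFun (Fin n) ℝ).sum_repr y).symm
  conv_lhs => rw [hy, map_sum]
  simp only [map_smul, smul_eq_mul, partialDeriv_apply]

lemma norm_fderiv_le_sum (f : SmoothFn n) (x : Euc n) :
    ‖fderiv ℝ f x‖ ≤ ∑ i, |partialDeriv i f x| := by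
  refine ContinuousLinearMap.opNorm_le_bound _ (Finset.sum_nonneg fun i _ => abs_nonneg _)
    fun y => ?_
  rw [fderiv_apply_eq_sum, Real.norm_eq_abs, Finset.sum_mul]
  refine (Finset.abs_sum_le_sum_abs _ _).trans (Finset.sum_le_sum fun i _ => ?_)
  rw [abs_mul, mul_comm]
  gcongr
  exact PiLp.norm_apply_le y i

lemma exists_eLpNorm_le_sum_eLpNorm_partialDeriv {p p' : ℝ≥0} (hn : 0 < n) (hp : 1 ≤ p)
    (hp' : (p' : ℝ)⁻¹ = (p : ℝ)⁻¹ - (n : ℝ)⁻¹) :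
    ∃ C : ℝ≥0, ∀ v ∈ testIdeal n,
      eLpNorm v p' volume ≤ C * ∑ i, eLpNorm (partialDeriv i v) p volume := by
  refine ⟨SNormLESNormFDerivOfEqConst ℝ (volume : Measure (Euc n)) p, fun v hv => ?_⟩
  have hsobolev := eLpNorm_le_eLpNorm_fderiv_of_eq (μ := (volume : Measure (Euc n))) (u := v)
    (p' := p') (v.contDiff.of_le (by simp)) hv hp (by rwa [finrank_euclideanSpace_fin])
    (by rwa [finrank_euclideanSpace_fin, NNReal.coe_inv])
  refine hsobolev.trans (mul_le_mul_right ?_ _)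
  calc eLpNorm (fderiv ℝ v) p volume
      ≤ eLpNorm (∑ i, fun x => ‖partialDeriv i v x‖) p volume :=
        eLpNorm_mono_real fun x => by
          rw [Finset.sum_apply]
          exact norm_fderiv_le_sum v x
    _ ≤ ∑ i, eLpNorm (fun x => ‖partialDeriv i v x‖) p volume :=
        eLpNorm_sum_le (fun i _ => (partialDeriv i v).continuous.norm.aestronglyMeasurable)
          (by exact_mod_cast hp)
    _ = ∑ i, eLpNorm (partialDeriv i v) p volume :=
        Finset.sum_congr rfl fun i _ => eLpNorm_norm _

lemma energy_succ_self (k : ℕ) {v : SmoothFn n} (hv : v ∈ testIdeal n) :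
    energy (k + 1) v v = ∑ i, energy k (partialDeriv i v) (partialDeriv i v) := by
  rw [energy, negLaplacian_pow_succ, totalIntegral_mul_negLaplacian hv, totalIntegral_sum _ _
    fun i _ => Ideal.mul_mem_right _ _ (partialDeriv_mem_testIdeal i hv)]
  simp only [energy, negLaplacian_pow_partialDeriv]

lemma memLp_of_mem_testIdeal {v : SmoothFn n} (hv : v ∈ testIdeal n) (p : ℝ≥0∞) :
    MemLp v p volume :=
  v.continuous.memLp_of_hasCompactSupport hv

lemma eLpNorm_two_eq_sqrt_energy {v : SmoothFn n} (hv : v ∈ testIdeal n) :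
    eLpNorm v 2 volume = ENNReal.ofReal √(energy 0 v v) := by
  rw [(memLp_of_mem_testIdeal hv 2).eLpNorm_eq_integral_rpow_norm two_ne_zero ENNReal.ofNat_ne_top,
    Real.sqrt_eq_rpow]
  simp [energy, totalIntegral, ← pow_two]

lemma exists_eLpNorm_critExp_le {k : ℕ} (hn : 2 * k < n) :
    ∃ C : ℝ≥0, ∀ v ∈ testIdeal n,
      eLpNorm v (critExp n k).toNNReal volume ≤ C * ENNReal.ofReal √(energy k v v) := by
  induction k with
  | zero =>
    refine ⟨1, fun v hv => ?_⟩
    have hn' : (n : ℝ) ≠ 0 := by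
      rw [Nat.cast_ne_zero]
      omega
    have hcrit : critExp n 0 = 2 := by
      rw [critExp]
      simp [hn']
    simp [hcrit, eLpNorm_two_eq_sqrt_energy hv]
  | succ k ih =>
    obtain ⟨C, hC⟩ := ih (by omega)
    have hcrit : 2 ≤ critExp n k := two_le_critExp (by omega)
    obtain ⟨K, hK⟩ := exists_eLpNorm_le_sum_eLpNorm_partialDeriv (n := n)
      (p := (critExp n k).toNNReal) (p' := (critExp n (k + 1)).toNNReal) (by omega)
      (Real.one_le_toNNReal.2 (by linarith)) (by
        rw [Real.coe_toNNReal _ (critExp_pos hn).le, Real.coe_toNNReal _ (by linarith),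
          inv_critExp_succ hn])
    refine ⟨K * (n * C), fun v hv => ?_⟩
    have hpartial : ∀ i ∈ Finset.univ,
        eLpNorm (partialDeriv i v) (critExp n k).toNNReal volume ≤
          C * ENNReal.ofReal √(energy (k + 1) v v) := fun i _ => by
      refine (hC _ (partialDeriv_mem_testIdeal i hv)).trans ?_
      gcongr
      rw [energy_succ_self k hv]
      exact Finset.single_le_sum (f := fun i => energy k (partialDeriv i v) (partialDeriv i v))
        (fun j _ => energy_self_nonneg (by omega) (partialDeriv_mem_testIdeal j hv))
        (Finset.mem_univ i)
    calc eLpNorm v (critExp n (k + 1)).toNNReal volume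
        ≤ K * ∑ i, eLpNorm (partialDeriv i v) (critExp n k).toNNReal volume := hK v hv
      _ ≤ K * ∑ _i : Fin n, C * ENNReal.ofReal √(energy (k + 1) v v) := by
          gcongr with i hi
          exact hpartial i hi
      _ = _ := by simp [mul_assoc]

lemma exists_rpow_integral_critExp_le {k : ℕ} (hn : 2 * k < n) :
    ∃ C : ℝ, 0 ≤ C ∧ ∀ v ∈ testIdeal n,
      (∫ x, |v x| ^ critExp n k) ^ (2 / critExp n k) ≤ C * energy k v v := by
  obtain ⟨C, hC⟩ := exists_eLpNorm_critExp_le hn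
  have hQ := critExp_pos hn
  refine ⟨C ^ 2, by positivity, fun v hv => ?_⟩
  have hint : 0 ≤ ∫ x, |v x| ^ critExp n k := integral_nonneg fun x => by positivity
  have hroot : (∫ x, |v x| ^ critExp n k) ^ (critExp n k)⁻¹ ≤ C * √(energy k v v) := by
    have h := hC v hv
    rwa [(memLp_of_mem_testIdeal hv _).eLpNorm_eq_integral_rpow_norm (by simpa using hQ) (by simp),
      ENNReal.coe_toReal, Real.coe_toNNReal _ hQ.le, ← ENNReal.ofReal_coe_nnreal,
      ← ENNReal.ofReal_mul (by positivity), ENNReal.ofReal_le_ofReal_iff (by positivity)] at h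
  calc (∫ x, |v x| ^ critExp n k) ^ (2 / critExp n k)
      = ((∫ x, |v x| ^ critExp n k) ^ (critExp n k)⁻¹) ^ 2 := by
        rw [← Real.rpow_natCast, ← Real.rpow_mul hint, Nat.cast_ofNat, inv_mul_eq_div]
    _ ≤ (C * √(energy k v v)) ^ 2 := by gcongr
    _ = C ^ 2 * energy k v v := by rw [mul_pow, Real.sq_sqrt (energy_self_nonneg hn hv)]

/-! ### Translations and dilations -/

/-- The composition of a smooth function with the affine map `x ↦ r x + z`. -/
noncomputable def affineComp (r : ℝ) (z : Euc n) (f : SmoothFn n) : SmoothFn n :=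
  ⟨fun x => f (r • x + z), show ContDiff ℝ ∞ (fun x : Euc n => f (r • x + z)) from
    f.contDiff.comp (by fun_prop)⟩

lemma affineComp_apply (r : ℝ) (z : Euc n) (f : SmoothFn n) (x : Euc n) :
    affineComp r z f x = f (r • x + z) := rfl

lemma affineComp_mem_testIdeal {r : ℝ} (hr : r ≠ 0) (z : Euc n) {f : SmoothFn n}
    (hf : f ∈ testIdeal n) : affineComp r z f ∈ testIdeal n :=
  HasCompactSupport.comp_isClosedEmbedding hf
    ((Homeomorph.smulOfNeZero r hr).trans (Homeomorph.addRight z)).isClosedEmbedding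

lemma partialDeriv_affineComp (i : Fin n) (r : ℝ) (z : Euc n) (f : SmoothFn n) :
    partialDeriv i (affineComp r z f) = r • affineComp r z (partialDeriv i f) := by
  ext x
  have haff : HasFDerivAt (fun x : Euc n => r • x + z) (r • ContinuousLinearMap.id ℝ (Euc n)) x :=
    ((hasFDerivAt_id x).const_smul r).add_const z
  have hcomp : HasFDerivAt (affineComp r z f) _ x :=
    HasFDerivAt.comp (g := f) x (f.differentiable (r • x + z)).hasFDerivAt haff
  rw [partialDeriv_apply, hcomp.fderiv]
  simp [affineComp_apply, partialDeriv_apply]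

lemma negLaplacian_affineComp (r : ℝ) (z : Euc n) (f : SmoothFn n) :
    negLaplacian (affineComp r z f) = r ^ 2 • affineComp r z (negLaplacian f) := by
  simp only [negLaplacian_eq, partialDeriv_affineComp, Derivation.map_smul]
  ext x
  simp only [SmoothFn.neg_apply, SmoothFn.sum_apply, SmoothFn.smul_apply, affineComp_apply,
    mul_neg, Finset.mul_sum]
  ring_nf

lemma negLaplacian_pow_affineComp (k : ℕ) (r : ℝ) (z : Euc n) (f : SmoothFn n) :
    (negLaplacian ^ k) (affineComp r z f) =
      r ^ (2 * k) • affineComp r z ((negLaplacian ^ k) f) := by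
  induction k with
  | zero => simp
  | succ k ih =>
    rw [negLaplacian_pow_succ, ih, map_smul, negLaplacian_affineComp, smul_smul,
      negLaplacian_pow_succ]
    ring_nf

lemma integral_comp_smul_add {r : ℝ} (hr : 0 < r) (z : Euc n) (f : Euc n → ℝ) :
    ∫ x, f (r • x + z) = (r ^ n)⁻¹ * ∫ x, f x := by
  rw [Measure.integral_comp_smul volume (fun x => f (x + z)) r, integral_add_right_eq_self,
    finrank_euclideanSpace_fin, abs_of_pos (by positivity), smul_eq_mul]

lemma energy_affineComp_self (k : ℕ) {r : ℝ} (hr : 0 < r) (z : Euc n) (f : SmoothFn n) :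
    energy k (affineComp r z f) (affineComp r z f) = r ^ (2 * k) * (r ^ n)⁻¹ * energy k f f := by
  rw [energy, negLaplacian_pow_affineComp, mul_smul_comm, totalIntegral_smul, mul_assoc]
  congr 1
  exact integral_comp_smul_add hr z (f * (negLaplacian ^ k) f : SmoothFn n)

/-! ### The volume of the sphere -/

lemma integrable_weight (hn : 0 < n) : Integrable (weight (n : ℝ) : Euc n → ℝ) := by
  have h := integrable_rpow_neg_one_add_norm_sq (E := Euc n) (μ := volume) (r := 2 * n) (by
    have hn' : (0 : ℝ) < n := by exact_mod_cast hn
    rw [finrank_euclideanSpace_fin]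
    linarith)
  refine (h.const_mul (2 ^ (n : ℝ))).congr (Eventually.of_forall fun x => ?_)
  dsimp only
  rw [weight_apply, Real.div_rpow two_pos.le (by positivity), neg_div,
    mul_div_cancel_left₀ _ two_ne_zero, Real.rpow_neg (by positivity), div_eq_mul_inv]

/-- The volume of the round unit `n`-sphere, computed in stereographic coordinates. -/
noncomputable def sphereVol (n : ℕ) : ℝ := ∫ x : Euc n, weight n x

lemma sphereVol_pos (hn : 0 < n) : 0 < sphereVol n :=
  integral_pos_of_integrable_nonneg_nonzero (x := 0) (weight (n : ℝ)).continuous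
    (integrable_weight hn) (fun x => (weight_pos _ x).le) (weight_pos _ _).ne'

lemma lintegral_ofReal_of_integral_eq {α : Type*} [MeasurableSpace α] {μ : Measure α} {g : α → ℝ}
    {c : ℝ} (hg : 0 ≤ᵐ[μ] g) (h : ∫ x, g x ∂μ = c) (hc : c ≠ 0) :
    ∫⁻ x, ENNReal.ofReal (g x) ∂μ = ENNReal.ofReal c := by
  rw [← ofReal_integral_eq_lintegral_ofReal (.of_integral_ne_zero (h.trans_ne hc)) hg, h]

lemma setLIntegral_Ioi_rpow_mul_exp {s b : ℝ} (c : ℝ) (hs : 0 < s) (hb : 0 < b) (hc : 0 < c) :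
    ∫⁻ t in Set.Ioi (0 : ℝ), ENNReal.ofReal (c * (t ^ (s - 1) * Real.exp (-(b * t)))) =
      ENNReal.ofReal (c * ((1 / b) ^ s * Real.Gamma s)) := by
  have := Real.Gamma_pos_of_pos hs
  refine lintegral_ofReal_of_integral_eq ?_ ?_ (by positivity)
  · filter_upwards [ae_restrict_mem measurableSet_Ioi] with t ht
    rw [Set.mem_Ioi] at ht
    simp only [Pi.zero_apply]
    positivity
  · rw [integral_const_mul, Real.integral_rpow_mul_exp_neg_mul_Ioi hs hb]

lemma lintegral_rpow_mul_exp_one_add_norm_sq {t : ℝ} (ht : 0 < t) :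
    ∫⁻ x : Euc n, ENNReal.ofReal (t ^ ((n : ℝ) - 1) * Real.exp (-((1 + ‖x‖ ^ 2) * t))) =
      ENNReal.ofReal (π ^ ((n : ℝ) / 2) * (t ^ ((n : ℝ) / 2 - 1) * Real.exp (-(1 * t)))) := by
  refine lintegral_ofReal_of_integral_eq (Eventually.of_forall fun x => by positivity) ?_
    (by positivity)
  have hfactor : ∀ x : Euc n, t ^ ((n : ℝ) - 1) * Real.exp (-((1 + ‖x‖ ^ 2) * t)) =
      t ^ ((n : ℝ) - 1) * Real.exp (-t) * Real.exp (-t * ‖x‖ ^ 2) := fun x => by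
    rw [mul_assoc, ← Real.exp_add]
    ring_nf
  have hpow : t ^ ((n : ℝ) - 1) = t ^ ((n : ℝ) / 2 - 1) * t ^ ((n : ℝ) / 2) := by
    rw [← Real.rpow_add ht]
    ring_nf
  simp only [hfactor]
  rw [integral_const_mul, GaussianFourier.integral_rexp_neg_mul_sq_norm ht,
    finrank_euclideanSpace_fin, Real.div_rpow Real.pi_pos.le ht.le, one_mul, hpow]
  field_simp

/-- Both sides are `2ⁿ ∫∫ tⁿ⁻¹ exp(-(1 + |x|²) t) dt dx`, integrated in the two possible orders. -/
lemma sphereVol_mul_Gamma (hn : 0 < n) :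
    sphereVol n * Real.Gamma n = 2 ^ (n : ℝ) * π ^ ((n : ℝ) / 2) * Real.Gamma ((n : ℝ) / 2) := by
  have hn' : (0 : ℝ) < n := by exact_mod_cast hn
  have hGamma := Real.Gamma_pos_of_pos hn'
  have := Real.Gamma_pos_of_pos (half_pos hn')
  have hvol := sphereVol_pos hn
  have hinner : ∀ x : Euc n,
      ∫⁻ t in Set.Ioi (0 : ℝ), ENNReal.ofReal (t ^ ((n : ℝ) - 1) * Real.exp (-((1 + ‖x‖ ^ 2) * t)))
        = ENNReal.ofReal (2 ^ (-(n : ℝ)) * Real.Gamma n * weight n x) := fun x => by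
    have h := setLIntegral_Ioi_rpow_mul_exp (b := 1 + ‖x‖ ^ 2) 1 hn' (by positivity) one_pos
    simp only [one_mul] at h
    rw [h, weight_apply, Real.div_rpow two_pos.le (by positivity), Real.div_rpow one_pos.le
      (by positivity), Real.rpow_neg two_pos.le, Real.one_rpow]
    field_simp
  have hswap := lintegral_lintegral_swap (μ := (volume : Measure (Euc n)))
    (ν := volume.restrict (Set.Ioi (0 : ℝ)))
    (f := fun x t => ENNReal.ofReal (t ^ ((n : ℝ) - 1) * Real.exp (-((1 + ‖x‖ ^ 2) * t)))) (by
      unfold Function.uncurry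
      fun_prop)
  rw [lintegral_congr hinner, setLIntegral_congr_fun measurableSet_Ioi fun t ht =>
      lintegral_rpow_mul_exp_one_add_norm_sq ht,
    setLIntegral_Ioi_rpow_mul_exp _ (half_pos hn') one_pos (by positivity),
    lintegral_ofReal_of_integral_eq (c := 2 ^ (-(n : ℝ)) * Real.Gamma n * sphereVol n)
      (Eventually.of_forall fun x =>
        (mul_pos (mul_pos (by positivity) hGamma) (weight_pos _ x)).le)
      (integral_const_mul _ _) (by positivity),
    ENNReal.ofReal_eq_ofReal_iff (by positivity) (by positivity), div_one, Real.one_rpow,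
    one_mul] at hswap
  rw [mul_assoc, ← hswap, Real.rpow_neg two_pos.le]
  field_simp

lemma sphereVol_eq (hn : 0 < n) :
    sphereVol n = 2 * π ^ (((n : ℝ) + 1) / 2) / Real.Gamma (((n : ℝ) + 1) / 2) := by
  have hn' : (0 : ℝ) < n := by exact_mod_cast hn
  have hGamma := Real.Gamma_pos_of_pos hn'
  have hGamma' : 0 < Real.Gamma (((n : ℝ) + 1) / 2) := Real.Gamma_pos_of_pos (by positivity)
  have hduplication : Real.Gamma ((n : ℝ) / 2) * Real.Gamma (((n : ℝ) + 1) / 2) =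
      Real.Gamma n * (2 / 2 ^ (n : ℝ)) * √π := by
    have h := Real.Gamma_mul_Gamma_add_half ((n : ℝ) / 2)
    rwa [mul_div_cancel₀ _ two_ne_zero, ← add_div, Real.rpow_sub two_pos, Real.rpow_one] at h
  have hpi : π ^ (((n : ℝ) + 1) / 2) = π ^ ((n : ℝ) / 2) * √π := by
    rw [Real.sqrt_eq_rpow, ← Real.rpow_add Real.pi_pos, add_div]
  rw [eq_div_iff hGamma'.ne']
  refine mul_right_cancel₀ hGamma.ne' ?_
  calc sphereVol n * Real.Gamma (((n : ℝ) + 1) / 2) * Real.Gamma n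
      = sphereVol n * Real.Gamma n * Real.Gamma (((n : ℝ) + 1) / 2) := by ring
    _ = 2 ^ (n : ℝ) * π ^ ((n : ℝ) / 2) *
          (Real.Gamma ((n : ℝ) / 2) * Real.Gamma (((n : ℝ) + 1) / 2)) := by
        rw [sphereVol_mul_Gamma hn]
        ring
    _ = 2 * π ^ (((n : ℝ) + 1) / 2) * Real.Gamma n := by
        rw [hduplication, hpi]
        field_simp

/-! ### Subcritical norms on the sphere -/

/-- The exponent for which `∫ |v| ^ q * weight (subcritExp n k q)` is the `q`-th power of the
`L^q` norm on the sphere of the function corresponding to `v` under stereographic projection. -/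
noncomputable def subcritExp (n k : ℕ) (q : ℝ) : ℝ := n - q * confExp n k

/-- The density, with respect to Lebesgue measure, of the `q`-th power of the function on the
sphere corresponding to `v`. -/
noncomputable def density (k : ℕ) (q : ℝ) (v : SmoothFn n) (x : Euc n) : ℝ :=
  |v x| ^ q * weight (subcritExp n k q) x

/-- The `q`-th power of the `L^q` norm on the sphere of the function corresponding to `v`. -/
noncomputable def qMass (k : ℕ) (q : ℝ) (v : SmoothFn n) : ℝ := ∫ x, density k q v x

/-- The moment of `g` with respect to the measure with density `density k q v`. -/
noncomputable def moment (k : ℕ) (q : ℝ) (v : SmoothFn n) (g : Euc n → ℝ) : ℝ :=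
  ∫ x, g x * density k q v x

lemma subcritExp_eq {k : ℕ} (hn : 2 * k < n) (q : ℝ) :
    subcritExp n k q = (critExp n k - q) * confExp n k := by
  rw [subcritExp, sub_mul, critExp_mul_confExp hn]

lemma density_nonneg (k : ℕ) (q : ℝ) (v : SmoothFn n) (x : Euc n) : 0 ≤ density k q v x :=
  mul_nonneg (by positivity) (weight_pos _ x).le

lemma qMass_nonneg (k : ℕ) (q : ℝ) (v : SmoothFn n) : 0 ≤ qMass k q v :=
  integral_nonneg (density_nonneg k q v)

lemma continuous_density {k : ℕ} {q : ℝ} (hq : 0 < q) (v : SmoothFn n) :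
    Continuous (density k q v) :=
  (v.continuous.abs.rpow_const fun _ => Or.inr hq.le).mul (weight _).continuous

lemma hasCompactSupport_density {k : ℕ} {q : ℝ} (hq : 0 < q) {v : SmoothFn n}
    (hv : v ∈ testIdeal n) : HasCompactSupport (density k q v) :=
  HasCompactSupport.mono hv fun x hx hvx => hx (by
    simp [density, hvx, Real.zero_rpow hq.ne'])

lemma integrable_mul_density {k : ℕ} {q : ℝ} (hq : 0 < q) {v : SmoothFn n} (hv : v ∈ testIdeal n)
    {g : Euc n → ℝ} (hg : Continuous g) : Integrable (fun x => g x * density k q v x) :=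
  (hg.mul (continuous_density hq v)).integrable_of_hasCompactSupport
    (hasCompactSupport_density hq hv).mul_left

lemma integrable_density {k : ℕ} {q : ℝ} (hq : 0 < q) {v : SmoothFn n} (hv : v ∈ testIdeal n) :
    Integrable (density k q v) :=
  (continuous_density hq v).integrable_of_hasCompactSupport (hasCompactSupport_density hq hv)

lemma density_smul (k : ℕ) (q c : ℝ) (v : SmoothFn n) (x : Euc n) :
    density k q (c • v) x = |c| ^ q * density k q v x := by
  rw [density, density, SmoothFn.smul_apply, abs_mul, Real.mul_rpow (abs_nonneg _) (abs_nonneg _),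
    mul_assoc]

lemma qMass_smul (k : ℕ) (q c : ℝ) (v : SmoothFn n) :
    qMass k q (c • v) = |c| ^ q * qMass k q v := by
  simp only [qMass, density_smul]
  rw [integral_const_mul]

lemma density_weight_mul (k : ℕ) (q : ℝ) (V : SmoothFn n) (x : Euc n) :
    density k q (weight (confExp n k) * V) x = |V x| ^ q * weight n x := by
  have hweight : weight (n : ℝ) x = weight (confExp n k * q) x * weight (subcritExp n k q) x := by
    rw [← SmoothFn.mul_apply, weight_mul_weight, subcritExp]
    ring_nf
  rw [density, SmoothFn.mul_apply, abs_mul, abs_of_pos (weight_pos _ x),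
    Real.mul_rpow (weight_pos _ x).le (abs_nonneg _), weight_rpow, hweight]
  ring

lemma qMass_pos {k : ℕ} {q : ℝ} (hq : 0 < q) {v : SmoothFn n} (hv : v ∈ testIdeal n)
    {x : Euc n} (hx : v x ≠ 0) : 0 < qMass k q v :=
  integral_pos_of_integrable_nonneg_nonzero (continuous_density hq v) (integrable_density hq hv)
    (density_nonneg k q v) (x := x)
    (mul_pos (Real.rpow_pos_of_pos (abs_pos.2 hx) q) (weight_pos _ x)).ne'

lemma qMass_rpow_inv {k : ℕ} {q : ℝ} (hq : 0 < q) (v : SmoothFn n) :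
    qMass k q v ^ q⁻¹ = lpNorm (v * weight (subcritExp n k q / q) : SmoothFn n)
      (ENNReal.ofReal q) volume := by
  rw [lpNorm_eq_integral_norm_rpow_toReal (by simpa using hq) (by simp)
    (SmoothFn.continuous _).aestronglyMeasurable, ENNReal.toReal_ofReal hq.le]
  congr 1
  refine integral_congr_ae (Eventually.of_forall fun x => ?_)
  simp only [density]
  rw [SmoothFn.mul_apply, Real.norm_eq_abs, abs_mul, abs_of_pos (weight_pos _ x),
    Real.mul_rpow (abs_nonneg _) (weight_pos _ x).le, weight_rpow, div_mul_cancel₀ _ hq.ne']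

lemma qMass_add_rpow_inv_le {k : ℕ} {q : ℝ} (hq : 1 ≤ q) {u : SmoothFn n} (hu : u ∈ testIdeal n)
    (v : SmoothFn n) :
    qMass k q (u + v) ^ q⁻¹ ≤ qMass k q u ^ q⁻¹ + qMass k q v ^ q⁻¹ := by
  have hq0 : 0 < q := by linarith
  rw [qMass_rpow_inv hq0, qMass_rpow_inv hq0, qMass_rpow_inv hq0, add_mul]
  exact lpNorm_add_le (memLp_of_mem_testIdeal (Ideal.mul_mem_right _ _ hu) _) (by simpa using hq)

lemma memLp_rpow_of_mem_testIdeal {q : ℝ} (hq : 0 < q) {v : SmoothFn n} (hv : v ∈ testIdeal n)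
    (p : ℝ≥0∞) : MemLp (fun x => |v x| ^ q) p volume :=
  (v.continuous.abs.rpow_const fun _ => Or.inr hq.le).memLp_of_hasCompactSupport <|
    HasCompactSupport.mono hv fun x hx hvx => hx (by
      simp [hvx, Real.zero_rpow hq.ne'])

lemma qMass_le_rpow_integral_mul {k : ℕ} (hn : 2 * k < n) {q : ℝ} (hq : 0 < q)
    (hq' : q < critExp n k) {v : SmoothFn n} (hv : v ∈ testIdeal n) :
    qMass k q v ≤ (∫ x, |v x| ^ critExp n k) ^ (q / critExp n k) *
      sphereVol n ^ (1 - q / critExp n k) := by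
  have hQ := critExp_pos hn
  have hlt : 0 < 1 - q / critExp n k := by
    rw [sub_pos, div_lt_one hQ]
    exact hq'
  have hconj : (critExp n k / q).HolderConjugate (1 - q / critExp n k)⁻¹ := by
    rw [Real.holderConjugate_iff, lt_div_iff₀ hq, inv_inv, inv_div]
    constructor <;> linarith
  have hweight : ∀ x : Euc n, weight (subcritExp n k q) x ^ (1 - q / critExp n k)⁻¹ = weight n x :=
    fun x => by
      have : critExp n k - q ≠ 0 := by linarith
      rw [weight_rpow, subcritExp_eq hn, ← critExp_mul_confExp hn]
      field_simp
  have hmemLp : MemLp (weight (subcritExp n k q) : Euc n → ℝ)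
      (ENNReal.ofReal (1 - q / critExp n k)⁻¹) volume := by
    rw [← integrable_norm_rpow_iff (weight _).continuous.aestronglyMeasurable (by simpa using hlt)
      (by simp), ENNReal.toReal_ofReal (by positivity)]
    refine (integrable_weight (by omega)).congr (Eventually.of_forall fun x => ?_)
    simp only [Real.norm_of_nonneg (weight_pos _ x).le, hweight]
  have hholder := integral_mul_le_Lp_mul_Lq_of_nonneg (μ := (volume : Measure (Euc n))) hconj
    (Eventually.of_forall fun x => Real.rpow_nonneg (abs_nonneg (v x)) q)
    (Eventually.of_forall fun x => (weight_pos _ x).le) (memLp_rpow_of_mem_testIdeal hq hv _) hmemLp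
  have hpow : ∀ x, (|v x| ^ q) ^ (critExp n k / q) = |v x| ^ critExp n k := fun x => by
    rw [← Real.rpow_mul (abs_nonneg _), mul_div_cancel₀ _ hq.ne']
  simpa only [hweight, hpow, one_div, inv_div, inv_inv] using! hholder

/-- The constant is uniform in `q`, which lets the sharp constants be compared as `q → Q`. -/
lemma exists_mul_qMass_rpow_le_energy {k : ℕ} (hn : 2 * k < n) :
    ∃ S : ℝ, 0 < S ∧ ∀ q, 2 ≤ q → q < critExp n k → ∀ v ∈ testIdeal n,
      S * qMass k q v ^ (2 / q) ≤ energy k v v := by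
  obtain ⟨C, hC, hsobolev⟩ := exists_rpow_integral_critExp_le hn
  have hvol := sphereVol_pos (n := n) (by omega)
  have hQ := critExp_pos hn
  refine ⟨(C * max 1 (sphereVol n) + 1)⁻¹, by positivity, fun q hq hq' v hv => ?_⟩
  have hq0 : 0 < q := by linarith
  have henergy := energy_self_nonneg hn hv
  have hint : 0 ≤ ∫ x, |v x| ^ critExp n k := integral_nonneg fun x => by positivity
  have hexp : 0 ≤ 1 - q / critExp n k := by
    rw [sub_nonneg, div_le_one hQ]
    exact hq'.le
  have hvolpow : sphereVol n ^ ((1 - q / critExp n k) * (2 / q)) ≤ max 1 (sphereVol n) := by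
    have hle : (1 - q / critExp n k) * (2 / q) ≤ 1 :=
      mul_le_one₀ (by linarith [div_pos hq0 hQ]) (by positivity) ((div_le_one hq0).2 hq)
    calc sphereVol n ^ ((1 - q / critExp n k) * (2 / q))
        ≤ max 1 (sphereVol n) ^ ((1 - q / critExp n k) * (2 / q)) := by
          gcongr
          exact le_max_right _ _
      _ ≤ max 1 (sphereVol n) ^ (1 : ℝ) :=
          Real.rpow_le_rpow_of_exponent_le (le_max_left _ _) hle
      _ = max 1 (sphereVol n) := Real.rpow_one _
  rw [inv_mul_le_iff₀ (by positivity)]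
  calc qMass k q v ^ (2 / q)
      ≤ ((∫ x, |v x| ^ critExp n k) ^ (q / critExp n k) *
          sphereVol n ^ (1 - q / critExp n k)) ^ (2 / q) := by
        gcongr
        · exact qMass_nonneg k q v
        · exact qMass_le_rpow_integral_mul hn hq0 hq' hv
    _ = (∫ x, |v x| ^ critExp n k) ^ (2 / critExp n k) *
          sphereVol n ^ ((1 - q / critExp n k) * (2 / q)) := by
        rw [Real.mul_rpow (by positivity) (by positivity), ← Real.rpow_mul hint,
          ← Real.rpow_mul hvol.le]
        congr 2
        field_simp
    _ ≤ C * energy k v v * max 1 (sphereVol n) := by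
        gcongr
        exact hsobolev v hv
    _ ≤ (C * max 1 (sphereVol n) + 1) * energy k v v := by linarith

/-! ### Minimizing sequences for the subcritical problem -/

/-- The infimum of the energy over the test functions whose `L^q` norm on the sphere is `1`. -/
noncomputable def subcritConst (n k : ℕ) (q : ℝ) : ℝ :=
  sInf ((fun v : SmoothFn n => energy k v v) '' {v | v ∈ testIdeal n ∧ qMass k q v = 1})

/-- A minimizing sequence for `subcritConst n k q`. -/
structure IsMinimizingSeq (k : ℕ) (q : ℝ) (v : ℕ → SmoothFn n) : Prop where
  mem_testIdeal : ∀ j, v j ∈ testIdeal n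
  qMass_eq_one : ∀ j, qMass k q (v j) = 1
  tendsto_energy : Tendsto (fun j => energy k (v j) (v j)) atTop (𝓝 (subcritConst n k q))

section Minimization

variable {k : ℕ} {q : ℝ}

lemma subcritConst_le_energy (hn : 2 * k < n) {v : SmoothFn n} (hv : v ∈ testIdeal n)
    (hmass : qMass k q v = 1) : subcritConst n k q ≤ energy k v v :=
  csInf_le ⟨0, by
    rintro _ ⟨w, ⟨hw, -⟩, rfl⟩
    exact energy_self_nonneg hn hw⟩ ⟨v, ⟨hv, hmass⟩, rfl⟩

lemma qMass_rpow_smul_self (hq : 0 < q) {v : SmoothFn n} (hmass : 0 < qMass k q v) :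
    qMass k q (qMass k q v ^ (-q⁻¹) • v) = 1 := by
  rw [qMass_smul, abs_of_pos (by positivity), ← Real.rpow_mul hmass.le, neg_mul,
    inv_mul_cancel₀ hq.ne', Real.rpow_neg_one, inv_mul_cancel₀ hmass.ne']

lemma energy_smul_self (k : ℕ) (c : ℝ) (v : SmoothFn n) :
    energy k (c • v) (c • v) = c ^ 2 * energy k v v := by
  rw [energy_smul_left, energy_smul_right]
  ring

lemma subcritConst_mul_qMass_rpow_le (hn : 2 * k < n) (hq : 0 < q) {v : SmoothFn n}
    (hv : v ∈ testIdeal n) : subcritConst n k q * qMass k q v ^ (2 / q) ≤ energy k v v := by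
  rcases (qMass_nonneg k q v).eq_or_lt with hmass | hmass
  · rw [← hmass, Real.zero_rpow (by positivity), mul_zero]
    exact energy_self_nonneg hn hv
  · have h := subcritConst_le_energy hn (smul_mem_testIdeal _ hv) (qMass_rpow_smul_self hq hmass)
    rwa [energy_smul_self, ← Real.rpow_mul_natCast hmass.le,
      show -q⁻¹ * (2 : ℕ) = -(2 / q) by push_cast; ring, Real.rpow_neg hmass.le,
      le_inv_mul_iff₀' (by positivity)] at h

variable (n k) in
lemma exists_mem_testIdeal_qMass_eq_one (hq : 0 < q) : ∃ v ∈ testIdeal n, qMass k q v = 1 := by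
  let bump : ContDiffBump (0 : Euc n) := default
  let f : SmoothFn n := ⟨bump, show ContDiff ℝ ∞ bump from bump.contDiff⟩
  have hf : f ∈ testIdeal n := bump.hasCompactSupport
  have hmass : 0 < qMass k q f := qMass_pos hq hf (x := 0) (bump.pos_of_mem_ball
    (Metric.mem_ball_self bump.rOut_pos)).ne'
  exact ⟨_, smul_mem_testIdeal _ hf, qMass_rpow_smul_self hq hmass⟩

lemma le_subcritConst (hq : 0 < q) {S : ℝ}
    (hS : ∀ v ∈ testIdeal n, qMass k q v = 1 → S ≤ energy k v v) : S ≤ subcritConst n k q := by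
  obtain ⟨v, hv, hmass⟩ := exists_mem_testIdeal_qMass_eq_one n k hq
  refine le_csInf ⟨_, v, ⟨hv, hmass⟩, rfl⟩ ?_
  rintro _ ⟨w, ⟨hw, hmass'⟩, rfl⟩
  exact hS w hw hmass'

lemma exists_pos_le_subcritConst (hn : 2 * k < n) :
    ∃ S : ℝ, 0 < S ∧ ∀ q, 2 ≤ q → q < critExp n k → S ≤ subcritConst n k q := by
  obtain ⟨S, hS, hle⟩ := exists_mul_qMass_rpow_le_energy hn
  refine ⟨S, hS, fun q hq hq' => le_subcritConst (by linarith) fun v hv hmass => ?_⟩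
  simpa [hmass] using hle q hq hq' v hv

lemma exists_isMinimizingSeq (hn : 2 * k < n) (hq : 0 < q) :
    ∃ v : ℕ → SmoothFn n, IsMinimizingSeq k q v := by
  obtain ⟨w, hw, hmass⟩ := exists_mem_testIdeal_qMass_eq_one n k hq
  obtain ⟨E, -, hE, hmem⟩ := exists_seq_tendsto_sInf
    (S := (fun v : SmoothFn n => energy k v v) '' {v | v ∈ testIdeal n ∧ qMass k q v = 1})
    ⟨_, w, ⟨hw, hmass⟩, rfl⟩ ⟨0, by
      rintro _ ⟨v, ⟨hv, -⟩, rfl⟩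
      exact energy_self_nonneg hn hv⟩
  choose v hv hvE using hmem
  exact ⟨v, fun j => (hv j).1, fun j => (hv j).2, by simpa only [hvE, subcritConst] using hE⟩

end Minimization

/-! ### Conformal balance of minimizing sequences -/

lemma sum_sphereCoord_mul_self : ∑ i, sphereCoord i * sphereCoord i = (1 : SmoothFn n) := by
  have hcoord : ∑ i, weight 1 * coord i * (weight 1 * coord i) =
      (weight 1 * weight 1 * ((2 : ℝ) • rho - 1) : SmoothFn n) := by
    rw [← sum_coord_mul_coord, Finset.mul_sum]
    exact Finset.sum_congr rfl fun i _ => by ring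
  simp only [Fintype.sum_option, sphereCoord]
  rw [hcoord]
  ext x
  have h := congrArg (fun f : SmoothFn n => f x) (weight_one_mul_rho (n := n))
  simp only [SmoothFn.add_apply, SmoothFn.mul_apply, SmoothFn.smul_apply, SmoothFn.sub_apply,
    SmoothFn.one_apply] at h ⊢
  linear_combination (2 * weight 1 x) * h

lemma sum_sphereCoord_apply_sq (x : Euc n) : ∑ i, sphereCoord i x ^ 2 = 1 := by
  simpa [pow_two] using congrArg (fun f : SmoothFn n => f x) (sum_sphereCoord_mul_self (n := n))

lemma abs_sphereCoord_le_one (i : Option (Fin n)) (x : Euc n) : |sphereCoord i x| ≤ 1 := by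
  rw [← sq_le_one_iff_abs_le_one, ← sum_sphereCoord_apply_sq x]
  exact Finset.single_le_sum (f := fun i => sphereCoord i x ^ 2) (fun j _ => sq_nonneg _)
    (Finset.mem_univ i)

/-- A translation (for `some i`) or dilation (for `none`), seen on the sphere as a conformal map
whose conformal factor is `1 + t ξ` to first order in `t`. -/
lemma exists_mul_weight_le (i : Option (Fin n)) (t : ℝ) :
    ∃ r : ℝ, 0 < r ∧ ∃ z : Euc n, ∀ x,
      r * weight 1 x ≤ weight 1 (r⁻¹ • (x - z)) * (1 + (t * sphereCoord i x + t ^ 2)) := by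
  rcases i with _ | i
  · have hr : 0 < 1 + t + t ^ 2 := by nlinarith [sq_nonneg (2 * t + 1)]
    refine ⟨1 + t + t ^ 2, hr, 0, fun x => ?_⟩
    set r := 1 + t + t ^ 2 with hrt
    have hweight : weight 1 (r⁻¹ • (x - 0)) = 2 * r ^ 2 / (r ^ 2 + ‖x‖ ^ 2) := by
      rw [weight_one_apply, sub_zero, norm_smul, mul_pow, norm_inv, inv_pow, Real.norm_eq_abs,
        sq_abs]
      field_simp
    have hnum : (r ^ 2 + ‖x‖ ^ 2) * 1 ≤
        r * ((1 + ‖x‖ ^ 2) * (1 + (t * (2 / (1 + ‖x‖ ^ 2) - 1) + t ^ 2))) := by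
      have hfactor : (1 + ‖x‖ ^ 2) * (1 + (t * (2 / (1 + ‖x‖ ^ 2) - 1) + t ^ 2)) =
          r + (1 - t + t ^ 2) * ‖x‖ ^ 2 := by
        field_simp
        ring
      rw [hfactor, hrt]
      nlinarith [mul_nonneg (show 0 ≤ t ^ 2 + t ^ 4 by positivity) (sq_nonneg ‖x‖)]
    rw [hweight, sphereCoord, SmoothFn.sub_apply, SmoothFn.one_apply, weight_one_apply,
      mul_div_assoc', div_mul_eq_mul_div, div_le_div_iff₀ (by positivity) (by positivity)]
    nlinarith [mul_le_mul_of_nonneg_left hnum hr.le]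
  · refine ⟨1, one_pos, -(t • EuclideanSpace.single i 1), fun x => ?_⟩
    have hnorm : ‖(1 : ℝ)⁻¹ • (x - -(t • EuclideanSpace.single i (1 : ℝ)))‖ ^ 2 =
        ‖x‖ ^ 2 + 2 * (t * x i) + t ^ 2 := by
      rw [inv_one, one_smul, sub_neg_eq_add, norm_add_sq_real, norm_smul, inner_smul_right,
        EuclideanSpace.inner_single_right]
      simp
    have hpos : 0 < 1 + (‖x‖ ^ 2 + 2 * (t * x i) + t ^ 2) := by
      rw [← hnorm]
      positivity
    rw [sphereCoord, SmoothFn.mul_apply, coord_apply, weight_one_apply, weight_one_apply, hnorm,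
      mul_div_assoc', div_mul_eq_mul_div, div_le_div_iff₀ (by positivity) hpos]
    have hexpand : (1 + (t * (2 / (1 + ‖x‖ ^ 2) * x i) + t ^ 2)) * (1 + ‖x‖ ^ 2) =
        1 + ‖x‖ ^ 2 + 2 * (t * x i) + t ^ 2 * (1 + ‖x‖ ^ 2) := by
      field_simp
      ring
    rw [one_mul, mul_assoc, hexpand]
    nlinarith [mul_nonneg (sq_nonneg t) (sq_nonneg ‖x‖)]

lemma one_sub_mul_le_rpow_neg {s y : ℝ} (hs : 0 ≤ s) (hy : 0 < 1 + y) :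
    1 - s * y ≤ (1 + y) ^ (-s) := by
  rw [Real.rpow_def_of_pos hy]
  have hexp := Real.add_one_le_exp (Real.log (1 + y) * -s)
  have hlog := mul_le_mul_of_nonneg_left (Real.log_le_sub_one_of_pos hy) hs
  linarith

lemma rpow_mul_one_sub_mul_le_rpow {s r w w' y : ℝ} (hs : 0 ≤ s) (hr : 0 < r) (hw : 0 < w)
    (hw' : 0 < w') (h : r * w ≤ w' * (1 + y)) : r ^ s * (w ^ s * (1 - s * y)) ≤ w' ^ s := by
  have hy : 0 < 1 + y := pos_of_mul_pos_right ((mul_pos hr hw).trans_le h) hw'.le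
  calc r ^ s * (w ^ s * (1 - s * y))
      ≤ r ^ s * (w ^ s * (1 + y) ^ (-s)) := by
        gcongr
        exact one_sub_mul_le_rpow_neg hs hy
    _ = (r * w / (1 + y)) ^ s := by
        rw [Real.div_rpow (by positivity) hy.le, Real.mul_rpow hr.le hw.le, Real.rpow_neg hy.le]
        ring
    _ ≤ w' ^ s := by
        gcongr
        rwa [div_le_iff₀ hy]

section Moment

variable {k : ℕ} {q : ℝ}

lemma qMass_affineComp (k : ℕ) (q : ℝ) {r : ℝ} (hr : 0 < r) (z : Euc n) (v : SmoothFn n) :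
    qMass k q (affineComp r z v) =
      (r ^ n)⁻¹ * ∫ x, |v x| ^ q * weight (subcritExp n k q) (r⁻¹ • (x - z)) := by
  rw [← integral_comp_smul_add hr z]
  simp only [qMass, density, affineComp_apply, add_sub_cancel_right, inv_smul_smul₀ hr.ne']

lemma rpow_mul_one_sub_moment_le_qMass_affineComp (hq : 0 < q) (hs : 0 ≤ subcritExp n k q)
    {v : SmoothFn n} (hv : v ∈ testIdeal n) (hmass : qMass k q v = 1) (ξ : SmoothFn n) (t : ℝ)
    {r : ℝ} (hr : 0 < r) {z : Euc n}
    (hrz : ∀ x, r * weight 1 x ≤ weight 1 (r⁻¹ • (x - z)) * (1 + (t * ξ x + t ^ 2))) :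
    r ^ (subcritExp n k q - n) * (1 - subcritExp n k q * (t * moment k q v ξ + t ^ 2)) ≤
      qMass k q (affineComp r z v) := by
  set s := subcritExp n k q with hs_def
  have hint := integrable_density (k := k) hq hv
  have hint' := integrable_mul_density (k := k) hq hv ξ.continuous
  have hcoeff : 1 - s * (t * moment k q v ξ + t ^ 2) =
      ∫ x, ((1 - s * t ^ 2) * density k q v x - s * t * (ξ x * density k q v x)) := by
    rw [integral_sub (hint.const_mul _) (hint'.const_mul _), integral_const_mul,
      integral_const_mul, ← qMass, ← moment, hmass]
    ring
  rw [qMass_affineComp k q hr, Real.rpow_sub hr, Real.rpow_natCast, div_eq_inv_mul, mul_assoc,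
    hcoeff, ← integral_const_mul]
  refine mul_le_mul_of_nonneg_left (integral_mono (((hint.const_mul _).sub
    (hint'.const_mul _)).const_mul _) ?_ fun x => ?_) (by positivity)
  · refine Continuous.integrable_of_hasCompactSupport
      ((v.continuous.abs.rpow_const fun _ => Or.inr hq.le).mul
        ((weight _).continuous.comp (by fun_prop))) ?_
    exact HasCompactSupport.mono hv fun x hx hvx => hx (by simp [hvx, Real.zero_rpow hq.ne'])
  · have h := mul_le_mul_of_nonneg_left
      (rpow_mul_one_sub_mul_le_rpow hs hr (weight_pos 1 x) (weight_pos 1 _) (hrz x))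
      (Real.rpow_nonneg (abs_nonneg (v x)) q)
    simp only [weight_rpow, one_mul] at h
    refine (le_of_eq ?_).trans h
    simp only [density, ← hs_def]
    ring

lemma energy_affineComp_self_eq (hq : q ≠ 0) {r : ℝ} (hr : 0 < r) (z : Euc n) (v : SmoothFn n) :
    energy k (affineComp r z v) (affineComp r z v) =
      (r ^ (subcritExp n k q - n)) ^ (2 / q) * energy k v v := by
  have hexp : (subcritExp n k q - n) * (2 / q) = (2 * k : ℕ) - (n : ℝ) := by
    rw [subcritExp, confExp]
    push_cast
    field_simp
    ring
  rw [energy_affineComp_self k hr, ← Real.rpow_mul hr.le, hexp, Real.rpow_sub hr,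
    Real.rpow_natCast, Real.rpow_natCast, div_eq_mul_inv]

/-- The subcritical energy is not conformally invariant: moving the centre of mass of an almost
minimizer to the origin would lower its energy too much. -/
lemma one_add_mul_moment_sphereCoord_sq_le (hn : 2 * k < n) (hq : 0 < q) (hq' : q < critExp n k)
    (ha : 0 < subcritConst n k q) {v : SmoothFn n} (hv : v ∈ testIdeal n) (hmass : qMass k q v = 1)
    (i : Option (Fin n)) :
    1 + subcritExp n k q / 4 * moment k q v (sphereCoord i) ^ 2 ≤
      (energy k v v / subcritConst n k q) ^ (q / 2) := by
  have hs : 0 < subcritExp n k q := by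
    rw [subcritExp_eq hn]
    exact mul_pos (by linarith) (confExp_pos hn)
  set m := moment k q v (sphereCoord i)
  obtain ⟨r, hr, z, hrz⟩ := exists_mul_weight_le i (-m / 2)
  have hY : 0 ≤ 1 + subcritExp n k q / 4 * m ^ 2 := by positivity
  have hmoved := rpow_mul_one_sub_moment_le_qMass_affineComp hq hs.le hv hmass _ _ hr hrz
  rw [show 1 - subcritExp n k q * (-m / 2 * m + (-m / 2) ^ 2) = 1 + subcritExp n k q / 4 * m ^ 2
    by ring] at hmoved
  have hsobolev := subcritConst_mul_qMass_rpow_le hn hq (affineComp_mem_testIdeal hr.ne' z hv)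
  rw [energy_affineComp_self_eq hq.ne' hr] at hsobolev
  have hpow : (r ^ (subcritExp n k q - n)) ^ (2 / q) * (subcritConst n k q *
      (1 + subcritExp n k q / 4 * m ^ 2) ^ (2 / q)) ≤
        (r ^ (subcritExp n k q - n)) ^ (2 / q) * energy k v v := by
    rw [mul_left_comm, ← Real.mul_rpow (by positivity) hY]
    refine le_trans ?_ hsobolev
    gcongr
  have hpow' := le_of_mul_le_mul_left hpow (by positivity)
  rw [mul_comm, ← le_div_iff₀ ha] at hpow'
  calc 1 + subcritExp n k q / 4 * m ^ 2
      = ((1 + subcritExp n k q / 4 * m ^ 2) ^ (2 / q)) ^ (q / 2) := by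
        rw [← Real.rpow_mul hY, div_mul_div_cancel₀ hq.ne', div_self two_ne_zero, Real.rpow_one]
    _ ≤ _ := by gcongr

lemma IsMinimizingSeq.tendsto_moment_sphereCoord (hn : 2 * k < n) (hq : 0 < q)
    (hq' : q < critExp n k) (ha : 0 < subcritConst n k q) {v : ℕ → SmoothFn n}
    (hv : IsMinimizingSeq k q v) (i : Option (Fin n)) :
    Tendsto (fun j => moment k q (v j) (sphereCoord i)) atTop (𝓝 0) := by
  have hs : 0 < subcritExp n k q := by
    rw [subcritExp_eq hn]
    exact mul_pos (by linarith) (confExp_pos hn)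
  have hratio : Tendsto (fun j => ((energy k (v j) (v j) / subcritConst n k q) ^ (q / 2) - 1) *
      (4 / subcritExp n k q)) atTop (𝓝 0) := by
    have h := (hv.tendsto_energy.div_const (subcritConst n k q)).rpow_const (p := q / 2)
      (Or.inr (by positivity))
    rw [div_self ha.ne', Real.one_rpow] at h
    simpa using (h.sub_const 1).mul_const (4 / subcritExp n k q)
  refine tendsto_zero_iff_abs_tendsto_zero _ |>.2 ?_
  have hsq : Tendsto (fun j => moment k q (v j) (sphereCoord i) ^ 2) atTop (𝓝 0) :=
    squeeze_zero (fun j => sq_nonneg _) (fun j => by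
      have h := one_add_mul_moment_sphereCoord_sq_le hn hq hq' ha (hv.mem_testIdeal j)
        (hv.qMass_eq_one j) i
      rw [← div_le_iff₀ (by positivity), le_sub_iff_add_le']
      exact le_of_eq_of_le (by rw [div_div_eq_mul_div]; ring) h) hratio
  simpa [Function.comp_def, Real.sqrt_sq_eq_abs] using hsq.sqrt

end Moment

/-! ### First and second variation along minimizing sequences -/

lemma hasDerivAt_one_add_rpow (p : ℝ) {y : ℝ} (hy : 0 < 1 + y) :
    HasDerivAt (fun y => (1 + y) ^ p) (p * (1 + y) ^ (p - 1)) y := by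
  simpa using ((hasDerivAt_id y).const_add 1).rpow_const (p := p) (Or.inl hy.ne')

lemma eventually_le_abs_one_add_rpow {q c : ℝ} (hc : c < q * (q - 1) / 2) :
    ∀ᶠ y in 𝓝 (0 : ℝ), 1 + q * y + c * y ^ 2 ≤ |1 + y| ^ q := by
  let f : ℝ → ℝ := fun y => (1 + y) ^ q - (1 + q * y + c * y ^ 2)
  have hpos : ∀ᶠ y in 𝓝 (0 : ℝ), 0 < 1 + y := by
    filter_upwards [lt_mem_nhds (show (-1 : ℝ) < 0 by norm_num)] with y hy
    linarith
  have hderiv : ∀ y : ℝ, 0 < 1 + y →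
      HasDerivAt f (q * (1 + y) ^ (q - 1) - (q + 2 * c * y)) y := fun y hy => by
    have hpoly := (((hasDerivAt_id y).const_mul q).const_add 1).add
      (((hasDerivAt_id y).pow 2).const_mul c)
    refine ((hasDerivAt_one_add_rpow q hy).sub hpoly).congr_deriv ?_
    simp only [id, Nat.cast_ofNat]
    ring
  have hderiv_eq : deriv f =ᶠ[𝓝 0] fun y => q * (1 + y) ^ (q - 1) - (q + 2 * c * y) :=
    hpos.mono fun y hy => (hderiv y hy).deriv
  have hderiv2 : HasDerivAt (fun y : ℝ => q * (1 + y) ^ (q - 1) - (q + 2 * c * y))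
      (q * (q - 1) - 2 * c) 0 := by
    refine (((hasDerivAt_one_add_rpow (q - 1) (by norm_num)).const_mul q).sub
      (((hasDerivAt_id 0).const_mul (2 * c)).const_add q)).congr_deriv ?_
    simp
  have hmin : IsLocalMin f 0 := isLocalMin_of_deriv_deriv_pos
    (by rw [hderiv_eq.deriv_eq, hderiv2.deriv]; linarith)
    (by rw [hderiv_eq.eq_of_nhds]; simp) (hderiv 0 (by norm_num)).continuousAt
  filter_upwards [hmin, hpos] with y hy hy1
  have hf0 : f 0 = 0 := by simp [f]
  rw [hf0] at hy
  rw [abs_of_pos hy1]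
  exact sub_nonneg.1 hy

lemma exists_pos_forall_le_abs_one_add_rpow {q c : ℝ} (hc : c < q * (q - 1) / 2) (K : ℝ) {η : ℝ}
    (hη : 0 < η) :
    ∃ t > 0, (∀ y, |y| ≤ t → 1 + q * y + c * y ^ 2 ≤ |1 + y| ^ q) ∧ K * t ^ 2 ≤ η := by
  obtain ⟨δ, hδ, hball⟩ := Metric.eventually_nhds_iff.1 (eventually_le_abs_one_add_rpow hc)
  have hcont : Continuous fun t : ℝ => K * t ^ 2 := by fun_prop
  have hlim : Tendsto (fun t => K * t ^ 2) (𝓝[>] 0) (𝓝 0) :=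
    tendsto_nhdsWithin_of_tendsto_nhds (by simpa using hcont.tendsto 0)
  obtain ⟨t, ⟨ht, htδ⟩, htη⟩ :=
    (eventually_and.2 ⟨Ioo_mem_nhdsGT hδ, hlim.eventually_le_const hη⟩).exists
  exact ⟨t, ht, fun y hy => hball (by rw [dist_zero_right]; exact hy.trans_lt htδ), htη⟩

lemma exists_lt_sub_le_mul {a q η : ℝ} (ha : 0 < a) (hq : 1 < q) (hη : 0 < η) :
    ∃ c, 0 ≤ c ∧ c < q * (q - 1) / 2 ∧ a * (q - 1) - η ≤ a * (2 / q * c) := by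
  have : 0 < q * (q - 1) / 2 := div_pos (mul_pos (by linarith) (by linarith)) two_pos
  refine ⟨max 0 (q * (q - 1) / 2 - q * η / (2 * a)), le_max_left _ _,
    max_lt this (sub_lt_self _ (by positivity)), ?_⟩
  calc a * (q - 1) - η = a * (2 / q * (q * (q - 1) / 2 - q * η / (2 * a))) := by
        field_simp
    _ ≤ _ := by
        gcongr
        exact le_max_right _ _

lemma one_add_mul_sub_sq_le_rpow {p y : ℝ} (hp : 0 ≤ p) (hy : -(1 / 2) ≤ y) :
    1 + p * (y - 2 * y ^ 2) ≤ (1 + y) ^ p := by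
  have hy1 : 0 < 1 + y := by linarith
  have hlog : y - 2 * y ^ 2 ≤ Real.log (1 + y) := by
    refine le_trans ?_ (Real.one_sub_inv_le_log_of_pos hy1)
    have hcubic : 0 ≤ y ^ 2 * (1 + 2 * y) := mul_nonneg (sq_nonneg y) (by linarith)
    rw [← sub_nonneg, show 1 - (1 + y)⁻¹ - (y - 2 * y ^ 2) = y ^ 2 * (1 + 2 * y) / (1 + y) by
      field_simp; ring]
    positivity
  rw [Real.rpow_def_of_pos hy1]
  have hexp := Real.add_one_le_exp (Real.log (1 + y) * p)
  linarith [mul_le_mul_of_nonneg_left hlog hp]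

section Variation

variable {k : ℕ} {q : ℝ}

lemma one_add_moment_add_moment_sq_le_qMass (hq : 0 < q) {c t : ℝ}
    (hct : ∀ y, |y| ≤ |t| → 1 + q * y + c * y ^ 2 ≤ |1 + y| ^ q) {v : SmoothFn n}
    (hv : v ∈ testIdeal n) (hmass : qMass k q v = 1) {ξ : SmoothFn n} (hξ : ∀ x, |ξ x| ≤ 1) :
    1 + q * t * moment k q v ξ + c * t ^ 2 * moment k q v (fun x => ξ x ^ 2) ≤
      qMass k q (v + t • (ξ * v)) := by
  have hint := integrable_density (k := k) hq hv
  have hint1 := (integrable_mul_density (k := k) hq hv ξ.continuous).const_mul (q * t)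
  have hint2 := (integrable_mul_density (k := k) hq hv
    (g := fun x => ξ x ^ 2) (by fun_prop)).const_mul (c * t ^ 2)
  rw [← hmass, qMass, moment, moment, ← integral_const_mul, ← integral_const_mul,
    ← integral_add hint hint1, ← integral_add (hint.fun_add hint1) hint2]
  refine integral_mono ((hint.fun_add hint1).fun_add hint2) (integrable_density hq
    (add_mem hv (smul_mem_testIdeal t (Ideal.mul_mem_left _ _ hv)))) fun x => ?_
  have htξ : |t * ξ x| ≤ |t| := by
    rw [abs_mul]
    exact mul_le_of_le_one_right (abs_nonneg t) (hξ x)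
  have h := mul_le_mul_of_nonneg_right (hct _ htξ) (density_nonneg k q v x)
  have hdensity : density k q (v + t • (ξ * v)) x = |1 + t * ξ x| ^ q * density k q v x := by
    rw [density, SmoothFn.add_apply, SmoothFn.smul_apply, SmoothFn.mul_apply,
      show v x + t * (ξ x * v x) = (1 + t * ξ x) * v x by ring, abs_mul,
      Real.mul_rpow (abs_nonneg _) (abs_nonneg _), mul_assoc, density]
  rw [hdensity]
  linarith

lemma moment_nonneg {v : SmoothFn n} {g : Euc n → ℝ} (hg : ∀ x, 0 ≤ g x) :
    0 ≤ moment k q v g :=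
  integral_nonneg fun x => mul_nonneg (hg x) (density_nonneg k q v x)

lemma moment_sq_le_one (hq : 0 < q) {v : SmoothFn n} (hv : v ∈ testIdeal n)
    (hmass : qMass k q v = 1) {ξ : SmoothFn n} (hξ : ∀ x, |ξ x| ≤ 1) :
    moment k q v (fun x => ξ x ^ 2) ≤ 1 := by
  rw [← hmass]
  exact integral_mono (integrable_mul_density hq hv (ξ.continuous.pow 2))
    (integrable_density hq hv) fun x =>
      mul_le_of_le_one_left (density_nonneg k q v x) ((sq_le_one_iff_abs_le_one _).2 (hξ x))

lemma sum_moment_sphereCoord_sq (hq : 0 < q) {v : SmoothFn n} (hv : v ∈ testIdeal n) :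
    ∑ i, moment k q v (fun x => sphereCoord i x ^ 2) = qMass k q v := by
  simp only [moment]
  rw [← integral_finsetSum _ fun i _ =>
    integrable_mul_density hq hv (g := fun x => sphereCoord i x ^ 2) (by fun_prop), qMass]
  simp only [← Finset.sum_mul, sum_sphereCoord_apply_sq, one_mul]

lemma subcritConst_pos (hn : 2 * k < n) (hq : 2 ≤ q) (hq' : q < critExp n k) :
    0 < subcritConst n k q := by
  obtain ⟨S, hS, hle⟩ := exists_pos_le_subcritConst hn
  exact hS.trans_le (hle q hq hq')

/-- The second variation of `energy / qMass ^ (2 / q)` at `v` in the direction `ξ v`; averaging over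
`± t` removes the linear term of the energy. -/
lemma mul_moment_sq_le_energy_mul (hn : 2 * k < n) (hq : 0 < q) {c t : ℝ} (hc : 0 ≤ c) (ht : 0 < t)
    (hct : ∀ y, |y| ≤ t → 1 + q * y + c * y ^ 2 ≤ |1 + y| ^ q) {v : SmoothFn n}
    (hv : v ∈ testIdeal n) (hmass : qMass k q v = 1) {ξ : SmoothFn n} (hξ : ∀ x, |ξ x| ≤ 1)
    (ha : 0 ≤ subcritConst n k q) {s : ℝ} (hs : q * t * |moment k q v ξ| ≤ s) (hs' : s ≤ 1 / 2) :
    subcritConst n k q * (1 + 2 / q * (c * t ^ 2 * moment k q v (fun x => ξ x ^ 2)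
      - 2 * (c * t ^ 2) ^ 2 - (s + 2 * s ^ 2))) ≤
      energy k v v + t ^ 2 * energy k (ξ * v) (ξ * v) := by
  set M := moment k q v fun x => ξ x ^ 2
  have hM : 0 ≤ M := moment_nonneg fun x => sq_nonneg _
  have hM1 : M ≤ 1 := moment_sq_le_one hq hv hmass hξ
  have hs0 : 0 ≤ s := le_trans (by positivity) hs
  set z := c * t ^ 2 * M
  have hz0 : 0 ≤ z := by positivity
  have hzle : z ≤ c * t ^ 2 := mul_le_of_le_one_right (by positivity) hM1
  have hlower : ∀ τ, |τ| = t → subcritConst n k q * (1 + 2 / q * ((z - s) - 2 * (z - s) ^ 2)) ≤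
      energy k v v + 2 * τ * energy k v (ξ * v) + τ ^ 2 * energy k (ξ * v) (ξ * v) := fun τ hτ => by
    have hw : ξ * v ∈ testIdeal n := Ideal.mul_mem_left _ _ hv
    have hmass' := one_add_moment_add_moment_sq_le_qMass hq (by rwa [hτ]) hv hmass hξ (c := c)
      (t := τ)
    have hlin : -(q * t * |moment k q v ξ|) ≤ q * τ * moment k q v ξ := by
      rw [← hτ, mul_assoc, mul_assoc, ← abs_mul, ← mul_neg]
      gcongr
      exact neg_abs_le _
    have hτsq : τ ^ 2 = t ^ 2 := by rw [← hτ, sq_abs]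
    rw [hτsq] at hmass'
    rw [← energy_add_smul_self k hv hw]
    refine le_trans (mul_le_mul_of_nonneg_left ?_ ha) (subcritConst_mul_qMass_rpow_le hn hq
      (add_mem hv (smul_mem_testIdeal τ hw)))
    refine (one_add_mul_sub_sq_le_rpow (by positivity) (by linarith)).trans ?_
    exact Real.rpow_le_rpow (by linarith) (by linarith) (by positivity)
  have hplus := hlower t (abs_of_pos ht)
  have hminus := hlower (-t) (by rw [abs_neg, abs_of_pos ht])
  have hquad : z - 2 * (c * t ^ 2) ^ 2 - (s + 2 * s ^ 2) ≤ (z - s) - 2 * (z - s) ^ 2 := by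
    nlinarith [mul_nonneg hz0 hs0, pow_le_pow_left₀ hz0 hzle 2]
  calc subcritConst n k q * (1 + 2 / q * (z - 2 * (c * t ^ 2) ^ 2 - (s + 2 * s ^ 2)))
      ≤ subcritConst n k q * (1 + 2 / q * ((z - s) - 2 * (z - s) ^ 2)) := by gcongr
    _ ≤ energy k v v + t ^ 2 * energy k (ξ * v) (ξ * v) := by linarith

lemma IsMinimizingSeq.eventually_mul_moment_sq_le (hn : 2 * k < n) (hq : 2 ≤ q)
    (hq' : q < critExp n k) {v : ℕ → SmoothFn n} (hv : IsMinimizingSeq k q v) {ξ : SmoothFn n}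
    (hξ : ∀ x, |ξ x| ≤ 1) (hmoment : Tendsto (fun j => moment k q (v j) ξ) atTop (𝓝 0)) {η : ℝ}
    (hη : 0 < η) : ∀ᶠ j in atTop,
      subcritConst n k q * (q - 1) * moment k q (v j) (fun x => ξ x ^ 2) ≤
        energy k (ξ * v j) (ξ * v j) + η := by
  have ha := subcritConst_pos hn hq hq'
  set a := subcritConst n k q
  have hq0 : 0 < q := by linarith
  obtain ⟨c, hc, hcq, hcη⟩ := exists_lt_sub_le_mul ha (show 1 < q by linarith) (half_pos hη)
  obtain ⟨t, ht, hct, htη⟩ := exists_pos_forall_le_abs_one_add_rpow hcq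
    (a * (2 / q * (2 * c ^ 2))) (show 0 < η / 4 by positivity)
  set s : ℕ → ℝ := fun j => q * t * |moment k q (v j) ξ|
  have hs : Tendsto s atTop (𝓝 0) := by simpa using hmoment.abs.const_mul (q * t)
  have herr : Tendsto (fun j => energy k (v j) (v j) + a * (2 / q * (s j + 2 * s j ^ 2))) atTop
      (𝓝 a) := by
    simpa using hv.tendsto_energy.add
      (((hs.add ((hs.pow 2).const_mul 2)).const_mul (2 / q)).const_mul a)
  filter_upwards [hs.eventually_le_const one_half_pos,
    herr.eventually_le_const (lt_add_of_pos_right a (show 0 < t ^ 2 * (η / 4) by positivity))]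
    with j hsj hEj
  have h := mul_moment_sq_le_energy_mul hn hq0 hc ht hct (hv.mem_testIdeal j) (hv.qMass_eq_one j)
    hξ ha.le le_rfl hsj
  set M := moment k q (v j) fun x => ξ x ^ 2
  have hM : 0 ≤ M := moment_nonneg fun x => sq_nonneg _
  have hM1 : M ≤ 1 := moment_sq_le_one hq0 (hv.mem_testIdeal j) (hv.qMass_eq_one j) hξ
  have hcM : (a * (q - 1) - η / 2) * M ≤ a * (2 / q * c) * M := by gcongr
  have hηM : η / 2 * M ≤ η / 2 := mul_le_of_le_one_right (by positivity) hM1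
  have hdiv : t ^ 2 * (a * (2 / q * c) * M) ≤
      t ^ 2 * (energy k (ξ * v j) (ξ * v j) + η / 4 + a * (2 / q * (2 * c ^ 2)) * t ^ 2) := by
    linarith
  linarith [le_of_mul_le_mul_left hdiv (by positivity)]

lemma critExp_sub_two_mul_gjmsFactor (hn : 2 * (k + 1) < n) :
    (critExp n (k + 1) - 2) * gjmsFactor n (k + 1) = (k + 1) * (n + 2 * k) := by
  have hn' : (2 : ℝ) * (k + 1) < n := by exact_mod_cast hn
  have hne : (n : ℝ) - 2 * (k + 1) ≠ 0 := by linarith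
  have hgap : 2 * (n : ℝ) / (n - 2 * (k + 1)) - 2 = 4 * (k + 1) / (n - 2 * (k + 1)) := by
    rw [eq_div_iff hne, sub_mul, div_mul_cancel₀ _ hne]
    ring
  rw [critExp, gjmsFactor, Nat.cast_succ, hgap, div_mul_eq_mul_div, div_eq_iff hne]
  ring

lemma sphereEnergy_one_eq (hn : 2 * (k + 1) < n) {v : SmoothFn n} (hv : v ∈ testIdeal n) :
    (critExp n (k + 1) - 2) * sphereEnergy k 1 (weight (-confExp n (k + 1)) * v) =
      (critExp n (k + 1) - 1) * energy (k + 1) v v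
        - ∑ i, energy (k + 1) (sphereCoord i * v) (sphereCoord i * v) := by
  have hsucc := sphereEnergy_succ k 0 (Ideal.mul_mem_left _ (weight (-confExp n (k + 1))) hv)
  have hself : sphereEnergy (k + 1) 0 (weight (-confExp n (k + 1)) * v) = energy (k + 1) v v := by
    rw [sphereEnergy_zero_right, sphereForm, weight_mul_weight_neg_mul]
  have hweight : sphereEnergy k 0 (weight (-confExp n (k + 1)) * v) =
      energy k (weight 1 * v) (weight 1 * v) := by
    rw [sphereEnergy_zero_right, sphereForm, ← mul_assoc, weight_mul_weight,
      confExp_eq_succ_add_one]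
    ring_nf
  rw [hself, hweight] at hsucc
  rw [sum_energy_sphereCoord_mul k hv, ← critExp_sub_two_mul_gjmsFactor hn]
  linear_combination (-(critExp n (k + 1) - 2)) * hsucc

lemma IsMinimizingSeq.eventually_sphereEnergy_one_le (hn : 2 * (k + 1) < n) (hq : 2 ≤ q)
    (hq' : q < critExp n (k + 1)) {v : ℕ → SmoothFn n} (hv : IsMinimizingSeq (k + 1) q v) {η : ℝ}
    (hη : 0 < η) : ∀ᶠ j in atTop,
      (critExp n (k + 1) - 2) * sphereEnergy k 1 (weight (-confExp n (k + 1)) * v j) ≤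
        (critExp n (k + 1) - q) * subcritConst n (k + 1) q + η := by
  have hq0 : 0 < q := by linarith
  have hE : Tendsto (fun j => (critExp n (k + 1) - 1) * energy (k + 1) (v j) (v j)) atTop
      (𝓝 ((critExp n (k + 1) - 1) * subcritConst n (k + 1) q)) := hv.tendsto_energy.const_mul _
  have hsecond : ∀ᶠ j in atTop, ∀ i, subcritConst n (k + 1) q * (q - 1) *
      moment (k + 1) q (v j) (fun x => sphereCoord i x ^ 2) ≤
        energy (k + 1) (sphereCoord i * v j) (sphereCoord i * v j) + η / (2 * (n + 1)) :=
    eventually_all.2 fun i => hv.eventually_mul_moment_sq_le hn hq hq' (abs_sphereCoord_le_one i)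
      (hv.tendsto_moment_sphereCoord hn hq0 hq' (subcritConst_pos hn hq hq') i) (by positivity)
  filter_upwards [hsecond, hE.eventually_le_const (lt_add_of_pos_right _ (half_pos hη))]
    with j hj hEj
  have hsum := Finset.sum_le_sum fun i (_ : i ∈ Finset.univ) => hj i
  rw [← Finset.mul_sum, sum_moment_sphereCoord_sq hq0 (hv.mem_testIdeal j), hv.qMass_eq_one,
    Finset.sum_add_distrib, Finset.sum_const, Finset.card_univ, Fintype.card_option,
    Fintype.card_fin, nsmul_eq_mul,
    show ((n + 1 : ℕ) : ℝ) * (η / (2 * (n + 1))) = η / 2 by push_cast; field_simp] at hsum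
  rw [sphereEnergy_one_eq hn (hv.mem_testIdeal j)]
  linarith

lemma subcritConst_mul_one_sub_le_energy_add_smul (hn : 2 * k < n) (hq : 1 ≤ q)
    (ha : 0 ≤ subcritConst n k q) {v φ : SmoothFn n} (hv : v ∈ testIdeal n) (hφ : φ ∈ testIdeal n)
    (hmass : qMass k q v = 1) (t : ℝ) :
    subcritConst n k q * (1 - 2 * (|t| * qMass k q φ ^ q⁻¹)) ≤
      energy k v v + 2 * t * energy k v φ + t ^ 2 * energy k φ φ := by
  have hq0 : 0 < q := by linarith
  have hw : v + t • φ ∈ testIdeal n := add_mem hv (smul_mem_testIdeal t hφ)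
  rw [← energy_add_smul_self k hv hφ]
  refine le_trans (mul_le_mul_of_nonneg_left ?_ ha) (subcritConst_mul_qMass_rpow_le hn hq0 hw)
  have htriangle := qMass_add_rpow_inv_le (k := k) hq hw ((-t) • φ)
  rw [neg_smul, add_neg_cancel_right, ← neg_smul, hmass, Real.one_rpow, qMass_smul, abs_neg,
    Real.mul_rpow (by positivity) (qMass_nonneg k q φ), Real.rpow_rpow_inv (abs_nonneg t) hq0.ne']
    at htriangle
  have hsq : qMass k q (v + t • φ) ^ (2 / q) = (qMass k q (v + t • φ) ^ q⁻¹) ^ 2 := by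
    rw [← Real.rpow_mul_natCast (qMass_nonneg _ _ _)]
    congr 1
    push_cast
    ring
  rw [hsq]
  nlinarith [sq_nonneg (qMass k q (v + t • φ) ^ q⁻¹ - 1)]

lemma IsMinimizingSeq.eventually_abs_energy_le (hn : 2 * k < n) (hq : 1 ≤ q)
    (ha : 0 ≤ subcritConst n k q) {v : ℕ → SmoothFn n} (hv : IsMinimizingSeq k q v)
    {φ : SmoothFn n} (hφ : φ ∈ testIdeal n) {η : ℝ} (hη : 0 < η) : ∀ᶠ j in atTop,
      |energy k (v j) φ| ≤ subcritConst n k q * qMass k q φ ^ q⁻¹ + η := by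
  have hφE : 0 ≤ energy k φ φ := energy_self_nonneg hn hφ
  set τ := η / (energy k φ φ + 1) with hτ
  have hτ0 : 0 < τ := by positivity
  have hτE : τ * energy k φ φ ≤ η := by
    rw [hτ, div_mul_eq_mul_div, div_le_iff₀ (by positivity)]
    linarith
  filter_upwards [hv.tendsto_energy.eventually_le_const
    (lt_add_of_pos_right _ (mul_pos hτ0 hη))] with j hEj
  have hplus := subcritConst_mul_one_sub_le_energy_add_smul hn hq ha (hv.mem_testIdeal j) hφ
    (hv.qMass_eq_one j) τ
  have hminus := subcritConst_mul_one_sub_le_energy_add_smul hn hq ha (hv.mem_testIdeal j) hφ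
    (hv.qMass_eq_one j) (-τ)
  rw [abs_neg, abs_of_pos hτ0] at hminus
  rw [abs_of_pos hτ0] at hplus
  have hsq : τ * (τ * energy k φ φ) ≤ τ * η := by gcongr
  rw [abs_le]
  constructor <;> refine le_of_mul_le_mul_left ?_ hτ0 <;> linarith

end Variation

/-! ### A weighted Poincaré inequality -/

/-- The squared length `|∇V|²` of the Euclidean gradient. -/
noncomputable def gradSq (V : SmoothFn n) : SmoothFn n := ∑ i, partialDeriv i V * partialDeriv i V

lemma gradSq_apply (V : SmoothFn n) (x : Euc n) : gradSq V x = ∑ i, partialDeriv i V x ^ 2 := by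
  simp only [gradSq, SmoothFn.sum_apply, SmoothFn.mul_apply, pow_two]

lemma gradSq_nonneg (V : SmoothFn n) (x : Euc n) : 0 ≤ gradSq V x := by
  rw [gradSq_apply]
  positivity

lemma gradSq_mem_testIdeal {V : SmoothFn n} (hV : V ∈ testIdeal n) : gradSq V ∈ testIdeal n :=
  sum_mem fun i _ => Ideal.mul_mem_left _ _ (partialDeriv_mem_testIdeal i hV)

lemma sphereEnergy_zero_one {V : SmoothFn n} (hV : V ∈ testIdeal n) :
    sphereEnergy 0 1 V = totalIntegral (weight (n - 2) * gradSq V) := by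
  rw [sphereEnergy, pow_one, sphereForm_zero_sphereLaplacian hV, gradSq]

lemma sq_intervalIntegral_le {f : ℝ → ℝ} (hf : Continuous f) :
    (∫ s in (0 : ℝ)..1, f s) ^ 2 ≤ ∫ s in (0 : ℝ)..1, f s ^ 2 := by
  have : IsProbabilityMeasure (volume.restrict (Set.Ioc (0 : ℝ) 1)) := ⟨by simp⟩
  simp only [intervalIntegral.integral_of_le zero_le_one]
  exact even_two.convexOn_pow.map_integral_le (continuousOn_pow 2) isClosed_univ (by simp)
    (hf.integrableOn_Ioc) ((hf.pow 2).integrableOn_Ioc)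

lemma sq_sub_le_norm_sq_mul_integral_gradSq (V : SmoothFn n) (x z : Euc n) :
    (V (x + z) - V x) ^ 2 ≤ ‖z‖ ^ 2 * ∫ s in (0 : ℝ)..1, gradSq V (x + s • z) := by
  have hline : ∀ s : ℝ, HasDerivAt (fun s : ℝ => x + s • z) z s := fun s => by
    simpa using ((hasDerivAt_id s).smul_const z).const_add x
  have hderiv : ∀ s : ℝ,
      HasDerivAt (fun s : ℝ => V (x + s • z)) (∑ i, z i * partialDeriv i V (x + s • z)) s :=
    fun s => by
      rw [← fderiv_apply_eq_sum]
      exact (V.differentiable _).hasFDerivAt.comp_hasDerivAt s (hline s)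
  have hcont : Continuous fun s : ℝ => ∑ i, z i * partialDeriv i V (x + s • z) := by fun_prop
  have hftc := intervalIntegral.integral_eq_sub_of_hasDerivAt (a := 0) (b := 1)
    (fun s _ => hderiv s) (hcont.intervalIntegrable _ _)
  simp only [one_smul, zero_smul, add_zero] at hftc
  rw [← hftc, ← intervalIntegral.integral_const_mul]
  refine (sq_intervalIntegral_le hcont).trans (intervalIntegral.integral_mono zero_le_one
    ((hcont.pow 2).intervalIntegrable _ _) (Continuous.intervalIntegrable (by fun_prop) _ _)
    fun s => ?_)
  rw [gradSq_apply, EuclideanSpace.real_norm_sq_eq]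
  exact Finset.sum_mul_sq_le_sq_mul_sq _ _ _

lemma exists_isCompact_forall_notMem_mul_eq_zero {g : SmoothFn n} (hg : g ∈ testIdeal n) :
    ∃ L : Set (Euc n), IsCompact L ∧ ∀ x, ∀ z ∉ L, g x * g (x + z) = 0 := by
  have hK : IsCompact (tsupport g) := hg
  refine ⟨_, (hK.prod hK).image continuous_sub, fun x z hz => ?_⟩
  by_contra h0
  exact hz ⟨(x + z, x), ⟨subset_tsupport _ (right_ne_zero_of_mul h0),
    subset_tsupport _ (left_ne_zero_of_mul h0)⟩, add_sub_cancel_left x z⟩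

lemma exists_mul_mul_norm_sq_le_mul_weight {g : SmoothFn n} (hg : g ∈ testIdeal n) (α : ℝ) :
    ∃ C, 0 ≤ C ∧ ∀ x z, ∀ s ∈ Set.Icc (0 : ℝ) 1,
      g x * g (x + z) * ‖z‖ ^ 2 ≤ C * weight α (x + s • z) := by
  let F : Euc n × Euc n × ℝ → ℝ := fun p =>
    g p.1 * g (p.1 + p.2.1) * ‖p.2.1‖ ^ 2 * weight (-α) (p.1 + p.2.2 • p.2.1)
  have hF : Continuous F := by fun_prop
  have hK : IsCompact (tsupport g) := hg
  obtain ⟨L, hL, hgL⟩ := exists_isCompact_forall_notMem_mul_eq_zero hg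
  have hcompact := hK.prod (hL.prod (isCompact_Icc (a := (0 : ℝ)) (b := 1)))
  obtain ⟨C, hC⟩ := hcompact.bddAbove_image hF.continuousOn
  refine ⟨max C 0, le_max_right _ _, fun x z s hs => ?_⟩
  have hw : weight (-α) (x + s • z) * weight α (x + s • z) = 1 := by
    rw [← SmoothFn.mul_apply, weight_mul_weight, neg_add_cancel, weight_zero, SmoothFn.one_apply]
  rcases eq_or_ne (g x * g (x + z)) 0 with h0 | h0
  · rw [h0, zero_mul]
    exact mul_nonneg (le_max_right _ _) (weight_pos _ _).le
  have hx := subset_tsupport _ (left_ne_zero_of_mul h0)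
  have hz : z ∈ L := by_contra fun hz => h0 (hgL x z hz)
  calc g x * g (x + z) * ‖z‖ ^ 2
      = F (x, z, s) * weight α (x + s • z) := by
        rw [mul_assoc _ (weight (-α) _), hw, mul_one]
    _ ≤ max C 0 * weight α (x + s • z) := by
        gcongr
        · exact (weight_pos _ _).le
        · exact (hC ⟨_, ⟨hx, hz, hs⟩, rfl⟩).trans (le_max_left _ _)

lemma lintegral_lintegral_comp_add {G Z : Type*} [AddGroup G] [MeasurableSpace G]
    [MeasurableAdd₂ G] [MeasurableSpace Z] (μ : Measure G) [SFinite μ] [μ.IsAddRightInvariant]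
    (ν : Measure Z) [SFinite ν] {h : G → ℝ≥0∞} (hh : Measurable h) {T : Z → G}
    (hT : Measurable T) :
    ∫⁻ x, ∫⁻ z, h (x + T z) ∂ν ∂μ = ν Set.univ * ∫⁻ x, h x ∂μ := by
  have hadd : Measurable fun p : G × Z => h (p.1 + T p.2) := hh.comp (by fun_prop)
  rw [lintegral_lintegral_swap hadd.aemeasurable]
  simp only [lintegral_add_right_eq_self h, lintegral_const, mul_comm]

lemma lintegral_setLIntegral_comp_add_smul {h : Euc n → ℝ≥0∞} (hh : Measurable h)
    (L : Set (Euc n)) (S : Set ℝ) :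
    ∫⁻ x, ∫⁻ z in L, ∫⁻ s in S, h (x + s • z) = volume L * volume S * ∫⁻ x, h x := by
  have hprod := lintegral_lintegral_comp_add volume ((volume.restrict L).prod (volume.restrict S))
    hh (T := fun p => p.2 • p.1) (by fun_prop)
  rw [← Set.univ_prod_univ, Measure.prod_prod, Measure.restrict_apply_univ,
    Measure.restrict_apply_univ] at hprod
  rw [← hprod]
  refine lintegral_congr fun x => ?_
  have hx : Measurable fun p : Euc n × ℝ => h (x + p.2 • p.1) := hh.comp (by fun_prop)
  rw [lintegral_prod _ hx.aemeasurable]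

lemma lintegral_ofReal_eq_ofReal_totalIntegral {f : SmoothFn n} (hf : f ∈ testIdeal n)
    (hf0 : ∀ x, 0 ≤ f x) : ∫⁻ x, ENNReal.ofReal (f x) = ENNReal.ofReal (totalIntegral f) :=
  (ofReal_integral_eq_lintegral_ofReal (integrable_of_mem_testIdeal hf)
    (Eventually.of_forall hf0)).symm

lemma ofReal_mul_mul_sq_sub_le {g : SmoothFn n} {α C : ℝ}
    (hC : ∀ x z, ∀ s ∈ Set.Icc (0 : ℝ) 1, g x * g (x + z) * ‖z‖ ^ 2 ≤ C * weight α (x + s • z))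
    (hg0 : ∀ x, 0 ≤ g x) (V : SmoothFn n) (x z : Euc n) :
    ENNReal.ofReal (g x * g (x + z) * (V (x + z) - V x) ^ 2) ≤
      ∫⁻ s in Set.Ioc (0 : ℝ) 1,
        ENNReal.ofReal ((C • (weight α * gradSq V) : SmoothFn n) (x + s • z)) := by
  have hcont : Continuous fun s : ℝ => g x * g (x + z) * ‖z‖ ^ 2 * gradSq V (x + s • z) := by
    fun_prop
  have hnonneg : ∀ s : ℝ, 0 ≤ g x * g (x + z) * ‖z‖ ^ 2 * gradSq V (x + s • z) := fun s =>
    mul_nonneg (mul_nonneg (mul_nonneg (hg0 _) (hg0 _)) (sq_nonneg _)) (gradSq_nonneg _ _)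
  calc ENNReal.ofReal (g x * g (x + z) * (V (x + z) - V x) ^ 2)
      ≤ ENNReal.ofReal (∫ s in (0 : ℝ)..1, g x * g (x + z) * ‖z‖ ^ 2 * gradSq V (x + s • z)) := by
        rw [intervalIntegral.integral_const_mul, mul_assoc (g x * g (x + z))]
        gcongr
        · exact mul_nonneg (hg0 _) (hg0 _)
        · exact sq_sub_le_norm_sq_mul_integral_gradSq V x z
    _ = ∫⁻ s in Set.Ioc (0 : ℝ) 1,
          ENNReal.ofReal (g x * g (x + z) * ‖z‖ ^ 2 * gradSq V (x + s • z)) := by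
        rw [intervalIntegral.integral_of_le zero_le_one]
        exact ofReal_integral_eq_lintegral_ofReal hcont.integrableOn_Ioc
          (Eventually.of_forall hnonneg)
    _ ≤ _ := setLIntegral_mono' measurableSet_Ioc fun s hs => by
        rw [SmoothFn.smul_apply, SmoothFn.mul_apply, ← mul_assoc]
        exact ENNReal.ofReal_le_ofReal (mul_le_mul_of_nonneg_right
          (hC x z s (Set.Ioc_subset_Icc_self hs)) (gradSq_nonneg _ _))

lemma exists_lintegral_mul_mul_sq_sub_le {g : SmoothFn n} (hg : g ∈ testIdeal n)
    (hg0 : ∀ x, 0 ≤ g x) : ∃ C, 0 ≤ C ∧ ∀ V ∈ testIdeal n,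
      ∫⁻ x, ∫⁻ y, ENNReal.ofReal (g x * g y * (V y - V x) ^ 2) ≤
        ENNReal.ofReal (C * sphereEnergy 0 1 V) := by
  obtain ⟨C, hC, hbound⟩ := exists_mul_mul_norm_sq_le_mul_weight hg (n - 2)
  obtain ⟨L, hL, hgL⟩ := exists_isCompact_forall_notMem_mul_eq_zero hg
  refine ⟨volume.real L * C, by positivity, fun V hV => ?_⟩
  set f : SmoothFn n := C • (weight (n - 2) * gradSq V) with hf
  have hf_mem : f ∈ testIdeal n :=
    smul_mem_testIdeal C (Ideal.mul_mem_left _ _ (gradSq_mem_testIdeal hV))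
  have hf_nonneg : ∀ x, 0 ≤ f x := fun x => by
    rw [hf, SmoothFn.smul_apply, SmoothFn.mul_apply]
    exact mul_nonneg hC (mul_nonneg (weight_pos _ x).le (gradSq_nonneg V x))
  have hpointwise : ∀ x z, ENNReal.ofReal (g x * g (x + z) * (V (x + z) - V x) ^ 2) ≤
      L.indicator (fun z => ∫⁻ s in Set.Ioc (0 : ℝ) 1, ENNReal.ofReal (f (x + s • z))) z :=
    fun x z => by
      by_cases hz : z ∈ L
      · rw [Set.indicator_of_mem hz]
        exact ofReal_mul_mul_sq_sub_le hbound hg0 V x z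
      · simp [hgL x z hz]
  calc ∫⁻ x, ∫⁻ y, ENNReal.ofReal (g x * g y * (V y - V x) ^ 2)
      = ∫⁻ x, ∫⁻ z, ENNReal.ofReal (g x * g (x + z) * (V (x + z) - V x) ^ 2) :=
        lintegral_congr fun x => (lintegral_add_left_eq_self
          (fun y => ENNReal.ofReal (g x * g y * (V y - V x) ^ 2)) x).symm
    _ ≤ ∫⁻ x, ∫⁻ z in L, ∫⁻ s in Set.Ioc (0 : ℝ) 1, ENNReal.ofReal (f (x + s • z)) :=
        lintegral_mono fun x => by
          rw [← lintegral_indicator hL.measurableSet]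
          exact lintegral_mono (hpointwise x)
    _ = volume L * ENNReal.ofReal (C * sphereEnergy 0 1 V) := by
        rw [lintegral_setLIntegral_comp_add_smul f.continuous.measurable.ennreal_ofReal,
          lintegral_ofReal_eq_ofReal_totalIntegral hf_mem hf_nonneg, hf, totalIntegral_smul,
          sphereEnergy_zero_one hV]
        simp
    _ = ENNReal.ofReal (volume.real L * C * sphereEnergy 0 1 V) := by
        rw [mul_assoc, ENNReal.ofReal_mul measureReal_nonneg,
          ofReal_measureReal hL.measure_lt_top.ne]

lemma totalIntegral_mul_sub_algebraMap_sq {g : SmoothFn n} (hg : g ∈ testIdeal n) (V : SmoothFn n)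
    (c : ℝ) :
    totalIntegral (g * (V - algebraMap ℝ _ c) ^ 2) =
      totalIntegral (g * (V * V)) - 2 * c * totalIntegral (g * V) + c ^ 2 * totalIntegral g := by
  have hgV : ∀ W : SmoothFn n, g * W ∈ testIdeal n := fun W => Ideal.mul_mem_right _ _ hg
  have hexpand : g * (V - algebraMap ℝ _ c) ^ 2 =
      g * (V * V) - (2 * c) • (g * V) + c ^ 2 • g := by
    simp only [Algebra.smul_def, map_mul, map_pow, map_ofNat]
    ring
  rw [hexpand, totalIntegral_add (sub_mem (hgV _) (smul_mem_testIdeal _ (hgV _)))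
    (smul_mem_testIdeal _ hg), totalIntegral_sub (hgV _) (smul_mem_testIdeal _ (hgV _)),
    totalIntegral_smul, totalIntegral_smul]

lemma lintegral_lintegral_mul_mul_sq_sub {g : SmoothFn n} (hg : g ∈ testIdeal n)
    (hg0 : ∀ x, 0 ≤ g x) (V : SmoothFn n) :
    ∫⁻ x, ∫⁻ y, ENNReal.ofReal (g x * g y * (V y - V x) ^ 2) =
      ENNReal.ofReal (2 * (totalIntegral g * totalIntegral (g * (V * V)) -
        totalIntegral (g * V) ^ 2)) := by
  have hgV : ∀ W : SmoothFn n, g * W ∈ testIdeal n := fun W => Ideal.mul_mem_right _ _ hg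
  have hinner : ∀ x, ∫⁻ y, ENNReal.ofReal (g x * g y * (V y - V x) ^ 2) =
      ENNReal.ofReal (g x * totalIntegral (g * (V - algebraMap ℝ _ (V x)) ^ 2)) := fun x => by
    rw [← totalIntegral_smul, ← lintegral_ofReal_eq_ofReal_totalIntegral
      (smul_mem_testIdeal _ (hgV _))
      fun y => mul_nonneg (hg0 x) (mul_nonneg (hg0 y) (sq_nonneg _))]
    exact lintegral_congr fun y => by rw [mul_assoc]; rfl
  let F : SmoothFn n := totalIntegral (g * (V * V)) • g - (2 * totalIntegral (g * V)) • (g * V) +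
    totalIntegral g • (g * (V * V))
  have hF : ∀ x, F x = g x * totalIntegral (g * (V - algebraMap ℝ _ (V x)) ^ 2) := fun x => by
    simp only [F, totalIntegral_mul_sub_algebraMap_sq hg, SmoothFn.add_apply, SmoothFn.sub_apply,
      SmoothFn.smul_apply, SmoothFn.mul_apply]
    ring
  have hF_mem : totalIntegral (g * (V * V)) • g - (2 * totalIntegral (g * V)) • (g * V) ∈
      testIdeal n := sub_mem (smul_mem_testIdeal _ hg) (smul_mem_testIdeal _ (hgV _))
  have hF_nonneg : ∀ x, 0 ≤ F x := fun x => by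
    rw [hF]
    exact mul_nonneg (hg0 x) (totalIntegral_nonneg fun y => mul_nonneg (hg0 y) (sq_nonneg _))
  simp only [hinner, ← hF]
  rw [lintegral_ofReal_eq_ofReal_totalIntegral
    (add_mem hF_mem (smul_mem_testIdeal _ (hgV _))) hF_nonneg,
    totalIntegral_add hF_mem (smul_mem_testIdeal _ (hgV _)),
    totalIntegral_sub (smul_mem_testIdeal _ hg) (smul_mem_testIdeal _ (hgV _)),
    totalIntegral_smul, totalIntegral_smul, totalIntegral_smul]
  congr 1
  ring

lemma exists_totalIntegral_mul_le {g : SmoothFn n} (hg : g ∈ testIdeal n) (hg0 : ∀ x, 0 ≤ g x) :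
    ∃ C, 0 ≤ C ∧ ∀ V ∈ testIdeal n, totalIntegral g * totalIntegral (g * (V * V)) ≤
      totalIntegral (g * V) ^ 2 + C * sphereEnergy 0 1 V := by
  obtain ⟨C, hC, hle⟩ := exists_lintegral_mul_mul_sq_sub_le hg hg0
  refine ⟨C / 2, by positivity, fun V hV => ?_⟩
  have h := hle V hV
  rw [lintegral_lintegral_mul_mul_sq_sub hg hg0, ENNReal.ofReal_le_ofReal_iff
    (mul_nonneg hC (sphereEnergy_zero_nonneg 1 hV))] at h
  linarith

/-! ### Passage to the critical exponent -/

lemma exists_sq_le_mul_abs_rpow_add {δ p : ℝ} (hδ : 0 < δ) (hp : 2 < p) :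
    ∃ K : ℝ, 0 ≤ K ∧ ∀ q, p ≤ q → ∀ x : ℝ, x ^ 2 ≤ δ * |x| ^ q + K := by
  have hp' : 0 < p - 2 := sub_pos.2 hp
  set L := max 1 (δ⁻¹ ^ (p - 2)⁻¹)
  refine ⟨L ^ 2, by positivity, fun q hq x => ?_⟩
  rcases le_or_gt |x| L with hx | hx
  · have : x ^ 2 ≤ L ^ 2 := by
      rw [← sq_abs]
      gcongr
    have : 0 ≤ δ * |x| ^ q := by positivity
    linarith
  · have hx1 : 1 ≤ |x| := (le_max_left _ _).trans hx.le
    have hlarge : δ⁻¹ ≤ |x| ^ (q - 2) :=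
      calc δ⁻¹ = (δ⁻¹ ^ (p - 2)⁻¹) ^ (p - 2) :=
            (Real.rpow_inv_rpow (by positivity) hp'.ne').symm
        _ ≤ |x| ^ (p - 2) := by
            gcongr
            exact (le_max_right _ _).trans hx.le
        _ ≤ |x| ^ (q - 2) := Real.rpow_le_rpow_of_exponent_le hx1 (by linarith)
    have hsq : x ^ 2 ≤ δ * |x| ^ q :=
      calc x ^ 2 = δ * (δ⁻¹ * |x| ^ 2) := by rw [mul_inv_cancel_left₀ hδ.ne', sq_abs]
        _ ≤ δ * (|x| ^ (q - 2) * |x| ^ 2) := by gcongr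
        _ = δ * |x| ^ q := by
            rw [← Real.rpow_natCast |x| 2, ← Real.rpow_add (by linarith), Nat.cast_ofNat,
              sub_add_cancel]
    have : 0 ≤ L ^ 2 := by positivity
    linarith

lemma abs_rpow_le_add {p q r : ℝ} (hp : 0 ≤ p) (hpq : p ≤ q) (hqr : q ≤ r) (x : ℝ) :
    |x| ^ q ≤ |x| ^ p + |x| ^ r := by
  rcases le_total |x| 1 with hx | hx
  · exact (Real.rpow_le_rpow_of_exponent_ge' (abs_nonneg x) hx hp hpq).trans
      (le_add_of_nonneg_right (by positivity))
  · exact (Real.rpow_le_rpow_of_exponent_le hx hqr).trans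
      (le_add_of_nonneg_left (by positivity))

lemma weight_le_two_rpow {α β : ℝ} (hα : 0 ≤ α) (hαβ : α ≤ β) (x : Euc n) :
    weight α x ≤ 2 ^ β :=
  calc weight α x ≤ 2 ^ α := by
        rw [weight_apply]
        gcongr
        exact div_le_self two_pos.le (le_add_of_nonneg_right (sq_nonneg _))
    _ ≤ 2 ^ β := Real.rpow_le_rpow_of_exponent_le one_le_two hαβ

lemma tendsto_density {k : ℕ} (hn : 2 * k < n) (u : SmoothFn n) (x : Euc n) :
    Tendsto (fun q => density k q u x) (𝓝 (critExp n k)) (𝓝 (|u x| ^ critExp n k)) := by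
  have hbase : (2 / (1 + ‖x‖ ^ 2) : ℝ) ≠ 0 := by positivity
  have hweight : Continuous fun q => weight (subcritExp n k q) x := by
    simp only [weight_apply, subcritExp]
    exact continuous_const.rpow (by fun_prop) fun _ => Or.inl hbase
  have hlim : weight (subcritExp n k (critExp n k)) x = 1 := by
    rw [subcritExp_eq hn, sub_self, zero_mul, weight_zero, SmoothFn.one_apply]
  simpa only [density, hlim, mul_one] using
    (Real.continuousAt_const_rpow' (critExp_pos hn).ne').tendsto.mul (hweight.tendsto _)

lemma tendsto_qMass {k : ℕ} (hn : 2 * k < n) {u : SmoothFn n} (hu : u ∈ testIdeal n) :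
    Tendsto (fun q => qMass k q u) (𝓝[<] critExp n k) (𝓝 (∫ x, |u x| ^ critExp n k)) := by
  have hQ := critExp_pos hn
  have hq : ∀ᶠ q in 𝓝[<] critExp n k, q ∈ Set.Ioo (critExp n k / 2) (critExp n k) :=
    Ioo_mem_nhdsLT (half_lt_self hQ)
  refine tendsto_integral_filter_of_dominated_convergence
    (fun x => (|u x| ^ (critExp n k / 2) + |u x| ^ critExp n k) * 2 ^ (n : ℝ)) ?_ ?_ ?_
    (Eventually.of_forall fun x => (tendsto_density hn u x).mono_left nhdsWithin_le_nhds)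
  · filter_upwards [hq] with q hq
    exact (continuous_density (by linarith [hq.1]) u).aestronglyMeasurable
  · filter_upwards [hq] with q hq
    refine Eventually.of_forall fun x => ?_
    rw [Real.norm_of_nonneg (density_nonneg k q u x), density]
    gcongr
    · exact (weight_pos _ x).le
    · exact abs_rpow_le_add (by positivity) hq.1.le hq.2.le (u x)
    · refine weight_le_two_rpow ?_ ?_ x
      · rw [subcritExp_eq hn]
        exact mul_nonneg (sub_nonneg.2 hq.2.le) (confExp_pos hn).le
      · exact sub_le_self _ (mul_nonneg (by linarith [hq.1]) (confExp_pos hn).le)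
  · exact ((memLp_one_iff_integrable.1 (memLp_rpow_of_mem_testIdeal (half_pos hQ) hu 1)).add
      (memLp_one_iff_integrable.1 (memLp_rpow_of_mem_testIdeal hQ hu 1))).mul_const _

/-- Test functions with values in `[0, 1]`, used to approximate the constant function `1` on the
sphere. -/
structure IsCutoff (Φ : SmoothFn n) : Prop where
  mem_testIdeal : Φ ∈ testIdeal n
  nonneg : ∀ x, 0 ≤ Φ x
  le_one : ∀ x, Φ x ≤ 1

variable {k : ℕ} {q : ℝ} {Φ : SmoothFn n}

lemma IsCutoff.mul_mem_testIdeal (hΦ : IsCutoff Φ) (f : SmoothFn n) : f * Φ ∈ testIdeal n :=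
  Ideal.mul_mem_left _ _ hΦ.mem_testIdeal

lemma IsCutoff.weight_mul_nonneg (hΦ : IsCutoff Φ) (α : ℝ) (x : Euc n) :
    0 ≤ (weight α * Φ : SmoothFn n) x :=
  mul_nonneg (weight_pos α x).le (hΦ.nonneg x)

lemma IsCutoff.weight_mul_le (hΦ : IsCutoff Φ) (α : ℝ) (x : Euc n) :
    (weight α * Φ : SmoothFn n) x ≤ weight α x :=
  mul_le_of_le_one_right (weight_pos α x).le (hΦ.le_one x)

lemma IsCutoff.qMass_weight_mul_le_sphereVol (hn : 0 < n) (hΦ : IsCutoff Φ) (k : ℕ)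
    (hq : 0 ≤ q) : qMass k q (weight (confExp n k) * Φ) ≤ sphereVol n := by
  refine integral_mono_of_nonneg (Eventually.of_forall (density_nonneg _ _ _))
    (integrable_weight hn) (Eventually.of_forall fun x => ?_)
  simp only [density_weight_mul, abs_of_nonneg (hΦ.nonneg x)]
  exact mul_le_of_le_one_left (weight_pos _ x).le
    (Real.rpow_le_one (hΦ.nonneg x) (hΦ.le_one x) hq)

lemma exists_isCutoff_tendsto (hn : 0 < n) : ∃ Φ : ℕ → SmoothFn n, (∀ j, IsCutoff (Φ j)) ∧
    Tendsto (fun j => totalIntegral (weight n * Φ j)) atTop (𝓝 (sphereVol n)) := by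
  let bump : ℕ → ContDiffBump (0 : Euc n) := fun j => ⟨j + 1, j + 2, by positivity, by linarith⟩
  let Φ : ℕ → SmoothFn n := fun j =>
    ⟨bump j, show ContDiff ℝ ∞ (bump j) from (bump j).contDiff⟩
  have hΦ : ∀ j, IsCutoff (Φ j) := fun j =>
    ⟨(bump j).hasCompactSupport, fun _ => (bump j).nonneg, fun _ => (bump j).le_one⟩
  refine ⟨Φ, hΦ, tendsto_integral_of_dominated_convergence (weight (n : ℝ))
    (fun j => (SmoothFn.continuous _).aestronglyMeasurable) (integrable_weight hn)
    (fun j => Eventually.of_forall fun x => ?_) (Eventually.of_forall fun x => ?_)⟩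
  · rw [Real.norm_of_nonneg ((hΦ j).weight_mul_nonneg _ x)]
    exact (hΦ j).weight_mul_le _ x
  · refine tendsto_const_nhds.congr' ?_
    obtain ⟨N, hN⟩ := exists_nat_gt ‖x‖
    filter_upwards [eventually_ge_atTop N] with j hj
    have hNj : (N : ℝ) ≤ j := by exact_mod_cast hj
    have hx : x ∈ Metric.closedBall 0 (bump j).rIn := by
      rw [mem_closedBall_zero_iff]
      change ‖x‖ ≤ j + 1
      linarith
    rw [SmoothFn.mul_apply, show Φ j x = 1 from (bump j).one_of_mem_closedBall hx, mul_one]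

/-- The `L²` mass outside the cutoff is small because `q > 2`. -/
lemma IsCutoff.totalIntegral_weight_mul_sq_le (hn : 0 < n) (hΦ : IsCutoff Φ) {δ K : ℝ}
    (hδ : 0 ≤ δ) (hK : ∀ x : ℝ, x ^ 2 ≤ δ * |x| ^ q + K) {V : SmoothFn n} (hV : V ∈ testIdeal n)
    (hmass : qMass k q (weight (confExp n k) * V) = 1) :
    totalIntegral (weight n * (V * V)) ≤ totalIntegral (weight n * Φ * (V * V)) +
      (δ + K * (sphereVol n - totalIntegral (weight n * Φ))) := by
  have hdensity : Integrable (density k q (weight (confExp n k) * V)) :=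
    .of_integral_ne_zero (hmass.trans_ne one_ne_zero)
  have hweightΦ := integrable_of_mem_testIdeal (hΦ.mul_mem_testIdeal (weight n))
  have hdiff : Integrable fun x => weight n x - (weight n * Φ : SmoothFn n) x :=
    (integrable_weight hn).sub hweightΦ
  have hVV : ∀ f : SmoothFn n, f * (V * V) ∈ testIdeal n := fun f =>
    Ideal.mul_mem_left _ _ (Ideal.mul_mem_left _ _ hV)
  rw [← sub_le_iff_le_add', ← totalIntegral_sub (hVV _) (hVV _)]
  calc totalIntegral (weight n * (V * V) - weight n * Φ * (V * V))
      ≤ ∫ x, (δ * density k q (weight (confExp n k) * V) x +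
          K * (weight n x - (weight n * Φ : SmoothFn n) x)) := by
        refine integral_mono (integrable_of_mem_testIdeal (sub_mem (hVV _) (hVV _)))
          ((hdensity.const_mul δ).add (hdiff.const_mul K)) fun x => ?_
        simp only [SmoothFn.sub_apply, SmoothFn.mul_apply, density_weight_mul]
        have hsq : (1 - Φ x) * V x ^ 2 ≤ (1 - Φ x) * (δ * |V x| ^ q + K) :=
          mul_le_mul_of_nonneg_left (hK _) (sub_nonneg.2 (hΦ.le_one x))
        have hdrop : 0 ≤ Φ x * (δ * |V x| ^ q) := mul_nonneg (hΦ.nonneg x) (by positivity)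
        have := mul_le_mul_of_nonneg_left (hsq.trans (by linarith :
          _ ≤ δ * |V x| ^ q + (1 - Φ x) * K)) (weight_pos (n : ℝ) x).le
        linarith
    _ = δ + K * (sphereVol n - totalIntegral (weight n * Φ)) := by
        rw [integral_add (hdensity.const_mul δ) (hdiff.const_mul K), integral_const_mul,
          integral_const_mul, integral_sub (integrable_weight hn) hweightΦ,
          show ∫ x, density k q (weight (confExp n k) * V) x = 1 from hmass, mul_one]
        rfl

lemma IsCutoff.exists_abs_totalIntegral_le (hn : 2 * (k + 1) < n) (hΦ : IsCutoff Φ) :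
    ∃ C, 0 ≤ C ∧ ∀ V ∈ testIdeal n, gjmsConst n (k + 1) * |totalIntegral (weight n * Φ * V)| ≤
      |sphereForm (k + 1) V Φ| + √(C * sphereEnergy k 1 V) := by
  obtain ⟨C, hC, hgap⟩ := exists_gapForm_self_le hn
  let Φ' : testIdeal n := ⟨Φ, hΦ.mem_testIdeal⟩
  have hΦgap : 0 ≤ gapForm n (k + 1) Φ' Φ' := gapForm_self_nonneg hn Φ'
  refine ⟨C * gapForm n (k + 1) Φ' Φ', by positivity, fun V hV => ?_⟩
  have hcross : |gapForm n (k + 1) ⟨V, hV⟩ Φ'| ≤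
      √(C * gapForm n (k + 1) Φ' Φ' * sphereEnergy k 1 V) := by
    refine Real.abs_le_sqrt ((gapForm_sq_le hn _ _).trans ?_)
    rw [mul_right_comm]
    gcongr
    exact hgap ⟨V, hV⟩
  have hzero : sphereForm 0 V Φ = totalIntegral (weight n * Φ * V) := by
    rw [sphereForm_zero, mul_comm V, mul_assoc]
  calc gjmsConst n (k + 1) * |totalIntegral (weight n * Φ * V)|
      = |sphereForm (k + 1) V Φ - gapForm n (k + 1) ⟨V, hV⟩ Φ'| := by
        rw [gapForm_apply, sub_sub_cancel, hzero, abs_mul, abs_of_pos (gjmsConst_pos hn)]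
    _ ≤ |sphereForm (k + 1) V Φ| + |gapForm n (k + 1) ⟨V, hV⟩ Φ'| := abs_sub _ _
    _ ≤ _ := by gcongr

lemma IsCutoff.exists_totalIntegral_mul_le (hn : 2 * k < n) (hΦ : IsCutoff Φ) :
    ∃ C, 0 ≤ C ∧ ∀ V ∈ testIdeal n,
      totalIntegral (weight n * Φ) * totalIntegral (weight n * Φ * (V * V)) ≤
        totalIntegral (weight n * Φ * V) ^ 2 + C * sphereEnergy k 1 V := by
  obtain ⟨C, hC, hpoincare⟩ := SharpSobolev.exists_totalIntegral_mul_le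
    (hΦ.mul_mem_testIdeal (weight n)) (hΦ.weight_mul_nonneg _)
  have hΛ := gjmsConst_pos hn
  refine ⟨C / gjmsConst n k, by positivity, fun V hV => (hpoincare V hV).trans ?_⟩
  rw [div_mul_eq_mul_div, mul_div_assoc]
  gcongr
  rw [le_div_iff₀' hΛ]
  exact gjmsConst_mul_sphereEnergy_le hn 1 hV

lemma IsCutoff.exists_gjmsConst_mul_le (hn : 2 * (k + 1) < n) (hΦ : IsCutoff Φ) :
    ∃ A B C : ℝ, 0 ≤ B ∧ ∀ V ∈ testIdeal n, ∀ q δ K D, 0 ≤ δ →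
      (∀ x : ℝ, x ^ 2 ≤ δ * |x| ^ q + K) → qMass (k + 1) q (weight (confExp n (k + 1)) * V) = 1 →
      sphereEnergy k 1 V ≤ D →
      gjmsConst n (k + 1) * totalIntegral (weight n * Φ) *
        (sphereForm (k + 1) V V - A * D - gjmsConst n (k + 1) *
          (δ + K * (sphereVol n - totalIntegral (weight n * Φ)))) ≤
      (|sphereForm (k + 1) V Φ| + √(B * D)) ^ 2 + C * D := by
  obtain ⟨A, hA, hgap⟩ := exists_gapForm_self_le hn
  obtain ⟨B, hB, hmean⟩ := hΦ.exists_abs_totalIntegral_le hn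
  obtain ⟨C, hC, hpoincare⟩ := hΦ.exists_totalIntegral_mul_le (k := k) (by omega)
  have hΛ := gjmsConst_pos hn
  set Λ := gjmsConst n (k + 1)
  set G := totalIntegral (weight n * Φ)
  have hG : 0 ≤ G := totalIntegral_nonneg (hΦ.weight_mul_nonneg _)
  refine ⟨A, B, Λ ^ 2 * C, hB, fun V hV q δ K D hδ hK hmass hD => ?_⟩
  have hlower : sphereForm (k + 1) V V - A * D - Λ * (δ + K * (sphereVol n - G)) ≤
      Λ * totalIntegral (weight n * Φ * (V * V)) := by
    have hV_gap := hgap ⟨V, hV⟩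
    have htail := mul_le_mul_of_nonneg_left
      (hΦ.totalIntegral_weight_mul_sq_le (by omega) hδ hK hV hmass) hΛ.le
    rw [gapForm_apply, sphereForm_zero] at hV_gap
    linarith [mul_le_mul_of_nonneg_left hD hA]
  calc Λ * G * (sphereForm (k + 1) V V - A * D - Λ * (δ + K * (sphereVol n - G)))
      ≤ Λ * G * (Λ * totalIntegral (weight n * Φ * (V * V))) := by gcongr
    _ = Λ ^ 2 * (G * totalIntegral (weight n * Φ * (V * V))) := by ring
    _ ≤ Λ ^ 2 * (totalIntegral (weight n * Φ * V) ^ 2 + C * sphereEnergy k 1 V) := by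
        gcongr
        exact hpoincare V hV
    _ = (Λ * |totalIntegral (weight n * Φ * V)|) ^ 2 + Λ ^ 2 * C * sphereEnergy k 1 V := by
        rw [mul_pow Λ |_|, sq_abs]
        ring
    _ ≤ (|sphereForm (k + 1) V Φ| + √(B * D)) ^ 2 + Λ ^ 2 * C * D := by
        gcongr
        exact (hmean V hV).trans (by gcongr)

lemma le_of_forall_pos_le_of_continuous {f g : ℝ → ℝ} (hf : Continuous f) (hg : Continuous g)
    (hfg : ∀ η, 0 < η → f η ≤ g η) : f 0 ≤ g 0 :=
  le_of_tendsto_of_tendsto (b := 𝓝[>] 0) ((hf.tendsto 0).mono_left nhdsWithin_le_nhds)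
    ((hg.tendsto 0).mono_left nhdsWithin_le_nhds) (eventually_mem_nhdsWithin.mono hfg)

/-- The distance of `q` from the critical exponent, normalized to be `1` at `q = 2`; it is the order
of magnitude of `sphereEnergy` along a minimizing sequence for `subcritConst`. -/
noncomputable def relGap (n k : ℕ) (q : ℝ) : ℝ := (critExp n k - q) / (critExp n k - 2)

lemma tendsto_relGap (n k : ℕ) : Tendsto (relGap n k) (𝓝 (critExp n k)) (𝓝 0) := by
  have h : Continuous (relGap n k) := by
    unfold relGap
    fun_prop
  simpa [relGap] using h.tendsto (critExp n k)

/-- Along a minimizing sequence `sphereEnergy k 1` is of order `critExp - q`, so for `q` close to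
`critExp` its members are almost constant on the sphere, and are compared with `Φ` in the limit. -/
lemma IsCutoff.exists_gjmsConst_mul_subcritConst_le (hn : 2 * (k + 1) < n) (hΦ : IsCutoff Φ) :
    ∃ A B C : ℝ, 0 ≤ B ∧ ∀ q δ K, 2 < q → q < critExp n (k + 1) → 0 ≤ δ →
      (∀ x : ℝ, x ^ 2 ≤ δ * |x| ^ q + K) →
      gjmsConst n (k + 1) * totalIntegral (weight n * Φ) *
        (subcritConst n (k + 1) q - A * (relGap n (k + 1) q * subcritConst n (k + 1) q) -
          gjmsConst n (k + 1) * (δ + K * (sphereVol n - totalIntegral (weight n * Φ)))) ≤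
      (subcritConst n (k + 1) q * sphereVol n ^ q⁻¹ +
        √(B * (relGap n (k + 1) q * subcritConst n (k + 1) q))) ^ 2 +
        C * (relGap n (k + 1) q * subcritConst n (k + 1) q) := by
  obtain ⟨A, B, C, hB, hle⟩ := hΦ.exists_gjmsConst_mul_le hn
  refine ⟨A, B, C, hB, fun q δ K hq hq' hδ hK => ?_⟩
  have hΛ := gjmsConst_pos hn
  have hG : 0 ≤ totalIntegral (weight n * Φ) := totalIntegral_nonneg (hΦ.weight_mul_nonneg _)
  have ha := (subcritConst_pos hn hq.le hq').le
  have hQ : 0 < critExp n (k + 1) - 2 := by linarith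
  set D := relGap n (k + 1) q * subcritConst n (k + 1) q with hD
  obtain ⟨v, hv⟩ := exists_isMinimizingSeq (k := k + 1) hn (by linarith : 0 < q)
  suffices ∀ η, 0 < η → gjmsConst n (k + 1) * totalIntegral (weight n * Φ) *
      (subcritConst n (k + 1) q - A * (D + η) - gjmsConst n (k + 1) *
        (δ + K * (sphereVol n - totalIntegral (weight n * Φ)))) ≤
      (subcritConst n (k + 1) q * sphereVol n ^ q⁻¹ + η + √(B * (D + η))) ^ 2 + C * (D + η) by
    simpa using le_of_forall_pos_le_of_continuous (by fun_prop) (by fun_prop) this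
  intro η hη
  obtain ⟨j, henergy, hvariation⟩ := ((hv.eventually_sphereEnergy_one_le hn hq.le hq'
    (mul_pos hQ hη)).and (hv.eventually_abs_energy_le hn (by linarith) ha
      (hΦ.mul_mem_testIdeal (weight (confExp n (k + 1)))) hη)).exists
  set V := weight (-confExp n (k + 1)) * v j
  have hVv : weight (confExp n (k + 1)) * V = v j := weight_mul_weight_neg_mul _ _
  have hD' : sphereEnergy k 1 V ≤ D + η := by
    rw [hD, relGap, div_mul_eq_mul_div, div_add' _ _ _ hQ.ne', le_div_iff₀' hQ]
    linarith
  have hform : subcritConst n (k + 1) q ≤ sphereForm (k + 1) V V := by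
    rw [sphereForm, hVv]
    exact subcritConst_le_energy hn (hv.mem_testIdeal j) (hv.qMass_eq_one j)
  have hcross : |sphereForm (k + 1) V Φ| ≤ subcritConst n (k + 1) q * sphereVol n ^ q⁻¹ + η := by
    rw [sphereForm, hVv]
    refine hvariation.trans ?_
    gcongr
    · exact qMass_nonneg _ _ _
    · exact hΦ.qMass_weight_mul_le_sphereVol (by omega) (k + 1) (by linarith)
  have h := hle V (Ideal.mul_mem_left _ _ (hv.mem_testIdeal j)) q δ K _ hδ hK
    (hVv ▸ hv.qMass_eq_one j) hD'
  refine le_trans ?_ (h.trans ?_) <;> gcongr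

lemma IsCutoff.totalIntegral_weight_mul_le_sphereVol (hn : 0 < n) (hΦ : IsCutoff Φ) :
    totalIntegral (weight n * Φ) ≤ sphereVol n :=
  integral_mono (integrable_of_mem_testIdeal (hΦ.mul_mem_testIdeal _)) (integrable_weight hn)
    (hΦ.weight_mul_le _)

lemma IsCutoff.exists_gjmsConst_mul_one_sub_le (hn : 2 * (k + 1) < n) (hΦ : IsCutoff Φ) :
    ∃ A B C : ℝ, ∀ q δ K S T, 2 < q → q < critExp n (k + 1) → 0 ≤ δ → 0 ≤ K →
      (∀ x : ℝ, x ^ 2 ≤ δ * |x| ^ q + K) → 0 < S → S ≤ subcritConst n (k + 1) q →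
      subcritConst n (k + 1) q ≤ T →
      gjmsConst n (k + 1) * totalIntegral (weight n * Φ) *
        (1 - A * relGap n (k + 1) q - gjmsConst n (k + 1) *
          (δ + K * (sphereVol n - totalIntegral (weight n * Φ))) / S) ≤
      (√T * sphereVol n ^ q⁻¹ + √(B * relGap n (k + 1) q)) ^ 2 + C * relGap n (k + 1) q := by
  obtain ⟨A, B, C, hB, hle⟩ := hΦ.exists_gjmsConst_mul_subcritConst_le hn
  refine ⟨A, B, C, fun q δ K S T hq hq' hδ hK0 hK hS hSa haT => ?_⟩
  have h := hle q δ K hq hq' hδ hK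
  have hΛ := gjmsConst_pos hn
  have hG := totalIntegral_nonneg (hΦ.weight_mul_nonneg n)
  have hθ := sub_nonneg.2 (hΦ.totalIntegral_weight_mul_le_sphereVol (by omega))
  have hvol := sphereVol_pos (n := n) (by omega)
  have hε : 0 ≤ relGap n (k + 1) q := div_nonneg (by linarith) (by linarith)
  set ε := relGap n (k + 1) q
  set Λ := gjmsConst n (k + 1)
  set G := totalIntegral (weight n * Φ)
  set θ := sphereVol n - G
  set a := subcritConst n (k + 1) q
  have ha : 0 < a := hS.trans_le hSa
  have hsqrt : a * sphereVol n ^ q⁻¹ + √(B * (ε * a)) =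
      √a * (√a * sphereVol n ^ q⁻¹ + √(B * ε)) := by
    rw [← mul_assoc B, Real.sqrt_mul (by positivity), mul_add, ← mul_assoc,
      Real.mul_self_sqrt ha.le, mul_comm √(B * ε)]
  have hdiv : Λ * G * (1 - A * ε - Λ * (δ + K * θ) / a) ≤
      (√a * sphereVol n ^ q⁻¹ + √(B * ε)) ^ 2 + C * ε := by
    rw [hsqrt, mul_pow, Real.sq_sqrt ha.le] at h
    refine le_of_mul_le_mul_left (le_of_eq_of_le ?_ (h.trans_eq ?_)) ha
    · field_simp
    · ring
  refine le_trans ?_ (hdiv.trans ?_) <;> gcongr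

lemma IsCutoff.gjmsConst_mul_one_sub_le (hn : 2 * (k + 1) < n) (hΦ : IsCutoff Φ) {u : SmoothFn n}
    (hu : u ∈ testIdeal n) (hint : 0 < ∫ x, |u x| ^ critExp n (k + 1)) {S δ K p : ℝ} (hS : 0 < S)
    (hSa : ∀ q, 2 ≤ q → q < critExp n (k + 1) → S ≤ subcritConst n (k + 1) q) (hδ : 0 ≤ δ)
    (hK0 : 0 ≤ K) (hp : 2 < p) (hp' : p < critExp n (k + 1))
    (hK : ∀ q, p ≤ q → ∀ x : ℝ, x ^ 2 ≤ δ * |x| ^ q + K) :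
    gjmsConst n (k + 1) * totalIntegral (weight n * Φ) * (1 - gjmsConst n (k + 1) *
        (δ + K * (sphereVol n - totalIntegral (weight n * Φ))) / S) ≤
      energy (k + 1) u u / (∫ x, |u x| ^ critExp n (k + 1)) ^ (2 / critExp n (k + 1)) *
        sphereVol n ^ (2 / critExp n (k + 1)) := by
  obtain ⟨A, B, C, hle⟩ := hΦ.exists_gjmsConst_mul_one_sub_le hn
  have hvol := sphereVol_pos (n := n) (by omega)
  have hu_energy := energy_self_nonneg hn hu
  set Q := critExp n (k + 1)
  have hQ : Q ≠ 0 := by linarith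
  have hq : Tendsto (fun q : ℝ => q) (𝓝[<] Q) (𝓝 Q) := tendsto_id.mono_left nhdsWithin_le_nhds
  have hmass : Tendsto (fun q => qMass (k + 1) q u) (𝓝[<] Q) (𝓝 (∫ x, |u x| ^ Q)) :=
    tendsto_qMass hn hu
  have hT : Tendsto (fun q => energy (k + 1) u u / qMass (k + 1) q u ^ (2 / q)) (𝓝[<] Q)
      (𝓝 (energy (k + 1) u u / (∫ x, |u x| ^ Q) ^ (2 / Q))) := by
    refine tendsto_const_nhds.div (hmass.rpow ?_ (Or.inl hint.ne')) (by positivity)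
    exact tendsto_const_nhds.div hq hQ
  have hε := (tendsto_relGap n (k + 1)).mono_left (nhdsWithin_le_nhds (s := Set.Iio Q))
  have hrhs := (((hT.sqrt.mul (tendsto_const_nhds.rpow (hq.inv₀ hQ) (Or.inl hvol.ne'))).add
    (hε.const_mul B).sqrt).pow 2).add (hε.const_mul C)
  have hlhs := ((((hε.const_mul A).const_sub 1).sub_const (gjmsConst n (k + 1) *
    (δ + K * (sphereVol n - totalIntegral (weight n * Φ))) / S)).const_mul
    (gjmsConst n (k + 1) * totalIntegral (weight n * Φ)))
  have h := le_of_tendsto_of_tendsto hlhs hrhs <| by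
    filter_upwards [Ioo_mem_nhdsLT hp', hmass.eventually_const_lt hint] with q hq hq_mass
    refine hle q δ K S _ (hp.trans hq.1) hq.2 hδ hK0 (hK q hq.1.le) hS
      (hSa q (hp.trans hq.1).le hq.2) ?_
    rw [le_div_iff₀ (by positivity)]
    exact subcritConst_mul_qMass_rpow_le hn (by linarith [hq.1]) hu
  rwa [mul_zero, sub_zero, mul_zero, mul_zero, Real.sqrt_zero, add_zero, add_zero, mul_pow,
    Real.sq_sqrt (by positivity), ← Real.rpow_mul_natCast hvol.le, Nat.cast_ofNat,
    inv_mul_eq_div] at h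

lemma gjmsConst_mul_sphereVol_le (hn : 2 * (k + 1) < n) {u : SmoothFn n} (hu : u ∈ testIdeal n)
    (hint : 0 < ∫ x, |u x| ^ critExp n (k + 1)) :
    gjmsConst n (k + 1) * sphereVol n ≤
      energy (k + 1) u u / (∫ x, |u x| ^ critExp n (k + 1)) ^ (2 / critExp n (k + 1)) *
        sphereVol n ^ (2 / critExp n (k + 1)) := by
  obtain ⟨S, hS, hSa⟩ := exists_pos_le_subcritConst hn
  obtain ⟨p, hp, hp'⟩ := exists_between (two_lt_critExp (Nat.succ_pos k) hn)
  obtain ⟨Φ, hΦ, htendsto⟩ := exists_isCutoff_tendsto (n := n) (by omega)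
  suffices ∀ δ, 0 < δ → gjmsConst n (k + 1) * sphereVol n * (1 - gjmsConst n (k + 1) * δ / S) ≤
      energy (k + 1) u u / (∫ x, |u x| ^ critExp n (k + 1)) ^ (2 / critExp n (k + 1)) *
        sphereVol n ^ (2 / critExp n (k + 1)) by
    simpa using le_of_forall_pos_le_of_continuous (by fun_prop) continuous_const this
  intro δ hδ
  obtain ⟨K, hK0, hK⟩ := exists_sq_le_mul_abs_rpow_add hδ hp
  have hlim := (htendsto.const_mul (gjmsConst n (k + 1))).mul ((((((htendsto.const_sub
    (sphereVol n)).const_mul K).const_add δ).const_mul (gjmsConst n (k + 1))).div_const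
    S).const_sub 1)
  rw [sub_self, mul_zero, add_zero] at hlim
  exact le_of_tendsto' hlim fun j =>
    (hΦ j).gjmsConst_mul_one_sub_le hn hu hint hS hSa hδ.le hK0 hp hp' hK

lemma sharp_sobolev_energy (hn : 2 * (k + 1) < n) {u : SmoothFn n} (hu : u ∈ testIdeal n) :
    gjmsConst n (k + 1) * sphereVol n ^ (1 - 2 / critExp n (k + 1)) *
      (∫ x, |u x| ^ critExp n (k + 1)) ^ (2 / critExp n (k + 1)) ≤ energy (k + 1) u u := by
  have hQ := critExp_pos hn
  have hvol := sphereVol_pos (n := n) (by omega)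
  have hint : 0 ≤ ∫ x, |u x| ^ critExp n (k + 1) := integral_nonneg fun x => by positivity
  rcases hint.eq_or_lt with hint | hint
  · rw [← hint, Real.zero_rpow (by positivity), mul_zero]
    exact energy_self_nonneg hn hu
  · rw [← le_div_iff₀ (by positivity), Real.rpow_sub hvol, Real.rpow_one, ← mul_div_assoc,
      div_le_iff₀ (by positivity)]
    exact gjmsConst_mul_sphereVol_le hn hu hint

lemma energy_self_eq_integral (k : ℕ) (u : SmoothFn n) :
    energy k u u = ∫ x, u x * ((-1) ^ k * lap^[k] u x) :=
  integral_congr_ae (Eventually.of_forall fun x => by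
    simp only [SmoothFn.mul_apply, neg_one_pow_mul_iterate_lap])

end SharpSobolev

/-- The sharp Sobolev inequality for `W^{k,2} ↪ L^{2n/(n-2k)}` on `ℝⁿ`:
`∫ u·(-Δ)ᵏu ≥ S_{n,k} (∫ |u|^{2n/(n-2k)})^{(n-2k)/n}`, with
`S_{n,k} = [∏_{ℓ=1}^k (n+2ℓ-2)(n-2ℓ)/4]·(2π^{(n+1)/2}/Γ((n+1)/2))^{2k/n}`. -/
theorem sharp_sobolev_higher_order
    (n k : ℕ) (hk : 1 ≤ k) (hn : 2 * k < n)
    (u : EuclideanSpace ℝ (Fin n) → ℝ)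
    (hu : ContDiff ℝ (⊤ : ℕ∞) u) (hc : HasCompactSupport u) :
    ∫ x, u x * ((-1 : ℝ) ^ k * lap^[k] u x)
      ≥ ((∏ ℓ ∈ Finset.Icc 1 k,
            (((n : ℝ) + 2 * ℓ - 2) * ((n : ℝ) - 2 * ℓ) / 4))
          * (2 * π ^ (((n : ℝ) + 1) / 2) / Real.Gamma (((n : ℝ) + 1) / 2))
              ^ ((2 * k : ℝ) / n))
        * (∫ x, |u x| ^ ((2 * n : ℝ) / ((n : ℝ) - 2 * k)))
            ^ (((n : ℝ) - 2 * k) / n) := by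
  obtain ⟨k, rfl⟩ := Nat.exists_eq_add_of_le' hk
  have hexp : 2 / SharpSobolev.critExp n (k + 1) = (n - 2 * (k + 1 : ℕ)) / n := by
    rw [SharpSobolev.critExp, div_div_eq_mul_div, mul_div_mul_left _ _ two_ne_zero]
  have hexp' : 1 - 2 / SharpSobolev.critExp n (k + 1) = 2 * (k + 1 : ℕ) / n := by
    have hn' : (n : ℝ) ≠ 0 := by
      rw [Nat.cast_ne_zero]
      omega
    rw [hexp]
    field_simp
    ring
  have h := SharpSobolev.sharp_sobolev_energy hn (u := ⟨u, hu⟩) hc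
  rwa [hexp', hexp, SharpSobolev.sphereVol_eq (by omega),
    SharpSobolev.energy_self_eq_integral] at h
end
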